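/- Let R1 be a reduced root system spanning V*. The set of generic linear residual points of R1 is finite, nonempty, and stable under the action of the Weyl group W0 by postcomposition. -/

import Mathlib

open Classical

noncomputable section

namespace GenRes

variable (V : Type*) [AddCommGroup V] [Module ℝ V]

/-- a reduced (crystallographic) root system in `V*` spanning `V*`:  a finite set of
nonzero linear functionals on `V`, spanning `V*`, closed under the reflections
associated to the coroots, integral, and reduced -/
structure RedRootSystem where
  roots : Finset (Module.Dual ℝ V)
  zero_not_mem : (0 : Module.Dual ℝ V) ∉ roots
  spanning : Submodule.span ℝ (roots : Set (Module.Dual ℝ V)) = ⊤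
  coroot : Module.Dual ℝ V → V
  coroot_two : ∀ α ∈ roots, α (coroot α) = 2
  reflect_mem : ∀ α ∈ roots, ∀ β ∈ roots, β - β (coroot α) • α ∈ roots
  integral : ∀ α ∈ roots, ∀ β ∈ roots, ∃ z : ℤ, β (coroot α) = (z : ℝ)
  reduced : ∀ α ∈ roots, ∀ c : ℝ, c • α ∈ roots → c = 1 ∨ c = -1

variable {V} (rs : RedRootSystem V)

/-- a parameter function `k : R1 → ℝ` is `W0`-invariant iff it is invariant under all
the reflections `β ↦ β − β(α∨)α` -/
def Invariant (k : rs.roots → ℝ) : Prop :=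
  ∀ α β : rs.roots,
    k ⟨(β : Module.Dual ℝ V) - (β : Module.Dual ℝ V) (rs.coroot α) • (α : Module.Dual ℝ V),
        rs.reflect_mem α α.2 β β.2⟩ = k β

/-- the space `K` of `W0`-invariant parameter functions `R1 → ℝ`, as a submodule of the
space of all functions `R1 → ℝ` -/
def ParamSub : Submodule ℝ (rs.roots → ℝ) where
  carrier := {k | Invariant rs k}
  add_mem' := by
    intro a b ha hb α β
    simp only [Pi.add_apply, ha α β, hb α β]
  zero_mem' := by intro α β; rfl
  smul_mem' := by
    intro c a ha α β
    simp only [Pi.smul_apply, ha α β]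

/-- `ξ ∈ V` is a linear `(R1,k)`-residual point:
`#{α ∈ R1 : α(ξ) = k(α)} = #{α ∈ R1 : α(ξ) = 0} + dim V` -/
def IsLinResidual (k : rs.roots → ℝ) (ξ : V) : Prop :=
  {α : rs.roots | (α : Module.Dual ℝ V) ξ = k α}.ncard =
    {α : rs.roots | (α : Module.Dual ℝ V) ξ = 0}.ncard + Module.finrank ℝ V

/-- a linear map `ξ : K → V` is a generic linear residual point of `R1` if `ξ(k)` is a
linear `(R1,k)`-residual point for all `k` in a dense open subset of `K` -/
def IsGeneric (ξ : (ParamSub rs) →ₗ[ℝ] V) : Prop :=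
  ∃ U : Set (ParamSub rs), IsOpen U ∧ Dense U ∧
    ∀ k ∈ U, IsLinResidual rs (k : rs.roots → ℝ) (ξ k)

/-- the reflection of `V` associated to the root `α`:  `v ↦ v − α(v)·α∨` -/
def reflV (α : Module.Dual ℝ V) : V →ₗ[ℝ] V :=
  LinearMap.id - α.smulRight (rs.coroot α)

/-- the element of the Weyl group `W0` given by a word in the reflections -/
def weylOf (L : List (Module.Dual ℝ V)) : V →ₗ[ℝ] V :=
  (L.map (fun α => reflV rs α)).prod

/-!
For a generic parameter function `κ` and any functional `l`, the number of roots `α` with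
`l α = κ α` exceeds the number with `l α = 0` by at most the rank. This is proved one irreducible
component at a time. If `κ` is constant, the difference compares the eigenspaces for `1` and `0` of
`ad x`, for `x` in a Cartan subalgebra of the Lie algebra of Geck's construction; a generic element
`e` of the `1`-eigenspace satisfies `[e, g₀] = g₁`. If there are two root lengths with squared ratio
`2`, the short roots fall into signed orthogonal frames `±fᵢ`, whose differences are long roots, and
the bound comes from the total variation of the number of frame vectors of value `c` along the
chains `c ∈ ±a + ℤ b`, where `a` and `b` are the two parameters; in type `F₄` this is combined with
the same estimate for the dual system. Type `G₂` is counted directly.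

Applied to the parabolic subsystem spanned by the roots with `α(ξ(k)) = k(α)` for all `k`, the bound
shows that these roots span `V*`. They therefore determine `ξ`, which leaves finitely many
possibilities. Solving `α(ξ(k)) = k(α)` for the simple roots gives a generic residual point.
-/

section Commutator

variable {R : Type*} [Ring R] {a b : R}

lemma exists_pow_mul_add_eq {c : R} (hc : Commute a c) (n : ℕ) :
    ∃ r, (b * a + c) ^ n = r * a + c ^ n := by
  induction n with
  | zero => exact ⟨0, by simp⟩
  | succ n ih =>
    obtain ⟨r, hr⟩ := ih
    refine ⟨b * a * r + c * r + b * c ^ n, ?_⟩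
    rw [pow_succ', hr, pow_succ']
    have := (hc.pow_right n).eq
    linear_combination (norm := noncomm_ring) b * this

lemma isNilpotent_mul_of_commute_commutator (ha : IsNilpotent a)
    (hac : Commute a (a * b - b * a)) (hc : IsNilpotent (a * b - b * a)) :
    IsNilpotent (a * b) := by
  obtain ⟨n, hn⟩ := ha
  obtain ⟨N, hN⟩ := hc
  set c := a * b - b * a with hcdef
  have hconj (m : ℕ) : SemiconjBy (a ^ m) (a * b) (b * a + (m + 1 : ℕ) * c) := by
    induction m with
    | zero => simp [SemiconjBy, hcdef]
    | succ m ih =>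
      have hstep : SemiconjBy a (b * a + (m + 1 : ℕ) * c) (b * a + (m + 1 + 1 : ℕ) * c) := by
        have hcomm := hac.eq
        have hcast := (Nat.cast_commute (m + 1) a).eq
        simp only [SemiconjBy]
        push_cast at hcast ⊢
        linear_combination (norm := (simp only [hcdef]; noncomm_ring))
          ((m : R) + 1) * hcomm - hcast * c
      rw [pow_succ']
      exact hstep.mul_left ih
  have hstep (m : ℕ) : ∃ r, a ^ m * (a * b) ^ N = r * a ^ (m + 1) := by
    obtain ⟨r, hr⟩ := exists_pow_mul_add_eq (b := b)
      ((Nat.cast_commute (m + 1) a).symm.mul_right hac) N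
    refine ⟨r, ?_⟩
    rw [((hconj m).pow_right N).eq, hr, (Nat.cast_commute _ c).mul_pow, hN, mul_zero, add_zero,
      mul_assoc, ← pow_succ']
  have hpow (m : ℕ) : ∃ r, (a * b) ^ (N * m) = r * a ^ m := by
    induction m with
    | zero => exact ⟨1, by simp⟩
    | succ m ih =>
      obtain ⟨r, hr⟩ := ih
      obtain ⟨r', hr'⟩ := hstep m
      exact ⟨r * r', by rw [Nat.mul_succ, pow_add, hr, mul_assoc, hr', mul_assoc]⟩
  obtain ⟨r, hr⟩ := hpow n
  exact ⟨N * n, by rw [hr, hn, mul_zero]⟩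

end Commutator

section LinearAlgebra

open Module LieAlgebra

variable {K M : Type*} [Field K] [AddCommGroup M] [Module K M]

lemma exists_forall_finrank_range_le [FiniteDimensional K M] {Z ι : Type*} [AddCommGroup Z]
    [Module K Z] (T : ι → Z →ₗ[K] M) {s : Set ι} (hs : s.Nonempty) :
    ∃ i ∈ s, ∀ j ∈ s, finrank K (T j).range ≤ finrank K (T i).range := by
  have hbdd : BddAbove ((fun i => finrank K (T i).range) '' s) :=
    ⟨finrank K M, by rintro _ ⟨i, _, rfl⟩; exact Submodule.finrank_le _⟩
  obtain ⟨i, hi, hsup⟩ := Nat.sSup_mem (hs.image _) hbdd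
  exact ⟨i, hi, fun j hj => (le_csSup hbdd ⟨j, hj, rfl⟩).trans hsup.ge⟩

variable [CharZero K]

section

attribute [local instance] LieRing.ofAssociativeRing

lemma ad_pow_apply_pow {R : Type*} [Ring R] [Algebra K R] {a b : R} (hac : ⁅a, ⁅a, b⁆⁆ = 0)
    (n : ℕ) : (ad K R a ^ n) (b ^ n) = (n.factorial : K) • ⁅a, b⁆ ^ n := by
  have had (x y : R) : ad K R a (x * y) = ⁅a, x⁆ * y + x * ad K R a y := by
    simp only [ad_apply, Ring.lie_def]; noncomm_ring
  have hleibniz (m : ℕ) (x : R) : (ad K R a ^ (m + 1)) (b * x) =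
      b * (ad K R a ^ (m + 1)) x + (m + 1 : K) • (⁅a, b⁆ * (ad K R a ^ m) x) := by
    induction m with
    | zero => simp [had, add_comm]
    | succ m ih =>
      rw [pow_succ', Module.End.mul_apply, ih, map_add, map_smul, had, had, hac,
        ← Module.End.mul_apply, ← Module.End.mul_apply, ← pow_succ', ← pow_succ', zero_mul,
        zero_add]
      push_cast
      module
  suffices (ad K R a ^ n) (b ^ n) = (n.factorial : K) • ⁅a, b⁆ ^ n ∧
      (ad K R a ^ (n + 1)) (b ^ n) = 0 from this.1
  induction n with
  | zero => simp [Ring.lie_def]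
  | succ n ih =>
    constructor
    · rw [pow_succ' b, hleibniz, ih.1, ih.2, Nat.factorial_succ, pow_succ' ⁅a, b⁆, mul_smul_comm,
        mul_zero, zero_add, smul_smul]
      push_cast
      rfl
    · rw [pow_succ' b, hleibniz, ih.2, pow_succ', Module.End.mul_apply, ih.2]
      simp

lemma isNilpotent_lie_of_isNilpotent {R : Type*} [Ring R] [Algebra K R] {a b : R}
    (ha : IsNilpotent a) (hac : ⁅a, ⁅a, b⁆⁆ = 0) : IsNilpotent ⁅a, b⁆ := by
  obtain ⟨n, hn⟩ := ad_nilpotent_of_nilpotent (R := K) ha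
  have h := ad_pow_apply_pow (K := K) hac n
  rw [hn, LinearMap.zero_apply, eq_comm, smul_eq_zero] at h
  exact ⟨n, h.resolve_left (by exact_mod_cast n.factorial_ne_zero)⟩

end

lemma trace_mul_eq_zero_of_isNilpotent [FiniteDimensional K M] {a b : End K M}
    (ha : IsNilpotent a) (hac : ⁅a, ⁅a, b⁆⁆ = 0) : LinearMap.trace K M (a * b) = 0 := by
  have hc : IsNilpotent ⁅a, b⁆ := isNilpotent_lie_of_isNilpotent (K := K) ha hac
  rw [Ring.lie_def, Ring.lie_def, sub_eq_zero] at hac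
  exact (LinearMap.isNilpotent_trace_of_isNilpotent
    (isNilpotent_mul_of_commute_commutator ha hac hc)).eq_zero

section RaisingOperator

variable {E F Y : End K M}

lemma pow_succ_mul_raising (hEF : ⁅E, F⁆ = Y) (hYE : ⁅Y, E⁆ = E) (j : ℕ) :
    E ^ (j + 1) * F = F * E ^ (j + 1) + (j + 1 : K) • (Y * E ^ j)
      - ((j : K) * (j + 1) / 2) • E ^ j := by
  have hEF' : E * F = F * E + Y := by rw [← hEF, Ring.lie_def]; abel
  have hEY : E * Y = Y * E - E := by nth_rw 3 [← hYE]; rw [Ring.lie_def]; abel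
  have hpowY (k : ℕ) : E ^ k * Y = Y * E ^ k - (k : K) • E ^ k := by
    induction k with
    | zero => simp
    | succ k ih =>
      rw [pow_succ', mul_assoc, ih, mul_sub, ← mul_assoc, hEY, sub_mul, mul_assoc, mul_smul_comm,
        ← pow_succ']
      push_cast
      module
  induction j with
  | zero => simp [hEF']
  | succ j ih =>
    rw [pow_succ E (j + 1), mul_assoc, hEF', mul_add, ← mul_assoc, ih, hpowY]
    simp only [sub_mul, add_mul, smul_mul_assoc, mul_assoc, ← pow_succ]
    push_cast
    module

-- `f` would be a highest weight vector of negative weight, so it lies in every `range (E ^ j)`.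
lemma eq_zero_of_raising (hEF : ⁅E, F⁆ = Y) (hYE : ⁅Y, E⁆ = E) (hE : IsNilpotent E) {f : M}
    (hf : E f = 0) (hY : Y f = -f) : f = 0 := by
  have hrange (j : ℕ) : ∃ w, (E ^ j) w = f := by
    induction j with
    | zero => exact ⟨f, by simp⟩
    | succ j ih =>
      obtain ⟨w, hw⟩ := ih
      have hEw : (E ^ (j + 1)) w = 0 := by rw [pow_succ', End.mul_apply, hw, hf]
      have hFw := LinearMap.congr_fun (pow_succ_mul_raising hEF hYE j) w
      simp only [End.mul_apply, LinearMap.add_apply, LinearMap.sub_apply,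
        LinearMap.smul_apply, hEw, map_zero, hw, hY, zero_add] at hFw
      have hc : (-(j + 1 : K) - (j : K) * (j + 1) / 2) ≠ 0 := by
        have hc' : (-(j + 1 : K) - (j : K) * (j + 1) / 2) = -(((j + 1) * (j + 2) : ℕ) : K) / 2 := by
          push_cast; ring
        rw [hc']
        exact div_ne_zero (neg_ne_zero.2 (Nat.cast_ne_zero.2 (by positivity))) two_ne_zero
      refine ⟨(-(j + 1 : K) - (j : K) * (j + 1) / 2)⁻¹ • F w, ?_⟩
      rw [map_smul, hFw, inv_smul_eq_iff₀ hc]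
      module
  obtain ⟨n, hn⟩ := hE
  obtain ⟨w, hw⟩ := hrange n
  rw [← hw, hn, LinearMap.zero_apply]

end RaisingOperator

section Perturbation

lemma exists_linearIndependent_add_smul {ι : Type*} [Finite ι] {v : ι → M}
    (hv : LinearIndependent K v) (w : ι → M) :
    ∃ t : K, t ≠ 0 ∧ LinearIndependent K (fun i => v i + t • w i) := by
  have := Fintype.ofFinite ι
  obtain ⟨g, hg⟩ := (Fintype.linearCombination K v).exists_leftInverse_of_injective
    (LinearMap.ker_eq_bot.2 (linearIndependent_iff_injective_fintypeLinearCombination.1 hv))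
  set T : End K (ι → K) := g ∘ₗ Fintype.linearCombination K w
  have hfin : {μ : K | T.HasEigenvalue μ}.Finite := End.finite_hasEigenvalue _
  obtain ⟨t, ht⟩ :=
    ((Set.finite_singleton (0 : K)).union (hfin.image fun μ => -μ⁻¹)).exists_notMem
  obtain ⟨ht0, hteig⟩ := not_or.1 ht
  have ht0 : t ≠ 0 := ht0
  refine ⟨t, ht0, Fintype.linearIndependent_iff.2 fun c hc => ?_⟩
  have hsum : Fintype.linearCombination K v c + t • Fintype.linearCombination K w c = 0 := by
    simpa [Fintype.linearCombination_apply, Finset.smul_sum, ← Finset.sum_add_distrib,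
      smul_comm t] using hc
  have hTc : c + t • T c = 0 := by
    have := congrArg g hsum
    rwa [map_add, map_smul, map_zero, ← LinearMap.comp_apply g, hg, LinearMap.id_apply] at this
  by_contra! hne
  have hc0 : c ≠ 0 := by
    rintro rfl
    simp at hne
  refine hteig ⟨-t⁻¹, End.hasEigenvalue_of_hasEigenvector (x := c) ⟨?_, hc0⟩, by simp⟩
  rw [End.mem_eigenspace_iff, neg_smul, eq_neg_iff_add_eq_zero]
  have := congrArg (t⁻¹ • ·) hTc
  simp only [smul_add, smul_smul, inv_mul_cancel₀ ht0, one_smul, smul_zero] at this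
  rw [add_comm, this]

lemma apply_mem_range_of_finrank_range_le [FiniteDimensional K M] {Z : Type*} [AddCommGroup Z]
    [Module K Z] {S T : Z →ₗ[K] M} (hmax : ∀ t : K, finrank K (T + t • S).range ≤ finrank K T.range)
    {z : Z} (hz : T z = 0) : S z ∈ T.range := by
  by_contra hSz
  obtain ⟨w, hw⟩ : ∃ w : Fin (finrank K T.range) → Z, LinearIndependent K (fun i => T (w i)) := by
    choose w hw using fun i => (finBasis K T.range i).2
    refine ⟨w, ?_⟩
    simp only [hw]
    exact (finBasis K T.range).linearIndependent.map' T.range.subtype (Submodule.ker_subtype _)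
  let v : Option (Fin (finrank K T.range)) → M := fun o => o.elim (S z) fun i => T (w i)
  let u : Option (Fin (finrank K T.range)) → M := fun o => o.elim 0 fun i => S (w i)
  have hv : LinearIndependent K v := by
    refine linearIndependent_option.2 ⟨hw, fun h => hSz (Submodule.span_le.2 ?_ h)⟩
    rintro _ ⟨i, rfl⟩
    exact ⟨w i, rfl⟩
  obtain ⟨t, ht, hli⟩ := exists_linearIndependent_add_smul hv u
  have hmem (o) : v o + t • u o ∈ (T + t • S).range := by
    obtain _ | i := o
    · exact ⟨t⁻¹ • z, by simp [u, v, hz, smul_smul, ht]⟩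
    · exact ⟨w i, by simp [u, v]⟩
  have hspan : Submodule.span K (Set.range fun o => v o + t • u o) ≤ (T + t • S).range := by
    rw [Submodule.span_le]
    rintro _ ⟨o, rfl⟩
    exact hmem o
  have hcard := (finrank_span_eq_card hli).ge.trans (Submodule.finrank_mono hspan)
  simp only [Fintype.card_option, Fintype.card_fin] at hcard
  have := hmax t
  omega

end Perturbation

end LinearAlgebra

section AdGrading

open Module LieAlgebra

attribute [local instance] LieRing.ofAssociativeRing

variable {K L : Type*} [Field K] [LieRing L] [LieAlgebra K L] {x : L}

lemma mem_eigenspace_ad {c : K} {u : L} : u ∈ (ad K L x).eigenspace c ↔ ⁅x, u⁆ = c • u := by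
  simp

lemma lie_mem_eigenspace_ad {c d : K} {u v : L} (hu : u ∈ (ad K L x).eigenspace c)
    (hv : v ∈ (ad K L x).eigenspace d) : ⁅u, v⁆ ∈ (ad K L x).eigenspace (c + d) := by
  rw [mem_eigenspace_ad] at *
  rw [leibniz_lie, hu, hv, smul_lie, lie_smul, add_smul]

lemma killingForm_eq_zero_of_add_ne_zero {c d : K} (hcd : c + d ≠ 0) {u v : L}
    (hu : u ∈ (ad K L x).eigenspace c) (hv : v ∈ (ad K L x).eigenspace d) :
    killingForm K L u v = 0 := by
  have h := LieModule.traceForm_apply_lie_apply' K L L x u v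
  rw [mem_eigenspace_ad.1 hu, mem_eigenspace_ad.1 hv] at h
  simp only [map_smul, LinearMap.smul_apply, smul_eq_mul] at h
  refine (mul_eq_zero.1 (?_ : (c + d) * _ = 0)).resolve_left hcd
  linear_combination h

lemma exists_mem_eigenspace_killingForm_eq (hx : ⨆ c, (ad K L x).eigenspace c = ⊤) (c : K) (u : L) :
    ∃ f ∈ (ad K L x).eigenspace c, ∀ w ∈ (ad K L x).eigenspace (-c),
      killingForm K L u w = killingForm K L f w := by
  induction (hx ▸ Submodule.mem_top : u ∈ ⨆ c, (ad K L x).eigenspace c)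
    using Submodule.iSup_induction' with
  | mem d u hu =>
    by_cases hd : d = c
    · exact ⟨u, hd ▸ hu, fun _ _ => rfl⟩
    · refine ⟨0, zero_mem _, fun w hw => ?_⟩
      rw [killingForm_eq_zero_of_add_ne_zero (by rwa [← sub_eq_add_neg, sub_ne_zero]) hu hw,
        map_zero, LinearMap.zero_apply]
  | zero => exact ⟨0, zero_mem _, fun _ _ => rfl⟩
  | add u v _ _ hu hv =>
    obtain ⟨f, hf, hfw⟩ := hu
    obtain ⟨f', hf', hfw'⟩ := hv
    exact ⟨f + f', add_mem hf hf', fun w hw => by simp [hfw w hw, hfw' w hw]⟩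

lemma eq_zero_of_forall_mem_eigenspace_killingForm [IsKilling K L]
    (hx : ⨆ c, (ad K L x).eigenspace c = ⊤) {c : K} {u : L}
    (hu : u ∈ (ad K L x).eigenspace c)
    (h : ∀ w ∈ (ad K L x).eigenspace (-c), killingForm K L u w = 0) : u = 0 := by
  refine (IsKilling.killingForm_nondegenerate K L).1 u fun w => ?_
  obtain ⟨f, hf, hfw⟩ := exists_mem_eigenspace_killingForm_eq hx (-c) w
  rw [LieModule.traceForm_comm, hfw u (by rwa [neg_neg]), LieModule.traceForm_comm, h f hf]

variable [FiniteDimensional K L]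

lemma isNilpotent_ad_of_mem_eigenspace [CharZero K] (hx : ⨆ c, (ad K L x).eigenspace c = ⊤) {d : K}
    (hd : d ≠ 0) {e : L} (he : e ∈ (ad K L x).eigenspace d) : IsNilpotent (ad K L e) := by
  have hmem {c : K} {u : L} (hu : u ∈ (ad K L x).eigenspace c) (n : ℕ) :
      (ad K L e ^ n) u ∈ (ad K L x).eigenspace (c + n * d) := by
    induction n with
    | zero => simpa using hu
    | succ n ih =>
      rw [pow_succ', End.mul_apply, ad_apply]
      convert lie_mem_eigenspace_ad he ih using 2
      push_cast
      ring
  refine End.isNilpotent_iff_of_finite.2 fun u => ?_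
  induction (hx ▸ Submodule.mem_top : u ∈ ⨆ c, (ad K L x).eigenspace c)
    using Submodule.iSup_induction' with
  | mem c u hu =>
    by_contra! hne
    have hinj : Function.Injective fun n : ℕ => c + n * d := fun m n hmn => by simpa [hd] using hmn
    refine Set.infinite_range_of_injective hinj
      ((End.finite_hasEigenvalue (ad K L x)).subset ?_)
    rintro _ ⟨n, rfl⟩
    exact End.hasEigenvalue_of_hasEigenvector ⟨hmem hu n, hne n⟩
  | zero => exact ⟨0, by simp⟩
  | add u v _ _ hu hv =>
    obtain ⟨m, hm⟩ := hu
    obtain ⟨n, hn⟩ := hv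
    refine ⟨m + n, ?_⟩
    rw [map_add, add_comm m n, pow_add, End.mul_apply, hm, ← pow_add, add_comm n m, pow_add,
      End.mul_apply, hn, map_zero, map_zero, add_zero]

variable (K x) in
lemma exists_forall_lie_mem_map_ad [CharZero K] :
    ∃ e ∈ (ad K L x).eigenspace 1, ∀ z ∈ (ad K L x).eigenspace 0, ⁅e, z⁆ = 0 →
      ∀ u ∈ (ad K L x).eigenspace 1, ⁅u, z⁆ ∈ ((ad K L x).eigenspace 0).map (ad K L e) := by
  let T (e : L) : (ad K L x).eigenspace 0 →ₗ[K] L := (ad K L e).domRestrict _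
  obtain ⟨e, he, hmax⟩ := exists_forall_finrank_range_le T ⟨0, ((ad K L x).eigenspace 1).zero_mem⟩
  refine ⟨e, he, fun z hz hez u hu => ?_⟩
  have hT (t : K) : T e + t • T u = T (e + t • u) := by ext; simp [T]
  obtain ⟨w, hw⟩ := apply_mem_range_of_finrank_range_le (S := T u) (z := ⟨z, hz⟩)
    (fun t => hT t ▸ hmax _ (add_mem he (Submodule.smul_mem _ t hu))) hez
  exact ⟨w, w.2, hw⟩

variable [IsKilling K L]

lemma exists_mem_eigenspace_killingForm_ne_zero (hx : ⨆ c, (ad K L x).eigenspace c = ⊤) {c : K}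
    {W : Submodule K L} (hW : W ≤ (ad K L x).eigenspace (-c)) {e : L}
    (he : e ∈ (ad K L x).eigenspace (-c)) (heW : e ∉ W) :
    ∃ u ∈ (ad K L x).eigenspace c, (∀ w ∈ W, killingForm K L u w = 0) ∧
      killingForm K L u e ≠ 0 := by
  obtain ⟨ψ, hψe, hψW⟩ := Submodule.exists_le_ker_of_notMem heW
  obtain ⟨f, rfl⟩ :=
    ((killingForm K L).toDual (IsKilling.killingForm_nondegenerate K L)).surjective ψ
  obtain ⟨u, hu, huw⟩ := exists_mem_eigenspace_killingForm_eq hx c f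
  refine ⟨u, hu, fun w hw => ?_, ?_⟩
  · rw [← huw w (hW hw)]
    exact hψW hw
  · rw [← huw e he]
    exact hψe

variable [CharZero K]

lemma exists_lie_lie_eq_neg (hx : ⨆ c, (ad K L x).eigenspace c = ⊤) {e : L}
    (he : e ∈ (ad K L x).eigenspace 1) :
    ∃ v ∈ (ad K L x).eigenspace (-1), ⁅e, ⁅e, v⁆⁆ = -e := by
  have hlie {v : L} (hv : v ∈ (ad K L x).eigenspace (-1)) :
      ⁅e, ⁅e, v⁆⁆ ∈ (ad K L x).eigenspace 1 := by
    simpa using lie_mem_eigenspace_ad he (lie_mem_eigenspace_ad he hv)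
  by_contra! hne
  set W := ((ad K L x).eigenspace (-1)).map (ad K L e * ad K L e)
  have heW : e ∉ W := by
    rintro ⟨u, hu, hue⟩
    rw [End.mul_apply, ad_apply, ad_apply] at hue
    exact hne (-u) (neg_mem hu) (by rw [lie_neg, lie_neg, hue])
  have hW : W ≤ (ad K L x).eigenspace (-(-1)) := by
    rw [neg_neg]
    rintro _ ⟨u, hu, rfl⟩
    exact hlie hu
  obtain ⟨u, hu, huW, hue⟩ :=
    exists_mem_eigenspace_killingForm_ne_zero hx hW (by rwa [neg_neg]) heW
  have heeu : ⁅e, ⁅e, u⁆⁆ = 0 :=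
    eq_zero_of_forall_mem_eigenspace_killingForm hx (hlie hu) fun w hw => by
      have := huW _ ⟨w, hw, rfl⟩
      rw [End.mul_apply, ad_apply, ad_apply] at this
      rw [LieModule.traceForm_apply_lie_apply', LieModule.traceForm_apply_lie_apply', this]
      simp
  refine hue ?_
  rw [LieModule.traceForm_comm]
  refine trace_mul_eq_zero_of_isNilpotent (a := ad K L e) (b := ad K L u)
    (isNilpotent_ad_of_mem_eigenspace hx one_ne_zero he) ?_
  rw [← LieHom.map_lie, ← LieHom.map_lie, heeu, map_zero]

lemma finrank_eigenspace_ad_one_le (hx : ⨆ c, (ad K L x).eigenspace c = ⊤) :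
    finrank K ((ad K L x).eigenspace 1) ≤ finrank K ((ad K L x).eigenspace 0) := by
  obtain ⟨e, he, hgeneric⟩ := exists_forall_lie_mem_map_ad K x
  set W := ((ad K L x).eigenspace 0).map (ad K L e)
  have hW1 : W ≤ (ad K L x).eigenspace 1 := by
    rintro _ ⟨z, hz, rfl⟩
    simpa using lie_mem_eigenspace_ad he hz
  suffices hge : (ad K L x).eigenspace 1 ≤ W from
    (Submodule.finrank_mono hge).trans (Submodule.finrank_map_le _ _)
  by_contra hnot
  obtain ⟨w, hw, hwW⟩ := SetLike.not_le_iff_exists.1 hnot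
  obtain ⟨f, hf, hfW, hfw⟩ := exists_mem_eigenspace_killingForm_ne_zero (c := -1) hx
    (by rwa [neg_neg]) (by rwa [neg_neg]) hwW
  obtain ⟨v, hv, hev⟩ := exists_lie_lie_eq_neg hx he
  have hye : ⁅⁅e, v⁆, e⁆ = e := by rw [← lie_skew, hev, neg_neg]
  have hef : ⁅e, f⁆ = 0 :=
    eq_zero_of_forall_mem_eigenspace_killingForm hx (lie_mem_eigenspace_ad he hf) fun z hz => by
      rw [add_neg_cancel, neg_zero] at hz
      rw [LieModule.traceForm_apply_lie_apply', neg_eq_zero]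
      exact hfW _ ⟨z, hz, rfl⟩
  have hz : x - ⁅e, v⁆ ∈ (ad K L x).eigenspace 0 :=
    sub_mem (mem_eigenspace_ad.2 (by simp)) (by simpa using lie_mem_eigenspace_ad he hv)
  have hez : ⁅e, x - ⁅e, v⁆⁆ = 0 := by
    rw [← lie_skew, sub_lie, mem_eigenspace_ad.1 he, hye, one_smul, sub_self, neg_zero]
  have hzf : ⁅x - ⁅e, v⁆, f⁆ = 0 :=
    eq_zero_of_forall_mem_eigenspace_killingForm (c := -1) hx
      (by simpa using lie_mem_eigenspace_ad hz hf) fun u hu => by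
      rw [neg_neg] at hu
      rw [LieModule.traceForm_apply_lie_apply', ← lie_skew, map_neg, neg_neg]
      exact hfW _ (hgeneric _ hz hez u hu)
  have hyf : ⁅⁅e, v⁆, f⁆ = -f := by
    rw [sub_lie, mem_eigenspace_ad.1 hf, sub_eq_zero] at hzf
    rw [← hzf, neg_one_smul]
  have hf0 : f = 0 := eq_zero_of_raising (LieHom.map_lie _ e v).symm
    (by rw [← LieHom.map_lie, hye]) (isNilpotent_ad_of_mem_eigenspace hx one_ne_zero he) hef hyf
  exact hfw (by rw [hf0, map_zero, LinearMap.zero_apply])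

end AdGrading

section CartanSubalgebra

open Module LieAlgebra LieModule LieAlgebra.IsKilling

variable {K L : Type*} [Field K] [LieRing L] [LieAlgebra K L] [FiniteDimensional K L]
  {H : LieSubalgebra K L} [LieRing.IsNilpotent H]

lemma iSup_rootSpace_toSubmodule [IsTriangularizable K H L] :
    ⨆ χ : Weight K H L, (rootSpace H χ).toSubmodule = ⊤ := by
  have h := congrArg LieSubmodule.toSubmodule (iSup_genWeightSpace_eq_top' K H L)
  rwa [LieSubmodule.iSup_toSubmodule, LieSubmodule.top_toSubmodule] at h

variable [CharZero K] [IsKilling K L] [H.IsCartanSubalgebra] [IsTriangularizable K H L]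

lemma rootSpace_le_eigenspace_ad (χ : H → K) (x : H) :
    (rootSpace H χ).toSubmodule ≤ (ad K L (x : L)).eigenspace (χ x) := fun _ hu =>
  mem_eigenspace_ad.2 (lie_eq_smul_of_mem_rootSpace hu x)

lemma iSup_eigenspace_ad_eq_top (x : H) : ⨆ c, (ad K L (x : L)).eigenspace c = ⊤ :=
  eq_top_iff.2 <| iSup_rootSpace_toSubmodule.ge.trans <|
    iSup_le fun χ => (rootSpace_le_eigenspace_ad χ x).trans (le_iSup _ _)

lemma ncard_root_apply_eq_le_finrank (x : H) (c : K) :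
    {α : H.root | (α : Weight K H L) x = c}.ncard ≤
      finrank K ((ad K L (x : L)).eigenspace c) := by
  choose e he he0 using fun α : H.root => (α : Weight K H L).exists_ne_zero
  have hli : LinearIndependent K e := by
    have h := LieSubmodule.iSupIndep_toSubmodule.2 (iSupIndep_genWeightSpace' K H L)
    exact (h.comp (f := fun α : H.root => (α : Weight K H L))
      Subtype.val_injective).linearIndependent _ he he0
  have hspan :
      Submodule.span K (Set.range fun α : {α : H.root // (α : Weight K H L) x = c} => e α) ≤
        (ad K L (x : L)).eigenspace c := by
    rw [Submodule.span_le]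
    rintro _ ⟨⟨α, rfl⟩, rfl⟩
    exact rootSpace_le_eigenspace_ad _ x (he α)
  have hcard := finrank_span_eq_card (hli.comp _ (Subtype.val_injective (p := fun α : H.root =>
    (α : Weight K H L) x = c)))
  rw [Set.ncard_eq_toFinset_card', Set.toFinset_card]
  exact hcard.ge.trans (Submodule.finrank_mono hspan)

lemma exists_rootSpace_le_span_singleton (α : H.root) :
    ∃ e : L, (rootSpace H (α : Weight K H L)).toSubmodule ≤ Submodule.span K {e} := by
  obtain ⟨⟨e, he⟩, -, hspan⟩ := finrank_eq_one_iff'.1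
    (finrank_rootSpace_eq_one (α : Weight K H L) (LieSubalgebra.isNonZero_coe_root α))
  refine ⟨e, fun u hu => ?_⟩
  obtain ⟨c, hc⟩ := hspan ⟨u, hu⟩
  exact Submodule.mem_span_singleton.2 ⟨c, congrArg Subtype.val hc⟩

lemma eigenspace_ad_zero_eq_iSup (x : H) : (ad K L (x : L)).eigenspace 0 =
    ⨆ χ : {χ : Weight K H L // χ x = 0}, (rootSpace H χ.1).toSubmodule := by
  set A := ⨆ χ : {χ : Weight K H L // χ x = 0}, (rootSpace H χ.1).toSubmodule
  set G := ⨆ c, ⨆ _ : c ≠ 0, (ad K L (x : L)).eigenspace c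
  have hA : A ≤ (ad K L (x : L)).eigenspace 0 :=
    iSup_le fun χ => (rootSpace_le_eigenspace_ad _ x).trans_eq (by rw [χ.2])
  have htop : A ⊔ G = ⊤ := by
    refine eq_top_iff.2 ((iSup_rootSpace_toSubmodule (H := H)).ge.trans (iSup_le fun χ => ?_))
    by_cases hχ : χ x = 0
    · exact le_sup_of_le_left (le_iSup_of_le ⟨χ, hχ⟩ le_rfl)
    · exact le_sup_of_le_right ((rootSpace_le_eigenspace_ad χ x).trans (le_iSup₂_of_le _ hχ le_rfl))
  have hdisj : Disjoint ((ad K L (x : L)).eigenspace 0) G := End.eigenspaces_iSupIndep _ 0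
  exact (eq_of_le_of_inf_le_of_le_sup hA (hdisj.eq_bot.le.trans bot_le) (htop ▸ le_top)).symm

lemma finrank_eigenspace_ad_zero_le (x : H) : finrank K ((ad K L (x : L)).eigenspace 0) ≤
    {α : H.root | (α : Weight K H L) x = 0}.ncard + finrank K H := by
  choose e he using exists_rootSpace_le_span_singleton (K := K) (H := H)
  set S := {α : H.root | (α : Weight K H L) x = 0}
  have hle : (ad K L (x : L)).eigenspace 0 ≤ Submodule.span K (e '' S) ⊔ H.toSubmodule := by
    rw [eigenspace_ad_zero_eq_iSup]
    refine iSup_le fun ⟨χ, hχ⟩ => ?_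
    by_cases hzero : χ.IsZero
    · refine le_sup_of_le_right ?_
      rw [show (χ : H → K) = 0 from hzero, rootSpace_zero_eq]
      rfl
    · have hmem : χ ∈ H.root := by simpa [LieSubalgebra.root] using hzero
      exact le_sup_of_le_left ((he ⟨χ, hmem⟩).trans (Submodule.span_mono
        (Set.singleton_subset_iff.2 ⟨⟨χ, hmem⟩, hχ, rfl⟩)))
  have hspan : finrank K (Submodule.span K (e '' S)) ≤ S.ncard := by
    have := finrank_span_finset_le_card (R := K) (S.toFinset.image e)
    rw [Finset.coe_image, Set.coe_toFinset] at this
    exact (this.trans Finset.card_image_le).trans_eq (Set.ncard_eq_toFinset_card' S).symm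
  calc _ ≤ _ := Submodule.finrank_mono hle
    _ ≤ _ := Submodule.finrank_add_le_finrank_add_finrank _ _
    _ ≤ _ := Nat.add_le_add_right hspan _

lemma ncard_root_apply_eq_one_le (x : H) : {α : H.root | (α : Weight K H L) x = 1}.ncard ≤
    {α : H.root | (α : Weight K H L) x = 0}.ncard + finrank K H :=
  (ncard_root_apply_eq_le_finrank x 1).trans <|
    (finrank_eigenspace_ad_one_le (iSup_eigenspace_ad_eq_top x)).trans
      (finrank_eigenspace_ad_zero_le x)

end CartanSubalgebra

section RootPairing

open Module

variable {ι K M N : Type*} [Field K] [AddCommGroup M] [Module K M] [AddCommGroup N] [Module K N]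

lemma ncard_root_eq_of_equiv {κ M' N' : Type*} [AddCommGroup M'] [Module K M'] [AddCommGroup N']
    [Module K N'] {P : RootPairing ι K M N} {P' : RootPairing κ K M' N'} (e : P.Equiv P')
    (φ : Dual K M) (c : K) : {i | φ (P.root i) = c}.ncard =
      {j | φ ((RootPairing.Equiv.weightEquiv P P' e).symm (P'.root j)) = c}.ncard := by
  have hroot (i) :
      (RootPairing.Equiv.weightEquiv P P' e).symm (P'.root (e.indexEquiv i)) = P.root i :=
    (LinearEquiv.symm_apply_eq _).2 (RootPairing.Hom.root_weightMap_apply _ _ i e.toHom).symm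
  rw [← Set.ncard_image_of_injective _ e.indexEquiv.injective, Equiv.image_eq_preimage_symm]
  congr 1
  ext j
  rw [Set.mem_preimage, Set.mem_ofPred_eq, ← hroot, Equiv.apply_symm_apply, Set.mem_ofPred_eq]

variable [Finite ι] [CharZero K]

lemma ncard_root_eq_one_le_of_isAlgClosed [IsAlgClosed K] (P : RootPairing ι K M N) [P.IsReduced]
    [P.IsCrystallographic] [P.IsIrreducible] [P.IsRootSystem] (φ : Dual K M) :
    {i | φ (P.root i) = 1}.ncard ≤ {i | φ (P.root i) = 0}.ncard + finrank K M := by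
  have := Fintype.ofFinite ι
  obtain ⟨b⟩ := P.nonempty_base
  let H := RootPairing.GeckConstruction.cartanSubalgebra' b
  let e := RootPairing.GeckConstruction.equivRootSystem b
  let w : M ≃ₗ[K] Dual K H := RootPairing.Equiv.weightEquiv _ _ e
  let x : H := (evalEquiv K H).symm (φ ∘ₗ w.symm.toLinearMap)
  have hx (ψ : Dual K H) : φ (w.symm ψ) = ψ x :=
    (LinearMap.congr_fun ((evalEquiv K H).apply_symm_apply (φ ∘ₗ w.symm.toLinearMap)) ψ).symm
  have hcard (c : K) : {i | φ (P.root i) = c}.ncard =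
      {α : H.root | α.1 x = c}.ncard :=
    (ncard_root_eq_of_equiv e φ c).trans
      (congrArg Set.ncard (Set.ext fun α => iff_of_eq (congrArg (· = c) (hx α.1.toLinear))))
  rw [hcard, hcard, w.finrank_eq, Subspace.dual_finrank_eq]
  exact ncard_root_apply_eq_one_le x

end RootPairing

section EuclideanRootSystem

open Module Submodule

variable {E : Type*} [AddCommGroup E] [Module ℝ E]

/-- The reflection of `β` in the hyperplane `B`-orthogonal to `α`. -/
def formReflection (B : E →ₗ[ℝ] E →ₗ[ℝ] ℝ) (α β : E) : E := β - (2 * B α β / B α α) • α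

/-- `Φ` is a reduced crystallographic root system for the inner product `B`. It need not span `E`:
its rank is the dimension of its span. -/
structure IsEuclideanRootSystem (B : E →ₗ[ℝ] E →ₗ[ℝ] ℝ) (Φ : Finset E) : Prop where
  symm : ∀ x y, B x y = B y x
  pos : ∀ x, x ≠ 0 → 0 < B x x
  zero_notMem : (0 : E) ∉ Φ
  reflection_mem : ∀ α ∈ Φ, ∀ β ∈ Φ, formReflection B α β ∈ Φ
  integral : ∀ α ∈ Φ, ∀ β ∈ Φ, ∃ z : ℤ, 2 * B α β / B α α = z
  reduced : ∀ α ∈ Φ, ∀ c : ℝ, c • α ∈ Φ → c = 1 ∨ c = -1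

/-- `X` is a union of irreducible components of `Φ`. -/
structure IsOrthogonalSummand (B : E →ₗ[ℝ] E →ₗ[ℝ] ℝ) (Φ X : Finset E) : Prop where
  subset : X ⊆ Φ
  mem_of_ne_zero : ∀ α ∈ X, ∀ β ∈ Φ, B α β ≠ 0 → β ∈ X

/-- An irreducible root system: nonempty, with no proper nonempty orthogonal summand. -/
structure IsIrreducibleRootSystem (B : E →ₗ[ℝ] E →ₗ[ℝ] ℝ) (Φ : Finset E) : Prop
    extends IsEuclideanRootSystem B Φ where
  nonempty : Φ.Nonempty
  eq_of_summand : ∀ X, IsOrthogonalSummand B Φ X → X.Nonempty → X = Φ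

variable {B : E →ₗ[ℝ] E →ₗ[ℝ] ℝ} {Φ : Finset E}

namespace IsEuclideanRootSystem

lemma norm_pos (h : IsEuclideanRootSystem B Φ) {α : E} (hα : α ∈ Φ) : 0 < B α α :=
  h.pos α fun h0 => h.zero_notMem (h0 ▸ hα)

lemma nonneg (h : IsEuclideanRootSystem B Φ) (x : E) : 0 ≤ B x x := by
  rcases eq_or_ne x 0 with rfl | hx
  · simp
  · exact (h.pos x hx).le

lemma two_mul_div_self (h : IsEuclideanRootSystem B Φ) {α : E} (hα : α ∈ Φ) :
    2 * B α α / B α α = 2 := by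
  rw [mul_div_assoc, div_self (h.norm_pos hα).ne', mul_one]

lemma formReflection_self (h : IsEuclideanRootSystem B Φ) {α : E} (hα : α ∈ Φ) :
    formReflection B α α = -α := by
  rw [formReflection, h.two_mul_div_self hα]
  module

lemma neg_mem (h : IsEuclideanRootSystem B Φ) {α : E} (hα : α ∈ Φ) : -α ∈ Φ :=
  h.formReflection_self hα ▸ h.reflection_mem α hα α hα

lemma norm_formReflection (h : IsEuclideanRootSystem B Φ) {α : E} (hα : α ∈ Φ) (β : E) :
    B (formReflection B α β) (formReflection B α β) = B β β := by
  have := (h.norm_pos hα).ne'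
  simp only [formReflection, map_sub, LinearMap.sub_apply, map_smul, LinearMap.smul_apply,
    smul_eq_mul, h.symm β α]
  field_simp
  ring

lemma apply_formReflection (h : IsEuclideanRootSystem B Φ) {α : E} (hα : α ∈ Φ) (β : E) :
    B α (formReflection B α β) = -B α β := by
  have := (h.norm_pos hα).ne'
  simp only [formReflection, map_sub, map_smul, smul_eq_mul]
  field_simp
  ring

lemma apply_sq_lt (h : IsEuclideanRootSystem B Φ) {α β : E} (hα : α ∈ Φ) (hβ : β ∈ Φ)
    (hne : β ≠ α) (hne' : β ≠ -α) : B α β ^ 2 < B α α * B β β := by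
  refine (LinearMap.BilinForm.apply_sq_lt_iff_linearIndependent_of_symm B h.pos ⟨h.symm⟩ α β).2 ?_
  refine (LinearIndependent.pair_iff' fun h0 => h.zero_notMem (h0 ▸ hα)).2 fun c hc => ?_
  rcases h.reduced α hα c (hc ▸ hβ) with rfl | rfl
  · exact hne (by rw [← hc, one_smul])
  · exact hne' (by rw [← hc, neg_one_smul])

lemma eq_of_two_div_smul_eq (h : IsEuclideanRootSystem B Φ) {α β : E} (hα : α ∈ Φ) (hβ : β ∈ Φ)
    (hαβ : (2 / B α α) • α = (2 / B β β) • β) : α = β := by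
  have hpos := h.norm_pos hα
  have hpos' := h.norm_pos hβ
  have hβα : β = (B β β / B α α) • α := by
    calc β = (B β β / 2) • (2 / B β β) • β := by rw [smul_smul]; field_simp; simp
      _ = _ := by rw [← hαβ, smul_smul]; congr 1; field_simp
  rcases h.reduced α hα _ (hβα ▸ hβ) with h1 | h1
  · rw [hβα, h1, one_smul]
  · have := div_pos hpos' hpos
    linarith

end IsEuclideanRootSystem

namespace IsIrreducibleRootSystem

lemma exists_apply_ne_zero (h : IsIrreducibleRootSystem B Φ) (p : E → Prop)
    (hp : ∀ α ∈ Φ, ∀ β ∈ Φ, p β → p (formReflection B α β)) {α β : E} (hα : α ∈ Φ) (hβ : β ∈ Φ)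
    (hpα : p α) : ∃ γ ∈ Φ, p γ ∧ B γ β ≠ 0 := by
  let X := Φ.filter fun δ => ∃ γ ∈ Φ, p γ ∧ B γ δ ≠ 0
  have hX : IsOrthogonalSummand B Φ X := by
    refine ⟨Finset.filter_subset _ _, fun δ hδ ε hε hδε => ?_⟩
    obtain ⟨hδΦ, γ, hγ, hpγ, hγδ⟩ := Finset.mem_filter.1 hδ
    refine Finset.mem_filter.2 ⟨hε, ?_⟩
    by_cases hγε : B γ ε = 0
    · refine ⟨_, h.reflection_mem δ hδΦ γ hγ, hp δ hδΦ γ hγ hpγ, ?_⟩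
      have hδγ : B δ γ ≠ 0 := by rwa [h.symm]
      simp only [formReflection, map_sub, LinearMap.sub_apply, map_smul, LinearMap.smul_apply,
        smul_eq_mul, hγε, zero_sub, neg_ne_zero]
      exact mul_ne_zero (div_ne_zero (mul_ne_zero two_ne_zero hδγ) (h.norm_pos hδΦ).ne') hδε
    · exact ⟨γ, hγ, hpγ, hγε⟩
  have hmem : β ∈ X := h.eq_of_summand X hX
    ⟨α, Finset.mem_filter.2 ⟨hα, α, hα, hpα, (h.norm_pos hα).ne'⟩⟩ ▸ hβ
  exact (Finset.mem_filter.1 hmem).2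

lemma exists_apply_ne_zero_of_mem_span (h : IsIrreducibleRootSystem B Φ) {F : Set E}
    (hF : (F ∩ Φ).Nonempty) (hspan : ∀ β ∈ Φ, (∃ f ∈ F, B f β ≠ 0) → β ∈ span ℝ F) :
    ∀ β ∈ Φ, ∃ f ∈ F, B f β ≠ 0 := by
  let X := Φ.filter fun β => ∃ f ∈ F, B f β ≠ 0
  have hX : IsOrthogonalSummand B Φ X := by
    refine ⟨Finset.filter_subset _ _, fun δ hδ ε hε hδε => ?_⟩
    obtain ⟨hδΦ, hδF⟩ := Finset.mem_filter.1 hδ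
    refine Finset.mem_filter.2 ⟨hε, ?_⟩
    by_contra! hcon
    have hle : span ℝ F ≤ LinearMap.ker (B ε) :=
      span_le.2 fun f hf => (h.symm ε f).trans (hcon f hf)
    exact hδε ((h.symm δ ε).trans (hle (hspan δ hδΦ hδF)))
  obtain ⟨f, hfF, hf⟩ := hF
  intro β hβ
  have hmem : β ∈ X := h.eq_of_summand X hX
    ⟨f, Finset.mem_filter.2 ⟨hf, f, hfF, (h.norm_pos hf).ne'⟩⟩ ▸ hβ
  exact (Finset.mem_filter.1 hmem).2

end IsIrreducibleRootSystem

end EuclideanRootSystem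

section Complexification

open Module Submodule TensorProduct
open scoped Finset

variable {E : Type*} [AddCommGroup E] [Module ℝ E] {B : E →ₗ[ℝ] E →ₗ[ℝ] ℝ} {Φ : Finset E}

/-- The complexification `1 ⊗ α` of a root, in the complexified span of the root system. -/
def complexRoot (Φ : Finset E) : Φ ↪ ℂ ⊗[ℝ] span ℝ (Φ : Set E) where
  toFun α := 1 ⊗ₜ ⟨α, subset_span α.2⟩
  inj' _ _ h := Subtype.ext <| Subtype.mk.inj <|
    Module.Flat.tensorProduct_mk_injective (R := ℝ) (S := ℂ) (span ℝ (Φ : Set E)) h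

lemma complexRoot_apply (α : Φ) : complexRoot Φ α = 1 ⊗ₜ ⟨α, subset_span α.2⟩ := rfl

/-- The complex-linear extension to the complexified span of the roots of a real functional. -/
def complexFunctional (Φ : Finset E) (l : E →ₗ[ℝ] ℝ) : Dual ℂ (ℂ ⊗[ℝ] span ℝ (Φ : Set E)) :=
  Dual.baseChange ℂ (l.domRestrict (span ℝ (Φ : Set E)))

lemma complexFunctional_complexRoot (l : E →ₗ[ℝ] ℝ) (α : Φ) :
    complexFunctional Φ l (complexRoot Φ α) = (l α : ℂ) := by
  simp [complexFunctional, complexRoot_apply]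

lemma span_range_complexRoot : span ℂ (Set.range (complexRoot Φ)) = ⊤ := by
  have hrange : Set.range (complexRoot Φ) =
      TensorProduct.mk ℝ ℂ (span ℝ (Φ : Set E)) 1 '' (((↑) : _ → E) ⁻¹' (Φ : Set E)) :=
    Set.ext fun x => ⟨fun ⟨α, hα⟩ => ⟨⟨α, subset_span α.2⟩, α.2, hα⟩,
      fun ⟨v, hv, hx⟩ => ⟨⟨v, hv⟩, hx⟩⟩
  rw [hrange, ← baseChange_span, span_span_coe_preimage, baseChange_top]

lemma ncard_complexFunctional_eq (l : E →ₗ[ℝ] ℝ) (r : ℝ) :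
    {α : Φ | complexFunctional Φ l (complexRoot Φ α) = r}.ncard = #{α ∈ Φ | l α = r} := by
  rw [← Set.ncard_coe_finset, ← Set.ncard_image_of_injective _ Subtype.val_injective]
  congr 1
  ext α
  simp [complexFunctional_complexRoot, and_comm]

namespace IsEuclideanRootSystem

/-- The complexification of the coroot `2 B(α, ·) / B(α, α)`. -/
def complexCoroot (h : IsEuclideanRootSystem B Φ) : Φ ↪ Dual ℂ (ℂ ⊗[ℝ] span ℝ (Φ : Set E)) where
  toFun α := complexFunctional Φ ((2 / B α α) • B α)
  inj' α β hαβ := by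
    have hval (γ : Φ) : B ((2 / B α α) • (α : E) - (2 / B β β) • (β : E)) γ = 0 := by
      have := LinearMap.congr_fun hαβ (complexRoot Φ γ)
      rw [complexFunctional_complexRoot, complexFunctional_complexRoot, Complex.ofReal_inj] at this
      simpa [sub_eq_zero] using this
    by_contra hne
    refine (h.pos _ (sub_ne_zero.2 fun h' =>
      hne (Subtype.ext (h.eq_of_two_div_smul_eq α.2 β.2 h')))).ne' ?_
    rw [map_sub, map_smul, map_smul, hval, hval, smul_zero, smul_zero, sub_zero]

lemma complexCoroot_complexRoot (h : IsEuclideanRootSystem B Φ) (α β : Φ) :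
    h.complexCoroot α (complexRoot Φ β) = ((2 * B α β / B α α : ℝ) : ℂ) := by
  change complexFunctional Φ ((2 / B α α) • B α) _ = _
  rw [complexFunctional_complexRoot, LinearMap.smul_apply, smul_eq_mul, div_mul_eq_mul_div]

lemma complexRoot_reflection (h : IsEuclideanRootSystem B Φ) (α β : Φ) :
    complexRoot Φ β - h.complexCoroot α (complexRoot Φ β) • complexRoot Φ α =
      complexRoot Φ ⟨formReflection B α β, h.reflection_mem α α.2 β β.2⟩ := by
  have hsub : (⟨formReflection B α β, subset_span (h.reflection_mem α α.2 β β.2)⟩ :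
      span ℝ (Φ : Set E)) =
      ⟨β, subset_span β.2⟩ - (2 * B α β / B α α) • ⟨α, subset_span α.2⟩ := rfl
  rw [complexCoroot_complexRoot, complexRoot_apply, complexRoot_apply, complexRoot_apply, hsub,
    tmul_sub, tmul_smul, Complex.coe_smul]
  rfl

/-- The complex root system spanned by a Euclidean root system. -/
def complexification (h : IsEuclideanRootSystem B Φ) :
    RootPairing Φ ℂ (ℂ ⊗[ℝ] span ℝ (Φ : Set E)) (Dual ℂ (ℂ ⊗[ℝ] span ℝ (Φ : Set E))) :=
  haveI : FiniteDimensional ℝ (span ℝ (Φ : Set E)) := .span_finset ℝ Φ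
  RootPairing.mk'' (Dual.eval ℂ (ℂ ⊗[ℝ] span ℝ (Φ : Set E))) (complexRoot Φ) h.complexCoroot
    (fun α => by
      rw [Dual.eval_apply, h.complexCoroot_complexRoot, h.two_mul_div_self α.2]; norm_num)
    (by
      rintro α _ ⟨β, rfl⟩
      exact ⟨_, (h.complexRoot_reflection α β).symm⟩)
    span_range_complexRoot

lemma exists_intCast_eq_complexCoroot (h : IsEuclideanRootSystem B Φ) (α β : Φ) :
    ∃ z : ℤ, (z : ℂ) = h.complexCoroot β (complexRoot Φ α) := by
  obtain ⟨z, hz⟩ := h.integral β β.2 α α.2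
  exact ⟨z, by rw [complexCoroot_complexRoot, hz, Complex.ofReal_intCast]⟩

instance (h : IsEuclideanRootSystem B Φ) : h.complexification.IsRootSystem :=
  haveI : FiniteDimensional ℝ (span ℝ (Φ : Set E)) := .span_finset ℝ Φ
  RootPairing.isRootSystem_mk'' h.exists_intCast_eq_complexCoroot

instance (h : IsEuclideanRootSystem B Φ) : h.complexification.IsCrystallographic :=
  ⟨h.exists_intCast_eq_complexCoroot⟩

instance (h : IsEuclideanRootSystem B Φ) : h.complexification.IsReduced where
  eq_or_eq_neg α β hαβ := by
    change complexRoot Φ α = complexRoot Φ β ∨ complexRoot Φ α = -complexRoot Φ β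
    rw [LinearIndependent.pair_iff' (h.complexification.ne_zero α)] at hαβ
    push Not at hαβ
    obtain ⟨c, hc : c • complexRoot Φ α = complexRoot Φ β⟩ := hαβ
    set r := B α β / B α α
    have hcr : c = r := by
      have hval := congrArg (complexFunctional Φ (B α)) hc
      rw [map_smul, complexFunctional_complexRoot, complexFunctional_complexRoot, smul_eq_mul,
        ← eq_div_iff (by exact_mod_cast (h.norm_pos α.2).ne')] at hval
      rw [hval, Complex.ofReal_div]
    have hβ : (⟨β, subset_span β.2⟩ : span ℝ (Φ : Set E)) = r • ⟨α, subset_span α.2⟩ := by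
      refine Module.Flat.tensorProduct_mk_injective (R := ℝ) (S := ℂ) _ ?_
      rw [TensorProduct.mk_apply, TensorProduct.mk_apply, tmul_smul, ← complexRoot_apply,
        ← complexRoot_apply, ← hc, hcr]
      exact Complex.coe_smul r _
    have hrα : (β : E) = r • (α : E) := congrArg Subtype.val hβ
    rcases h.reduced α α.2 r (hrα ▸ β.2) with h1 | h1
    · exact .inl (by rw [← hc, hcr, h1, Complex.ofReal_one, one_smul])
    · exact .inr (by
        rw [← hc, hcr, h1, Complex.ofReal_neg, Complex.ofReal_one, neg_one_smul, neg_neg])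

end IsEuclideanRootSystem

namespace IsIrreducibleRootSystem

lemma isOrthogonalSummand_complexRoot_mem (h : IsIrreducibleRootSystem B Φ)
    (q : h.complexification.invtRootSubmodule) :
    IsOrthogonalSummand B Φ
      (Φ.filter fun α => ∃ hα : α ∈ Φ, complexRoot Φ ⟨α, hα⟩ ∈ (q : Submodule ℂ _)) := by
  refine ⟨Finset.filter_subset _ _, fun α hα β hβ hαβ => ?_⟩
  obtain ⟨-, hα, hαq⟩ := Finset.mem_filter.1 hα
  refine Finset.mem_filter.2 ⟨hβ, hβ, by_contra fun hβq => hαβ ?_⟩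
  have hker : h.complexCoroot ⟨β, hβ⟩ (complexRoot Φ ⟨α, hα⟩) = 0 :=
    RootPairing.invtRootSubmodule.le_ker_coroot' q hβq hαq
  rw [h.complexCoroot_complexRoot, Complex.ofReal_eq_zero, div_eq_zero_iff] at hker
  rw [h.symm]
  linarith [hker.resolve_right (h.norm_pos hβ).ne']

lemma complexification_isIrreducible (h : IsIrreducibleRootSystem B Φ) :
    h.complexification.IsIrreducible := by
  obtain ⟨α, hα⟩ := h.nonempty
  have : Nontrivial (ℂ ⊗[ℝ] span ℝ (Φ : Set E)) :=
    ⟨complexRoot Φ ⟨α, hα⟩, 0, h.complexification.ne_zero ⟨α, hα⟩⟩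
  refine RootPairing.IsIrreducible.mk' _ fun q hq hqbot => ?_
  let q' : h.complexification.invtRootSubmodule :=
    ⟨q, h.complexification.mem_invtRootSubmodule_iff.2 hq⟩
  have hne : q' ≠ ⊥ := fun h0 => hqbot (congrArg Subtype.val h0)
  rw [Ne, RootPairing.invtRootSubmodule.eq_bot_iff] at hne
  push Not at hne
  obtain ⟨β, hβ⟩ := hne
  have hall := h.eq_of_summand _ (h.isOrthogonalSummand_complexRoot_mem q')
    ⟨β, Finset.mem_filter.2 ⟨β.2, β.2, hβ⟩⟩
  have htop : q' = ⊤ := by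
    refine (RootPairing.invtRootSubmodule.eq_top_iff q').2 ?_
    rintro _ ⟨γ, rfl⟩
    exact (Finset.mem_filter.1 (hall.ge γ.2)).2.2
  exact congrArg Subtype.val htop

lemma card_eq_const_le (h : IsIrreducibleRootSystem B Φ) (l : E →ₗ[ℝ] ℝ) {c : ℝ} (hc : c ≠ 0) :
    #{α ∈ Φ | l α = c} ≤ #{α ∈ Φ | l α = 0} + finrank ℝ (span ℝ (Φ : Set E)) := by
  have := h.complexification_isIrreducible
  have hmain := ncard_root_eq_one_le_of_isAlgClosed h.complexification
    (complexFunctional Φ (c⁻¹ • l))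
  have hone := ncard_complexFunctional_eq (Φ := Φ) (c⁻¹ • l) 1
  have hzero := ncard_complexFunctional_eq (Φ := Φ) (c⁻¹ • l) 0
  rw [Complex.ofReal_one] at hone
  rw [Complex.ofReal_zero] at hzero
  erw [hone, hzero, Module.finrank_baseChange] at hmain
  simpa [inv_mul_eq_one₀ hc, hc, eq_comm] using hmain

end IsIrreducibleRootSystem

end Complexification

section ResidualBound

open Module Submodule
open scoped Finset

variable {E : Type*} [AddCommGroup E] [Module ℝ E] {B : E →ₗ[ℝ] E →ₗ[ℝ] ℝ} {Φ X : Finset E}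
  {κ : E → ℝ} {l : E →ₗ[ℝ] ℝ}

/-- `a` and `b` are linearly independent over `ℤ`. -/
def IntIndependent (a b : ℝ) : Prop := ∀ m n : ℤ, m * a + n * b = 0 → m = 0 ∧ n = 0

/-- A reflection-invariant nonzero parameter function whose values on roots of different length are
linearly independent over `ℤ`. A generic Weyl-invariant parameter function is of this kind. -/
structure IsGenericParameter (B : E →ₗ[ℝ] E →ₗ[ℝ] ℝ) (Φ : Finset E) (κ : E → ℝ) : Prop where
  invariant : ∀ α ∈ Φ, ∀ β ∈ Φ, κ (formReflection B α β) = κ β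
  ne_zero : ∀ α ∈ Φ, κ α ≠ 0
  independent : ∀ α ∈ Φ, ∀ β ∈ Φ, B α α ≠ B β β → IntIndependent (κ α) (κ β)

/-- The inequality `#{α | l α = κ α} ≤ #{α | l α = 0} + rank Φ`, which residual points turn into
an equality. -/
def ResidualBound (Φ : Finset E) (κ : E → ℝ) (l : E →ₗ[ℝ] ℝ) : Prop :=
  #{α ∈ Φ | l α = κ α} ≤ #{α ∈ Φ | l α = 0} + finrank ℝ (span ℝ (Φ : Set E))

lemma IsGenericParameter.mono (hκ : IsGenericParameter B Φ κ) (hX : X ⊆ Φ) :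
    IsGenericParameter B X κ :=
  ⟨fun α hα β hβ => hκ.invariant α (hX hα) β (hX hβ), fun α hα => hκ.ne_zero α (hX hα),
    fun α hα β hβ => hκ.independent α (hX hα) β (hX hβ)⟩

namespace IsEuclideanRootSystem

lemma isOrthogonalSummand_sdiff (h : IsEuclideanRootSystem B Φ) (hX : IsOrthogonalSummand B Φ X) :
    IsOrthogonalSummand B Φ (Φ \ X) := by
  refine ⟨Finset.sdiff_subset, fun α hα β hβ hαβ => Finset.mem_sdiff.2 ⟨hβ, fun hβX => ?_⟩⟩
  rw [Finset.mem_sdiff] at hα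
  exact hα.2 (hX.mem_of_ne_zero β hβX α hα.1 (by rwa [h.symm]))

lemma of_isOrthogonalSummand (h : IsEuclideanRootSystem B Φ) (hX : IsOrthogonalSummand B Φ X) :
    IsEuclideanRootSystem B X where
  symm := h.symm
  pos := h.pos
  zero_notMem h0 := h.zero_notMem (hX.subset h0)
  reflection_mem α hα β hβ := by
    by_cases h0 : B α β = 0
    · simpa [formReflection, h0] using hβ
    · refine hX.mem_of_ne_zero α hα _ (h.reflection_mem α (hX.subset hα) β (hX.subset hβ)) ?_
      rwa [h.apply_formReflection (hX.subset hα), neg_ne_zero]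
  integral α hα β hβ := h.integral α (hX.subset hα) β (hX.subset hβ)
  reduced α hα c hc := h.reduced α (hX.subset hα) c (hX.subset hc)

lemma span_disjoint_of_orthogonal (h : IsEuclideanRootSystem B Φ) {s t : Set E}
    (hst : ∀ x ∈ s, ∀ y ∈ t, B x y = 0) : Disjoint (span ℝ s) (span ℝ t) := by
  refine disjoint_def.2 fun z hzs hzt => by_contra fun hz => (h.pos z hz).ne' ?_
  have hzt' (y : E) (hy : y ∈ t) : B z y = 0 :=
    (span_le.2 fun x hx => hst x hx y hy : span ℝ s ≤ LinearMap.ker (B.flip y)) hzs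
  exact (span_le.2 hzt' : span ℝ t ≤ LinearMap.ker (B z)) hzt

lemma finrank_span_add_finrank_span_sdiff (h : IsEuclideanRootSystem B Φ)
    (hX : IsOrthogonalSummand B Φ X) : finrank ℝ (span ℝ (X : Set E)) +
      finrank ℝ (span ℝ ((Φ \ X : Finset E) : Set E)) = finrank ℝ (span ℝ (Φ : Set E)) := by
  have hdisj : Disjoint (span ℝ (X : Set E)) (span ℝ ((Φ \ X : Finset E) : Set E)) := by
    refine h.span_disjoint_of_orthogonal fun x hx y hy => by_contra fun hxy => ?_
    obtain ⟨hyΦ, hyX⟩ := Finset.mem_sdiff.1 hy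
    exact hyX (hX.mem_of_ne_zero x hx y hyΦ hxy)
  have hsum := finrank_sup_add_finrank_inf_eq (span ℝ (X : Set E))
    (span ℝ ((Φ \ X : Finset E) : Set E))
  rwa [hdisj.eq_bot, finrank_bot, add_zero, ← span_union, ← Finset.coe_union,
    Finset.union_sdiff_of_subset hX.subset, eq_comm] at hsum

lemma residualBound_of_summand (h : IsEuclideanRootSystem B Φ) (hX : IsOrthogonalSummand B Φ X)
    (hbX : ResidualBound X κ l) (hbX' : ResidualBound (Φ \ X) κ l) : ResidualBound Φ κ l := by
  have hcard (p : E → Prop) : #{α ∈ Φ | p α} = #{α ∈ X | p α} + #{α ∈ Φ \ X | p α} := by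
    rw [← Finset.card_union_of_disjoint (Finset.disjoint_filter_filter Finset.disjoint_sdiff),
      ← Finset.filter_union, Finset.union_sdiff_of_subset hX.subset]
  unfold ResidualBound at *
  rw [hcard, hcard, ← h.finrank_span_add_finrank_span_sdiff hX]
  omega

theorem residualBound_of_irreducible
    (hirr : ∀ Ψ : Finset E, IsIrreducibleRootSystem B Ψ → IsGenericParameter B Ψ κ →
      ResidualBound Ψ κ l)
    (h : IsEuclideanRootSystem B Φ) (hκ : IsGenericParameter B Φ κ) : ResidualBound Φ κ l := by
  induction Φ using Finset.strongInduction with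
  | H Φ ih =>
  rcases Φ.eq_empty_or_nonempty with rfl | hne
  · simp [ResidualBound]
  by_cases hsummand : ∀ X, IsOrthogonalSummand B Φ X → X.Nonempty → X = Φ
  · exact hirr Φ ⟨h, hne, hsummand⟩ hκ
  push Not at hsummand
  obtain ⟨X, hX, hXne, hXΦ⟩ := hsummand
  have hX' := h.isOrthogonalSummand_sdiff hX
  exact h.residualBound_of_summand hX
    (ih X (hX.subset.ssubset_of_ne hXΦ) (h.of_isOrthogonalSummand hX) (hκ.mono hX.subset))
    (ih _ (Finset.sdiff_ssubset hX.subset hXne) (h.of_isOrthogonalSummand hX')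
      (hκ.mono hX'.subset))

end IsEuclideanRootSystem

end ResidualBound

section RootLengths

variable {E : Type*} [AddCommGroup E] [Module ℝ E] {B : E →ₗ[ℝ] E →ₗ[ℝ] ℝ} {Φ : Finset E}
  {κ : E → ℝ} {α β : E}

namespace IsEuclideanRootSystem

lemma two_mul_apply_of_norm_le (h : IsEuclideanRootSystem B Φ) (hα : α ∈ Φ) (hβ : β ∈ Φ)
    (hle : B α α ≤ B β β) (hne : β ≠ α) (hne' : β ≠ -α) :
    B α β = 0 ∨ 2 * B α β = B β β ∨ 2 * B α β = -B β β := by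
  have hβ0 := h.norm_pos hβ
  obtain ⟨q, hq⟩ := h.integral β hβ α hα
  rw [h.symm β α, div_eq_iff hβ0.ne'] at hq
  have hlt : (q : ℝ) ^ 2 < 2 ^ 2 := by
    have := h.apply_sq_lt hα hβ hne hne'
    have hsq : (q : ℝ) ^ 2 * B β β ^ 2 = 4 * B α β ^ 2 := by rw [← mul_pow, ← hq]; ring
    refine lt_of_mul_lt_mul_right (a := B β β ^ 2) ?_ (sq_nonneg _)
    nlinarith
  have hq2 : |q| < 2 := by exact_mod_cast abs_lt_of_sq_lt_sq hlt zero_le_two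
  obtain ⟨hq1, hq2⟩ := abs_lt.1 hq2
  interval_cases q
  · exact .inr (.inr (by simpa using hq))
  · exact .inl (by simpa using hq)
  · exact .inr (.inl (by simpa using hq))

lemma norm_eq_two_or_three_mul (h : IsEuclideanRootSystem B Φ) (hα : α ∈ Φ) (hβ : β ∈ Φ)
    (hlt : B α α < B β β) (hαβ : B α β ≠ 0) : B β β = 2 * B α α ∨ B β β = 3 * B α α := by
  have hα0 := h.norm_pos hα
  have hne : β ≠ α := by rintro rfl; exact hlt.ne rfl
  have hne' : β ≠ -α := by rintro rfl; simp at hlt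
  obtain ⟨s, hs⟩ : ∃ s : ℤ, B β β = s * B α α := by
    obtain ⟨p, hp⟩ := h.integral α hα β hβ
    rw [div_eq_iff hα0.ne'] at hp
    rcases (h.two_mul_apply_of_norm_le hα hβ hlt.le hne hne').resolve_left hαβ with hβ | hβ
    · exact ⟨p, by rw [← hp, hβ]⟩
    · exact ⟨-p, by push_cast; linarith⟩
  have hlt4 : B β β < 4 * B α α := by
    have := h.apply_sq_lt hα hβ hne hne'
    rcases (h.two_mul_apply_of_norm_le hα hβ hlt.le hne hne').resolve_left hαβ <;> nlinarith
  have hs1 : 1 < s := by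
    exact_mod_cast lt_of_mul_lt_mul_right (by linarith : (1 : ℝ) * B α α < s * B α α) hα0.le
  have hs4 : s < 4 := by
    exact_mod_cast lt_of_mul_lt_mul_right (by linarith : (s : ℝ) * B α α < 4 * B α α) hα0.le
  interval_cases s
  · exact .inl (by exact_mod_cast hs)
  · exact .inr (by exact_mod_cast hs)

lemma parameter_neg (h : IsEuclideanRootSystem B Φ) (hκ : IsGenericParameter B Φ κ) (hα : α ∈ Φ) :
    κ (-α) = κ α :=
  h.formReflection_self hα ▸ hκ.invariant α hα α hα

-- Two such roots of equal length are conjugate: `s_α s_β` or its inverse carries one to the other.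
lemma parameter_eq_of_apply_ne_zero (h : IsEuclideanRootSystem B Φ) (hκ : IsGenericParameter B Φ κ)
    (hα : α ∈ Φ) (hβ : β ∈ Φ) (hnorm : B β β = B α α) (hαβ : B α β ≠ 0) : κ α = κ β := by
  by_cases hne : β = α
  · rw [hne]
  by_cases hne' : β = -α
  · rw [hne', h.parameter_neg hκ hα]
  have hα0 := (h.norm_pos hα).ne'
  have hsα := hκ.invariant α hα β hβ
  have hsβ := hκ.invariant β hβ α hα
  rcases (h.two_mul_apply_of_norm_le hα hβ hnorm.ge hne hne').resolve_left hαβ with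
    hhalf | hhalf <;> rw [hnorm] at hhalf
  · rw [formReflection, hhalf, div_self hα0, one_smul] at hsα
    rw [formReflection, h.symm β α, hnorm, hhalf, div_self hα0, one_smul] at hsβ
    have hmem : β - α ∈ Φ := by
      simpa [formReflection, hhalf, hα0] using h.reflection_mem α hα β hβ
    rw [← hsα, ← hsβ, ← h.parameter_neg hκ hmem, neg_sub]
  · rw [formReflection, hhalf, neg_div, div_self hα0, neg_one_smul, sub_neg_eq_add] at hsα
    rw [formReflection, h.symm β α, hnorm, hhalf, neg_div, div_self hα0, neg_one_smul,
      sub_neg_eq_add] at hsβ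
    rw [← hsα, ← hsβ, add_comm]

end IsEuclideanRootSystem

namespace IsIrreducibleRootSystem

lemma norm_eq_two_or_three_mul_of_lt (h : IsIrreducibleRootSystem B Φ) (hα : α ∈ Φ) (hβ : β ∈ Φ)
    (hlt : B α α < B β β) : B β β = 2 * B α α ∨ B β β = 3 * B α α := by
  obtain ⟨γ, hγ, hγα, hγβ⟩ := h.exists_apply_ne_zero (fun γ => B γ γ = B α α)
    (fun δ hδ ε _ hε => (h.norm_formReflection hδ ε).trans hε) hα hβ rfl
  exact hγα ▸ h.norm_eq_two_or_three_mul hγ hβ (hγα ▸ hlt) hγβ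

lemma parameter_eq_of_norm_eq (h : IsIrreducibleRootSystem B Φ) (hκ : IsGenericParameter B Φ κ)
    (hα : α ∈ Φ) (hβ : β ∈ Φ) (hnorm : B α α = B β β) : κ α = κ β := by
  obtain ⟨γ, hγ, ⟨hγα, hκγ⟩, hγβ⟩ := h.exists_apply_ne_zero
    (fun γ => B γ γ = B α α ∧ κ γ = κ α)
    (fun δ hδ ε hεΦ hε => ⟨(h.norm_formReflection hδ ε).trans hε.1,
      (hκ.invariant δ hδ ε hεΦ).trans hε.2⟩) hα hβ ⟨rfl, rfl⟩
  rw [← hκγ, h.parameter_eq_of_apply_ne_zero hκ hγ hβ (hnorm.symm.trans hγα.symm) hγβ]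

lemma exists_norm_eq_or (h : IsIrreducibleRootSystem B Φ) :
    (∃ n, ∀ α ∈ Φ, B α α = n) ∨ ∃ σ ∈ Φ, ∃ τ ∈ Φ, (B τ τ = 2 * B σ σ ∨ B τ τ = 3 * B σ σ) ∧
      ∀ α ∈ Φ, B α α = B σ σ ∨ B α α = B τ τ := by
  obtain ⟨σ, hσ, hmin⟩ := Φ.exists_min_image (fun α => B α α) h.nonempty
  by_cases hall : ∀ α ∈ Φ, B α α = B σ σ
  · exact .inl ⟨_, hall⟩
  push Not at hall
  obtain ⟨τ, hτ, hne⟩ := hall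
  have hτσ := h.norm_eq_two_or_three_mul_of_lt hσ hτ ((hmin τ hτ).lt_of_ne' hne)
  refine .inr ⟨σ, hσ, τ, hτ, hτσ, fun α hα => or_iff_not_imp_left.2 fun hασ => ?_⟩
  have hα' := h.norm_eq_two_or_three_mul_of_lt hσ hα ((hmin α hα).lt_of_ne' hασ)
  by_contra hατ
  rcases lt_or_gt_of_ne hατ with hlt | hlt
  · rcases h.norm_eq_two_or_three_mul_of_lt hα hτ hlt with _ | _ <;> grind
  · rcases h.norm_eq_two_or_three_mul_of_lt hτ hα hlt with _ | _ <;> grind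

end IsIrreducibleRootSystem

end RootLengths

section TwoLengths

open Module Submodule
open scoped Finset

variable {E : Type*} [AddCommGroup E] [Module ℝ E] {B : E →ₗ[ℝ] E →ₗ[ℝ] ℝ} {Φ : Finset E} {m : ℝ}

/-- An irreducible root system with two root lengths, normalized so that short roots have norm `2`
and long roots norm `2 * m`. -/
structure IsTwoLengthRootSystem (B : E →ₗ[ℝ] E →ₗ[ℝ] ℝ) (Φ : Finset E) (m : ℝ) : Prop
    extends IsIrreducibleRootSystem B Φ where
  norm_eq : ∀ α ∈ Φ, B α α = 2 ∨ B α α = 2 * m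
  exists_short : ∃ α ∈ Φ, B α α = 2
  exists_long : ∃ α ∈ Φ, B α α = 2 * m

lemma IsEuclideanRootSystem.two_le_card_filter (h : IsEuclideanRootSystem B Φ) {p : E → Prop}
    [DecidablePred p] {ρ : E} (hρ : ρ ∈ Φ) (hpos : p ρ) (hneg : p (-ρ)) : 2 ≤ #{α ∈ Φ | p α} := by
  have hne : ρ ≠ -ρ := fun h0 => by
    have h1 := congrArg (B ρ) h0
    rw [map_neg] at h1
    linarith [h.norm_pos hρ]
  rw [← Finset.card_pair hne]
  refine Finset.card_le_card ?_
  simp [Finset.insert_subset_iff, hρ, h.neg_mem hρ, hpos, hneg]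

namespace IsTwoLengthRootSystem

variable {α β : E}

lemma exists_short_apply_long_ne_zero (h : IsTwoLengthRootSystem B Φ m) :
    ∃ α ∈ Φ, ∃ β ∈ Φ, B α α = 2 ∧ B β β = 2 * m ∧ B α β ≠ 0 := by
  obtain ⟨σ, hσ, hσ2⟩ := h.exists_short
  obtain ⟨τ, hτ, hτ2⟩ := h.exists_long
  obtain ⟨γ, hγ, hγ2, hγτ⟩ := h.exists_apply_ne_zero (fun γ => B γ γ = 2)
    (fun δ hδ ε _ hε => (h.norm_formReflection hδ ε).trans hε) hσ hτ hσ2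
  exact ⟨γ, hγ, τ, hτ, hγ2, hτ2, hγτ⟩

lemma apply_short_short (h : IsTwoLengthRootSystem B Φ m) (hα : α ∈ Φ) (hβ : β ∈ Φ)
    (hα2 : B α α = 2) (hβ2 : B β β = 2) (hne : β ≠ α) (hne' : β ≠ -α) :
    B α β = 0 ∨ B α β = 1 ∨ B α β = -1 := by
  rcases h.two_mul_apply_of_norm_le hα hβ (hα2.trans hβ2.symm).le hne hne' with h0 | h1 | h1
  · exact .inl h0
  · exact .inr (.inl (by linarith))
  · exact .inr (.inr (by linarith))

lemma apply_short_long (h : IsTwoLengthRootSystem B Φ m) (hm : 1 < m) (hα : α ∈ Φ) (hβ : β ∈ Φ)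
    (hα2 : B α α = 2) (hβ2 : B β β = 2 * m) : B α β = 0 ∨ B α β = m ∨ B α β = -m := by
  have hne : β ≠ α := by rintro rfl; linarith
  have hne' : β ≠ -α := by rintro rfl; simp at hβ2; linarith
  rcases h.two_mul_apply_of_norm_le hα hβ (by linarith) hne hne' with h0 | h1 | h1
  · exact .inl h0
  · exact .inr (.inl (by linarith))
  · exact .inr (.inr (by linarith))

lemma apply_long_long (h : IsTwoLengthRootSystem B Φ m) (hα : α ∈ Φ) (hβ : β ∈ Φ)
    (hα2 : B α α = 2 * m) (hβ2 : B β β = 2 * m) (hne : β ≠ α) (hne' : β ≠ -α) :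
    B α β = 0 ∨ B α β = m ∨ B α β = -m := by
  rcases h.two_mul_apply_of_norm_le hα hβ (hα2.trans hβ2.symm).le hne hne' with h0 | h1 | h1
  · exact .inl h0
  · exact .inr (.inl (by linarith))
  · exact .inr (.inr (by linarith))

end IsTwoLengthRootSystem

end TwoLengths

section TypeG2

open Module Submodule
open scoped Finset

variable {E : Type*} [AddCommGroup E] [Module ℝ E] {B : E →ₗ[ℝ] E →ₗ[ℝ] ℝ} {Φ : Finset E}
  {e f : E}

/-- The symmetric hexagon `±α, ±β, ±γ`; for `α + β + γ = 0` of equal norm this is a root system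
of type `A₂`. -/
def hexagon (α β γ : E) : Finset E := {α, β, γ, -α, -β, -γ}

lemma card_hexagon_eq_const_le {α β γ : E} (l : E →ₗ[ℝ] ℝ) {c : ℝ} (hc : c ≠ 0)
    (hsum : l α + l β + l γ = 0) :
    #{x ∈ hexagon α β γ | l x = c} ≤ 1 ∨ #{x ∈ hexagon α β γ | l x = c} ≤ 2 ∧
      (l α = 0 ∨ l β = 0 ∨ l γ = 0 ∨ l α = l β ∨ l β = l γ ∨ l γ = l α) := by
  have hle : #{x ∈ hexagon α β γ | l x = c} ≤
      (([α, β, γ, -α, -β, -γ].map l).filter (· = c)).length := by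
    have hlist : {x ∈ hexagon α β γ | l x = c} =
        ([α, β, γ, -α, -β, -γ].filter (l · = c)).toFinset := by ext; simp [hexagon]
    rw [hlist, List.filter_map, List.length_map]
    exact List.toFinset_card_le _
  simp only [List.map_cons, List.map_nil, map_neg, List.filter_cons, List.filter_nil] at hle
  grind

/-- The roots of type `G₂` generated by a short root `e` and a long root `f` at angle `π / 6`. -/
def rootsG2 (e f : E) : Finset E :=
  hexagon e (f - (2 : ℝ) • e) (e - f) ∪ hexagon f ((3 : ℝ) • e - (2 : ℝ) • f) (f - (3 : ℝ) • e)

namespace IsTwoLengthRootSystem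

lemma exists_apply_eq_three (h : IsTwoLengthRootSystem B Φ 3) :
    ∃ e ∈ Φ, ∃ f ∈ Φ, B e e = 2 ∧ B f f = 6 ∧ B e f = 3 := by
  obtain ⟨e, he, f, hf, he2, hf6, hef⟩ := h.exists_short_apply_long_ne_zero
  rcases (h.apply_short_long (by norm_num) he hf he2 hf6).resolve_left hef with h3 | h3
  · exact ⟨e, he, f, hf, he2, by linarith, h3⟩
  · exact ⟨e, he, -f, h.neg_mem hf, he2, by simp; linarith, by simp [h3]⟩

lemma rootsG2_subset (h : IsTwoLengthRootSystem B Φ 3) (he : e ∈ Φ) (hf : f ∈ Φ)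
    (he2 : B e e = 2) (hf6 : B f f = 6) (hef : B e f = 3) : rootsG2 e f ⊆ Φ := by
  have hfe : B f e = 3 := (h.symm f e).trans hef
  have h1 : e - f ∈ Φ := by
    convert h.reflection_mem f hf e he using 1
    norm_num [formReflection, hfe, hf6]
  have h2 : f - (3 : ℝ) • e ∈ Φ := by
    convert h.reflection_mem e he f hf using 1
    norm_num [formReflection, hef, he2]
  have h3 : f - (2 : ℝ) • e ∈ Φ := by
    convert h.neg_mem (h.reflection_mem e he _ h1) using 1
    norm_num [formReflection, hef, he2]
    module
  have h4 : (3 : ℝ) • e - (2 : ℝ) • f ∈ Φ := by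
    convert h.neg_mem (h.reflection_mem f hf _ h2) using 1
    norm_num [formReflection, hfe, hf6]
    module
  simp only [rootsG2, hexagon, Finset.union_subset_iff, Finset.insert_subset_iff,
    Finset.singleton_subset_iff]
  exact ⟨⟨he, h3, h1, h.neg_mem he, h.neg_mem h3, h.neg_mem h1⟩,
    hf, h4, h2, h.neg_mem hf, h.neg_mem h4, h.neg_mem h2⟩

lemma apply_eq_zero_of_notMem_rootsG2 (h : IsTwoLengthRootSystem B Φ 3) (he : e ∈ Φ) (hf : f ∈ Φ)
    (he2 : B e e = 2) (hf6 : B f f = 6) (hef : B e f = 3) {γ : E} (hγ : γ ∈ Φ)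
    (hγG : γ ∉ rootsG2 e f) : B e γ = 0 ∧ B f γ = 0 := by
  have hsub := h.rootsG2_subset he hf he2 hf6 hef
  have hfe : B f e = 3 := (h.symm f e).trans hef
  simp only [rootsG2, hexagon, Finset.union_subset_iff, Finset.insert_subset_iff,
    Finset.singleton_subset_iff] at hsub
  obtain ⟨⟨-, h3, h1, -⟩, -, h4, h2, -⟩ := hsub
  simp only [rootsG2, hexagon, Finset.mem_union, Finset.mem_insert, Finset.mem_singleton,
    not_or] at hγG
  obtain ⟨⟨e1, e2, e3, e4, e5, e6⟩, f1, f2, f3, f4, f5, f6⟩ := hγG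
  rcases h.norm_eq γ hγ with hγ2 | hγ6
  · have hf' := h.apply_short_long (by norm_num) hγ hf hγ2 (by linarith)
    have he' := h.apply_short_short he hγ he2 hγ2 e1 e4
    have h1' := h.apply_short_short h1 hγ (by simp [*]; norm_num) hγ2 e3 e6
    have h3' := h.apply_short_short h3 hγ (by simp [*]; norm_num) hγ2 e2 e5
    rw [h.symm] at hf'
    simp only [map_sub, map_smul, LinearMap.sub_apply, LinearMap.smul_apply, smul_eq_mul]
      at h1' h3'
    grind
  · have he' := h.apply_short_long (by norm_num) he hγ he2 hγ6
    have hf' := h.apply_long_long hf hγ (by linarith) hγ6 f1 f4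
    have h2' := h.apply_long_long h2 hγ (by simp [*]; norm_num) hγ6 f3 f6
    have h4' := h.apply_long_long h4 hγ (by simp [*]; norm_num) hγ6 f2 f5
    simp only [map_sub, map_smul, LinearMap.sub_apply, LinearMap.smul_apply, smul_eq_mul]
      at h2' h4'
    grind

lemma eq_rootsG2 (h : IsTwoLengthRootSystem B Φ 3) (he : e ∈ Φ) (hf : f ∈ Φ)
    (he2 : B e e = 2) (hf6 : B f f = 6) (hef : B e f = 3) : rootsG2 e f = Φ := by
  refine h.eq_of_summand _ ⟨h.rootsG2_subset he hf he2 hf6 hef, fun α hα γ hγ hαγ => ?_⟩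
    ⟨e, by simp [rootsG2, hexagon]⟩
  by_contra hγG
  obtain ⟨heγ, hfγ⟩ := h.apply_eq_zero_of_notMem_rootsG2 he hf he2 hf6 hef hγ hγG
  simp only [rootsG2, hexagon, Finset.mem_union, Finset.mem_insert, Finset.mem_singleton] at hα
  rcases hα with (rfl | rfl | rfl | rfl | rfl | rfl) | rfl | rfl | rfl | rfl | rfl | rfl <;>
    simp [heγ, hfγ] at hαγ

lemma two_le_finrank_span (h : IsTwoLengthRootSystem B Φ 3) (he : e ∈ Φ) (hf : f ∈ Φ)
    (he2 : B e e = 2) (hf6 : B f f = 6) (hef : B e f = 3) :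
    2 ≤ finrank ℝ (span ℝ (Φ : Set E)) := by
  have hli : LinearIndependent ℝ ![e, f] := by
    rw [← LinearMap.BilinForm.apply_sq_lt_iff_linearIndependent_of_symm B h.pos ⟨h.symm⟩]
    norm_num [he2, hf6, hef]
  rw [← Fintype.card_fin 2, ← finrank_span_eq_card hli]
  refine finrank_mono (span_mono ?_)
  rw [Matrix.range_cons, Matrix.range_cons, Matrix.range_empty]
  simp [Set.insert_subset_iff, he, hf]

theorem card_le_of_typeG2 (h : IsTwoLengthRootSystem B Φ 3) (l : E →ₗ[ℝ] ℝ) {a b : ℝ}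
    (ha : a ≠ 0) (hb : b ≠ 0) :
    #{α ∈ Φ | B α α = 2 ∧ l α = a} + #{α ∈ Φ | B α α = 2 * 3 ∧ l α = b} ≤
      #{α ∈ Φ | l α = 0} + finrank ℝ (span ℝ (Φ : Set E)) := by
  obtain ⟨e, he, f, hf, he2, hf6, hef⟩ := h.exists_apply_eq_three
  have hfe : B f e = 3 := (h.symm f e).trans hef
  have hΦ := h.eq_rootsG2 he hf he2 hf6 hef
  have hrank := h.two_le_finrank_span he hf he2 hf6 hef
  have hshort : #{α ∈ Φ | B α α = 2 ∧ l α = a} ≤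
      #{x ∈ hexagon e (f - (2 : ℝ) • e) (e - f) | l x = a} := by
    refine Finset.card_le_card fun α hα => ?_
    simp only [← hΦ, rootsG2, Finset.mem_filter, Finset.mem_union] at hα ⊢
    refine ⟨hα.1.resolve_right fun hα' => ?_, hα.2.2⟩
    simp only [hexagon, Finset.mem_insert, Finset.mem_singleton] at hα'
    rcases hα' with rfl | rfl | rfl | rfl | rfl | rfl <;> norm_num [he2, hf6, hef, hfe] at hα
  have hlong : #{α ∈ Φ | B α α = 2 * 3 ∧ l α = b} ≤
      #{x ∈ hexagon f ((3 : ℝ) • e - (2 : ℝ) • f) (f - (3 : ℝ) • e) | l x = b} := by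
    refine Finset.card_le_card fun α hα => ?_
    simp only [← hΦ, rootsG2, Finset.mem_filter, Finset.mem_union] at hα ⊢
    refine ⟨hα.1.resolve_left fun hα' => ?_, hα.2.2⟩
    simp only [hexagon, Finset.mem_insert, Finset.mem_singleton] at hα'
    rcases hα' with rfl | rfl | rfl | rfl | rfl | rfl <;> norm_num [he2, hf6, hef, hfe] at hα
  have hs := card_hexagon_eq_const_le (α := e) (β := f - (2 : ℝ) • e) (γ := e - f) l ha
    (by simp only [map_sub, map_smul, smul_eq_mul]; ring)
  have hl := card_hexagon_eq_const_le (α := f) (β := (3 : ℝ) • e - (2 : ℝ) • f)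
    (γ := f - (3 : ℝ) • e) l hb (by simp only [map_sub, map_smul, smul_eq_mul]; ring)
  by_cases hzero : ∃ ρ ∈ Φ, l ρ = 0
  · obtain ⟨ρ, hρ, hlρ⟩ := hzero
    have := h.two_le_card_filter (p := fun α => l α = 0) hρ hlρ (by rw [map_neg, hlρ, neg_zero])
    omega
  · simp only [← hΦ, rootsG2, hexagon, Finset.mem_union, Finset.mem_insert,
      Finset.mem_singleton, or_and_right, exists_or, exists_eq_left, map_sub, map_smul, map_neg,
      smul_eq_mul] at hzero
    simp only [map_sub, map_smul, smul_eq_mul] at hs hl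
    grind

end IsTwoLengthRootSystem

end TypeG2

section ValueCount

open scoped Finset

variable {ι : Type*} {F : Finset ι} {v : ι → ℝ} {b w : ℝ}

/-- The number of elements of `F` at which `v` takes the value `w`. -/
def valueCount (F : Finset ι) (v : ι → ℝ) (w : ℝ) : ℤ := #{f ∈ F | v f = w}

/-- The drop of `valueCount` along the step `w ↦ w + b`. -/
def valueDrop (F : Finset ι) (v : ι → ℝ) (b w : ℝ) : ℤ :=
  valueCount F v w - valueCount F v (w + b)

lemma sum_valueCount_mul {W : Finset ℝ} (hW : ∀ f ∈ F, v f ∈ W) (φ : ℝ → ℤ) :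
    ∑ w ∈ W, valueCount F v w * φ w = ∑ f ∈ F, φ (v f) := by
  rw [← Finset.sum_fiberwise_of_maps_to hW]
  refine Finset.sum_congr rfl fun w _ => ?_
  rw [Finset.sum_congr rfl fun f hf => by rw [(Finset.mem_filter.1 hf).2], Finset.sum_const,
    nsmul_eq_mul, valueCount]

lemma sum_valueCount_add_mul {W : Finset ℝ} (hW : ∀ f ∈ F, v f - b ∈ W) (φ : ℝ → ℤ) :
    ∑ w ∈ W, valueCount F v (w + b) * φ w = ∑ f ∈ F, φ (v f - b) := by
  simpa only [valueCount, sub_eq_iff_eq_add] using sum_valueCount_mul (v := fun f => v f - b) hW φ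

lemma card_sub_eq_const (c : ℝ) :
    (#{p ∈ F ×ˢ F | v p.1 - v p.2 = c} : ℤ) = ∑ f ∈ F, valueCount F v (v f + c) := by
  rw [Finset.card_filter, Finset.sum_product_right]
  push_cast
  refine Finset.sum_congr rfl fun g _ => ?_
  simp only [valueCount, Finset.card_filter, Nat.cast_sum, sub_eq_iff_eq_add, add_comm c]
  push_cast
  rfl

/-- A finite set of real numbers outside which `valueCount F v` and its translate vanish. -/
def valueSupport (F : Finset ι) (v : ι → ℝ) (b : ℝ) : Finset ℝ :=
  F.image v ∪ F.image fun f => v f - b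

lemma mem_valueSupport {f : ι} (hf : f ∈ F) : v f ∈ valueSupport F v b :=
  Finset.mem_union_left _ (Finset.mem_image_of_mem v hf)

lemma sub_mem_valueSupport {f : ι} (hf : f ∈ F) : v f - b ∈ valueSupport F v b :=
  Finset.mem_union_right _ (Finset.mem_image_of_mem (fun f => v f - b) hf)

lemma valueCount_pos {f : ι} (hf : f ∈ F) : 0 < valueCount F v (v f) :=
  Nat.cast_pos.2 (Finset.card_pos.2 ⟨f, Finset.mem_filter.2 ⟨hf, rfl⟩⟩)

lemma valueDrop_eq_zero_of_notMem (hw : w ∉ valueSupport F v b) : valueDrop F v b w = 0 := by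
  have h0 : valueCount F v w = 0 := by
    refine Nat.cast_eq_zero.2 (Finset.card_eq_zero.2 (Finset.filter_eq_empty_iff.2 ?_))
    rintro f hf rfl
    exact hw (mem_valueSupport hf)
  have hb : valueCount F v (w + b) = 0 := by
    refine Nat.cast_eq_zero.2 (Finset.card_eq_zero.2 (Finset.filter_eq_empty_iff.2 ?_))
    intro f hf hfw
    exact hw (eq_sub_of_add_eq hfw.symm ▸ sub_mem_valueSupport hf)
  rw [valueDrop, h0, hb, sub_zero]

lemma sum_valueDrop_sq :
    ∑ w ∈ valueSupport F v b, valueDrop F v b w ^ 2 =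
      2 * (#{p ∈ F ×ˢ F | v p.1 - v p.2 = 0} - #{p ∈ F ×ˢ F | v p.1 - v p.2 = b}) := by
  have hsq := sum_valueCount_mul (F := F) (v := v) (fun _ => mem_valueSupport (b := b))
    (valueCount F v)
  have hmul := sum_valueCount_mul (F := F) (v := v) (fun _ => mem_valueSupport (b := b))
    (fun w => valueCount F v (w + b))
  have hsq' := sum_valueCount_add_mul (F := F) (v := v) (fun _ => sub_mem_valueSupport (b := b))
    (fun w => valueCount F v (w + b))
  simp only [sub_add_cancel] at hsq'
  calc ∑ w ∈ valueSupport F v b, valueDrop F v b w ^ 2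
      = ∑ w ∈ valueSupport F v b, (valueCount F v w * valueCount F v w
          - 2 * (valueCount F v w * valueCount F v (w + b))
          + valueCount F v (w + b) * valueCount F v (w + b)) :=
        Finset.sum_congr rfl fun w _ => by rw [valueDrop]; ring
    _ = _ := by
        rw [Finset.sum_add_distrib, Finset.sum_sub_distrib, ← Finset.mul_sum, hsq, hmul, hsq',
          card_sub_eq_const, card_sub_eq_const]
        simp only [add_zero]
        ring

end ValueCount

section Chains

open scoped Finset

/-- The sign `1` on `±a + j * b` for `0 ≤ j`, `-1` on `±a + j * b` for `j < 0`, and `0` elsewhere.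
Its increments along `w - b ↦ w` are supported on `±a`. -/
def chainSign (a b w : ℝ) : ℤ :=
  if ∃ j : ℤ, 0 ≤ j ∧ (w = a + j * b ∨ w = -a + j * b) then 1
  else if ∃ j : ℤ, j < 0 ∧ (w = a + j * b ∨ w = -a + j * b) then -1 else 0

variable {ι : Type*} {F : Finset ι} {v : ι → ℝ} {a b w : ℝ}

lemma chainSign_neg_left : chainSign (-a) b w = chainSign a b w := by
  simp only [chainSign, neg_neg, or_comm]

lemma chainSign_of_nonneg {j : ℤ} (hj : 0 ≤ j) : chainSign a b (a + j * b) = 1 :=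
  if_pos ⟨j, hj, .inl rfl⟩

lemma abs_chainSign_le : |chainSign a b w| ≤ 1 := by
  unfold chainSign
  split_ifs <;> simp

lemma chainSign_eq_zero_iff :
    chainSign a b w = 0 ↔ ∀ j : ℤ, w ≠ a + j * b ∧ w ≠ -a + j * b := by
  unfold chainSign
  split_ifs with h0 h1
  · obtain ⟨j, -, hj⟩ := h0
    simpa using ⟨j, by tauto⟩
  · obtain ⟨j, -, hj⟩ := h1
    simpa using ⟨j, by tauto⟩
  · push Not at h0 h1
    exact iff_of_true rfl fun j => (le_or_gt 0 j).elim (h0 j) (h1 j)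

namespace IntIndependent

lemma ne_zero_right (h : IntIndependent a b) : b ≠ 0 := fun h0 => by
  simpa using (h 0 1 (by simp [h0])).2

lemma chain_inj (h : IntIndependent a b) {j k : ℤ} (hjk : a + j * b = a + k * b) : j = k := by
  have := h 0 (j - k) (by push_cast; linarith)
  omega

lemma add_ne_neg_add (h : IntIndependent a b) (j k : ℤ) : a + j * b ≠ -a + k * b := fun hjk => by
  have := h 2 (j - k) (by push_cast; linarith)
  omega

lemma neg_left (h : IntIndependent a b) : IntIndependent (-a) b := fun m n hmn => by
  have := h (-m) n (by push_cast; linarith)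
  omega

lemma chainSign_of_neg (h : IntIndependent a b) {j : ℤ} (hj : j < 0) :
    chainSign a b (a + j * b) = -1 := by
  rw [chainSign, if_neg, if_pos ⟨j, hj, .inl rfl⟩]
  rintro ⟨k, hk, hjk | hjk⟩
  · exact absurd (h.chain_inj hjk) (by omega)
  · exact h.add_ne_neg_add _ _ hjk

lemma chainSign_sub_chainSign_of_mem (h : IntIndependent a b) (j : ℤ) :
    chainSign a b (a + j * b) - chainSign a b (a + j * b - b) = if j = 0 then 2 else 0 := by
  have hpred : a + j * b - b = a + (j - 1 : ℤ) * b := by push_cast; ring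
  rw [hpred]
  rcases lt_trichotomy j 0 with hj | rfl | hj
  · rw [h.chainSign_of_neg hj, h.chainSign_of_neg (by omega), if_neg hj.ne, sub_self]
  · rw [chainSign_of_nonneg le_rfl, h.chainSign_of_neg (by omega), if_pos rfl]
    rfl
  · rw [chainSign_of_nonneg hj.le, chainSign_of_nonneg (by omega), if_neg hj.ne', sub_self]

lemma chainSign_sub_chainSign (h : IntIndependent a b) (w : ℝ) :
    chainSign a b w - chainSign a b (w - b) =
      2 * ((if w = a then 1 else 0) + if w = -a then 1 else 0) := by
  by_cases hw : ∃ j : ℤ, w = a + j * b ∨ w = -a + j * b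
  · have hb := h.ne_zero_right
    obtain ⟨j, rfl | rfl⟩ := hw
    · have hne : a + j * b ≠ -a := by simpa using h.add_ne_neg_add j 0
      simp [h.chainSign_sub_chainSign_of_mem, hne, hb]
    · have hne : -a + j * b ≠ a := by simpa using h.neg_left.add_ne_neg_add j 0
      simp only [← chainSign_neg_left (a := a), h.neg_left.chainSign_sub_chainSign_of_mem]
      simp [hne, hb]
  · push Not at hw
    have hw' (j : ℤ) : w - b ≠ a + j * b ∧ w - b ≠ -a + j * b := by
      refine ⟨fun hj => (hw (j + 1)).1 ?_, fun hj => (hw (j + 1)).2 ?_⟩ <;>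
        · push_cast
          linarith
    rw [chainSign_eq_zero_iff.2 hw, chainSign_eq_zero_iff.2 hw']
    have h0 := hw 0
    simp only [Int.cast_zero, zero_mul, add_zero] at h0
    simp [h0]

lemma sum_chainSign_mul_valueDrop (h : IntIndependent a b) :
    ∑ w ∈ valueSupport F v b, chainSign a b w * valueDrop F v b w =
      2 * (valueCount F v a + valueCount F v (-a)) := by
  calc ∑ w ∈ valueSupport F v b, chainSign a b w * valueDrop F v b w
      = ∑ w ∈ valueSupport F v b, (valueCount F v w * chainSign a b w
          - valueCount F v (w + b) * chainSign a b w) :=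
        Finset.sum_congr rfl fun w _ => by rw [valueDrop]; ring
    _ = ∑ f ∈ F, (chainSign a b (v f) - chainSign a b (v f - b)) := by
        rw [Finset.sum_sub_distrib, sum_valueCount_mul fun _ => mem_valueSupport,
          sum_valueCount_add_mul fun _ => sub_mem_valueSupport, Finset.sum_sub_distrib]
    _ = _ := by
        simp only [h.chainSign_sub_chainSign, ← Finset.mul_sum, Finset.sum_add_distrib,
          Finset.sum_boole, valueCount]

lemma chainSign_mul_valueDrop_le (w : ℝ) :
    chainSign a b w * valueDrop F v b w ≤ valueDrop F v b w ^ 2 := by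
  rcases abs_le.1 (abs_chainSign_le (a := a) (b := b) (w := w)) with ⟨h1, h2⟩
  rcases le_or_gt (valueDrop F v b w) 0 with hd | hd <;> nlinarith

lemma valueCount_add_le (h : IntIndependent a b) :
    valueCount F v a + valueCount F v (-a) ≤
      #{p ∈ F ×ˢ F | v p.1 - v p.2 = 0} - #{p ∈ F ×ˢ F | v p.1 - v p.2 = b} := by
  have hsum := Finset.sum_le_sum fun w (_ : w ∈ valueSupport F v b) =>
    chainSign_mul_valueDrop_le (F := F) (v := v) (a := a) (b := b) w
  rw [h.sum_chainSign_mul_valueDrop, sum_valueDrop_sq] at hsum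
  linarith

lemma valueDrop_eq_zero_or (h : IntIndependent a b)
    (heq : (#{p ∈ F ×ˢ F | v p.1 - v p.2 = 0} : ℤ) - #{p ∈ F ×ˢ F | v p.1 - v p.2 = b} ≤
      valueCount F v a + valueCount F v (-a)) (w : ℝ) :
    valueDrop F v b w = 0 ∨ valueDrop F v b w = chainSign a b w := by
  by_cases hw : w ∈ valueSupport F v b
  · have hterm := (Finset.sum_eq_sum_iff_of_le fun w (_ : w ∈ valueSupport F v b) =>
      chainSign_mul_valueDrop_le (F := F) (v := v) (a := a) (b := b) w).1 (by
        rw [h.sum_chainSign_mul_valueDrop, sum_valueDrop_sq]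
        linarith [h.valueCount_add_le (F := F) (v := v)]) w hw
    rw [pow_two, mul_eq_mul_right_iff] at hterm
    tauto
  · exact .inl (valueDrop_eq_zero_of_notMem hw)

lemma valueCount_eq_zero_of_drop (h : IntIndependent a b)
    (hdrop : ∀ w, valueDrop F v b w = 0 ∨ valueDrop F v b w = chainSign a b w)
    (hw : ∀ j : ℤ, w ≠ a + j * b ∧ w ≠ -a + j * b) : valueCount F v w = 0 := by
  have hconst (n : ℕ) : valueCount F v (w + n * b) = valueCount F v w := by
    induction n with
    | zero => simp
    | succ n ih =>
      have hsign : chainSign a b (w + n * b) = 0 := by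
        refine chainSign_eq_zero_iff.2 fun j =>
          ⟨fun hj => (hw (j - n)).1 ?_, fun hj => (hw (j - n)).2 ?_⟩ <;>
          · push_cast
            linarith
      have hd := hdrop (w + n * b)
      rw [hsign, or_self, valueDrop, sub_eq_zero] at hd
      rw [← ih, hd]
      congr 1
      push_cast
      ring
  have hinj : Function.Injective fun n : ℕ => w + n * b := fun m n hmn => by
    simpa [h.ne_zero_right] using hmn
  obtain ⟨_, ⟨n, rfl⟩, hn⟩ :=
    (Set.infinite_range_of_injective hinj).exists_notMem_finset (F.image v)
  rw [← hconst n, valueCount, Nat.cast_eq_zero, Finset.card_eq_zero, Finset.filter_eq_empty_iff]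
  exact fun f hf hfn => hn (Finset.mem_image.2 ⟨f, hf, hfn⟩)

lemma exists_mem_chain (h : IntIndependent a b)
    (hdrop : ∀ w, valueDrop F v b w = 0 ∨ valueDrop F v b w = chainSign a b w) {f : ι}
    (hf : f ∈ F) : ∃ j : ℤ, v f = a + j * b ∨ v f = -a + j * b := by
  by_contra! hoff
  exact (valueCount_pos hf).ne' (h.valueCount_eq_zero_of_drop hdrop hoff)

lemma valueCount_le_of_between (h : IntIndependent a b)
    (hdrop : ∀ w, valueDrop F v b w = 0 ∨ valueDrop F v b w = chainSign a b w) {j k : ℤ}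
    (hk : 0 ≤ k ∧ k ≤ j ∨ j ≤ k ∧ k ≤ 0) :
    valueCount F v (a + j * b) ≤ valueCount F v (a + k * b) := by
  have hstep (i : ℤ) : valueDrop F v b (a + i * b) =
      valueCount F v (a + i * b) - valueCount F v (a + (i + 1 : ℤ) * b) := by
    rw [valueDrop]
    congr 2
    push_cast
    ring
  rcases hk with ⟨hk0, hkj⟩ | ⟨hjk, hk0⟩
  · induction j, hkj using Int.leInduction with
    | base => rfl
    | succ i hi ih =>
      have hd := hdrop (a + i * b)
      rw [chainSign_of_nonneg (hk0.trans hi), hstep] at hd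
      omega
  · induction j, hjk using Int.leInductionDown with
    | base => rfl
    | pred i hi ih =>
      have hd := hdrop (a + (i - 1 : ℤ) * b)
      rw [h.chainSign_of_neg (by omega), hstep, sub_add_cancel] at hd
      omega

lemma two_mul_card_filter_chain {E : Type*} [AddCommGroup E] [Module ℝ E] {F : Finset E}
    {l : E →ₗ[ℝ] ℝ} (h : IntIndependent a b) (hneg : ∀ f ∈ F, -f ∈ F)
    (hchain : ∀ f ∈ F, ∃ j : ℤ, l f = a + j * b ∨ l f = -a + j * b) :
    2 * #{f ∈ F | ∃ j : ℤ, l f = a + j * b} = #F := by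
  have hnot : {f ∈ F | ¬∃ j : ℤ, l f = a + j * b} =
      {f ∈ F | ∃ j : ℤ, l f = a + j * b}.image Neg.neg := by
    ext f
    simp only [Finset.mem_image, Finset.mem_filter]
    constructor
    · rintro ⟨hf, hfa⟩
      obtain ⟨j, hj⟩ := hchain f hf
      have hj := hj.resolve_left fun hj => hfa ⟨j, hj⟩
      exact ⟨-f, ⟨hneg f hf, -j, by rw [map_neg, hj]; push_cast; ring⟩, neg_neg f⟩
    · rintro ⟨g, ⟨hg, j, hj⟩, rfl⟩
      refine ⟨hneg g hg, fun ⟨k, hk⟩ => h.add_ne_neg_add k (-j) ?_⟩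
      rw [← hk, map_neg, hj]
      push_cast
      ring
  rw [← F.card_filter_add_card_filter_not fun f => ∃ j : ℤ, l f = a + j * b, hnot,
    Finset.card_image_of_injective _ neg_injective, two_mul]

end IntIndependent

lemma exists_eq_Icc_of_between_mem (J : Finset ℤ) (h0 : 0 ∈ J)
    (hJ : ∀ j ∈ J, ∀ k, 0 ≤ k ∧ k ≤ j ∨ j ≤ k ∧ k ≤ 0 → k ∈ J) :
    ∃ p : ℤ, J = Finset.Icc p (p + #J - 1) := by
  have hne : J.Nonempty := ⟨0, h0⟩
  have hJ' : J = Finset.Icc (J.min' hne) (J.max' hne) := by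
    ext k
    refine ⟨fun hk => Finset.mem_Icc.2 ⟨J.min'_le k hk, J.le_max' k hk⟩, fun hk => ?_⟩
    rw [Finset.mem_Icc] at hk
    rcases le_total 0 k with hk0 | hk0
    · exact hJ _ (J.max'_mem hne) k (.inl ⟨hk0, hk.2⟩)
    · exact hJ _ (J.min'_mem hne) k (.inr ⟨hk.1, hk0⟩)
  refine ⟨J.min' hne, ?_⟩
  have hcard := congrArg Finset.card hJ'
  rw [Int.card_Icc] at hcard
  have hle := J.min'_le _ (J.max'_mem hne)
  rwa [show J.min' hne + #J - 1 = J.max' hne by omega]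

-- This is the equality case of `valueCount_add_le` with `a` attained once.
lemma exists_arithmetic_values {E : Type*} [AddCommGroup E] [Module ℝ E] {F : Finset E}
    {l : E →ₗ[ℝ] ℝ} {n : ℕ} (h : IntIndependent a b) (hneg : ∀ f ∈ F, -f ∈ F)
    (hcard : #F = 2 * n) (ha : valueCount F l a = 1)
    (hdrop : ∀ w, valueDrop F l b w = 0 ∨ valueDrop F l b w = chainSign a b w) :
    ∃ (p : ℤ) (f : Fin n → E), ∀ i, f i ∈ F ∧ l (f i) = a + (p + i : ℤ) * b := by
  let H := {f ∈ F | ∃ j : ℤ, l f = a + j * b}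
  have hH (f : E) (hf : f ∈ H) : ∃ j : ℤ, l f = a + j * b := (Finset.mem_filter.1 hf).2
  choose! idx hidx using hH
  have hcardH : #H = n := by
    have := h.two_mul_card_filter_chain hneg fun f hf => h.exists_mem_chain hdrop hf
    rw [hcard] at this
    exact Nat.eq_of_mul_eq_mul_left two_pos this
  have hcount_pos (j : ℤ) : 0 < valueCount F l (a + j * b) ↔ j ∈ H.image idx := by
    rw [Finset.mem_image]
    constructor
    · intro hj
      obtain ⟨f, hf⟩ := Finset.card_pos.1 (Nat.cast_pos.1 hj)
      obtain ⟨hfF, hfj⟩ := Finset.mem_filter.1 hf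
      have hfH : f ∈ H := Finset.mem_filter.2 ⟨hfF, j, hfj⟩
      exact ⟨f, hfH, h.chain_inj ((hidx f hfH).symm.trans hfj)⟩
    · rintro ⟨f, hf, rfl⟩
      exact hidx f hf ▸ valueCount_pos (Finset.mem_filter.1 hf).1
  have hcount_le (j : ℤ) : valueCount F l (a + j * b) ≤ 1 := by
    have hle := h.valueCount_le_of_between hdrop (j := j) (k := 0) (by omega)
    rwa [Int.cast_zero, zero_mul, add_zero, ha] at hle
  have hinj : Set.InjOn idx H := by
    intro f hf g hg hfg
    refine Finset.card_le_one.1 (Nat.cast_le_one.1 (hcount_le (idx f))) f ?_ g ?_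
    · exact Finset.mem_filter.2 ⟨(Finset.mem_filter.1 hf).1, hidx f hf⟩
    · exact Finset.mem_filter.2 ⟨(Finset.mem_filter.1 hg).1, hfg ▸ hidx g hg⟩
  obtain ⟨p, hp⟩ := exists_eq_Icc_of_between_mem (H.image idx) ((hcount_pos 0).1 (by simp [ha]))
    fun j hj k hk => (hcount_pos k).1
      (((hcount_pos j).2 hj).trans_le (h.valueCount_le_of_between hdrop hk))
  rw [Finset.card_image_of_injOn hinj, hcardH] at hp
  have hmem (i : Fin n) : ∃ f ∈ H, idx f = p + i :=
    Finset.mem_image.1 (hp ▸ Finset.mem_Icc.2 ⟨by omega, by omega⟩)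
  choose f hfH hf using hmem
  exact ⟨p, f, fun i => ⟨(Finset.mem_filter.1 (hfH i)).1, hf i ▸ hidx _ (hfH i)⟩⟩

end Chains

section Frames

open Module Submodule
open scoped Finset

variable {E : Type*} [AddCommGroup E] [Module ℝ E] {B : E →ₗ[ℝ] E →ₗ[ℝ] ℝ} {Φ F : Finset E}
  {l : E →ₗ[ℝ] ℝ} {a b : ℝ}

/-- A signed orthogonal frame: vectors `±f₁, …, ±fₙ` of norm `2` with the `fᵢ` pairwise orthogonal
for the symmetric form `B`. -/
structure IsSignedFrame (B : E →ₗ[ℝ] E →ₗ[ℝ] ℝ) (F : Finset E) : Prop where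
  norm_eq : ∀ f ∈ F, B f f = 2
  neg_mem : ∀ f ∈ F, -f ∈ F
  orthogonal : ∀ f ∈ F, ∀ g ∈ F, g = f ∨ g = -f ∨ B f g = 0

/-- A signed frame of short roots whose differences of orthogonal members are exactly the long
roots, as in type `B` and type `F₄`. -/
structure IsShortFrame (B : E →ₗ[ℝ] E →ₗ[ℝ] ℝ) (Φ F : Finset E) : Prop
    extends IsSignedFrame B F where
  subset : F ⊆ Φ
  sub_mem : ∀ f ∈ F, ∀ g ∈ F, B f g = 0 → f - g ∈ Φ
  exists_eq_sub : ∀ β ∈ Φ, B β β = 4 → ∃ f ∈ F, ∃ g ∈ F, B f g = 0 ∧ β = f - g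

namespace IsSignedFrame

lemma ne_neg (hF : IsSignedFrame B F) {f : E} (hf : f ∈ F) : f ≠ -f := fun h0 => by
  have h1 := congrArg (B f) h0
  rw [map_neg] at h1
  linarith [hF.norm_eq f hf]

lemma exists_orthogonal_half (hF : IsSignedFrame B F) :
    ∃ H ⊆ F, (H : Set E).Pairwise (fun f g => B f g = 0) ∧ F = H ∪ H.image Neg.neg ∧
      #F = 2 * #H := by
  obtain ⟨H, hH⟩ := Finset.exists_maximal
    (s := F.powerset.filter fun H : Finset E => (H : Set E).Pairwise fun f g => B f g = 0)
    ⟨∅, by simp⟩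
  obtain ⟨hHF, hortho⟩ := Finset.mem_filter.1 hH.1
  rw [Finset.mem_powerset] at hHF
  have hcover : F = H ∪ H.image Neg.neg := by
    ext f
    simp only [Finset.mem_union, Finset.mem_image]
    refine ⟨fun hf => ?_, ?_⟩
    · by_contra! hfH
      have hpair : ((insert f H : Finset E) : Set E).Pairwise fun f g => B f g = 0 := by
        rw [Finset.coe_insert, Set.pairwise_insert]
        refine ⟨hortho, fun g hg hne => ?_⟩
        have := hF.orthogonal f hf g (hHF hg)
        have := hF.orthogonal g (hHF hg) f hf
        have := hfH.2 g hg
        grind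
      refine hfH.1 (hH.2 (Finset.mem_filter.2 ⟨?_, hpair⟩) (Finset.subset_insert f H)
        (Finset.mem_insert_self f H))
      exact Finset.mem_powerset.2 (Finset.insert_subset hf hHF)
    · rintro (hf | ⟨g, hg, rfl⟩)
      exacts [hHF hf, hF.neg_mem g (hHF hg)]
  have hdisj : Disjoint H (H.image Neg.neg) := by
    simp only [Finset.disjoint_right, Finset.forall_mem_image]
    intro f hf hf'
    have h0 : B f (-f) = 0 := hortho hf hf' (hF.ne_neg (hHF hf))
    rw [map_neg, hF.norm_eq f (hHF hf)] at h0
    norm_num at h0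
  refine ⟨H, hHF, hortho, hcover, ?_⟩
  rw [congrArg Finset.card hcover, Finset.card_union_of_disjoint hdisj,
    Finset.card_image_of_injective _ neg_injective, two_mul]

lemma two_mul_finrank_span (hF : IsSignedFrame B F) : 2 * finrank ℝ (span ℝ (F : Set E)) = #F := by
  obtain ⟨H, hHF, hortho, hcover, hcard⟩ := hF.exists_orthogonal_half
  have hli : LinearIndependent ℝ ((↑) : H → E) := by
    refine LinearMap.linearIndependent_of_isOrthoᵢ (B := B) (fun f g hfg => ?_) fun f hf => ?_
    · exact hortho f.2 g.2 (Subtype.coe_injective.ne hfg)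
    · have h2 := hF.norm_eq f (hHF f.2)
      linarith [show B (f : E) f = 0 from hf]
  have hspan : span ℝ (F : Set E) = span ℝ (H : Set E) := by
    refine le_antisymm (span_le.2 fun f hf => ?_) (span_mono hHF)
    rw [Finset.mem_coe, hcover, Finset.mem_union, Finset.mem_image] at hf
    rcases hf with hf | ⟨g, hg, rfl⟩
    exacts [subset_span hf, Submodule.neg_mem _ (subset_span hg)]
  rw [hspan, finrank_span_finset_eq_card hli, hcard]

lemma sub_eq_sub_iff (hF : IsSignedFrame B F) {f g f' g' : E} (hf : f ∈ F)
    (hf' : f' ∈ F) (hg' : g' ∈ F) (hfg : B f g = 0) :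
    f' - g' = f - g ↔ f' = f ∧ g' = g ∨ f' = -g ∧ g' = -f := by
  refine ⟨fun heq => ?_, ?_⟩
  · have hB : B f f' - B f g' = 2 := by
      rw [← map_sub, heq, map_sub, hfg, hF.norm_eq f hf, sub_zero]
    have hff := hF.norm_eq f hf
    have hg'B : B f g' = 2 ∨ g' = -f ∧ B f g' = -2 ∨ B f g' = 0 := by
      rcases hF.orthogonal f hf g' hg' with rfl | rfl | hfg'
      exacts [.inl hff, .inr (.inl ⟨rfl, by rw [map_neg, hff]⟩), .inr (.inr hfg')]
    rcases hF.orthogonal f hf f' hf' with rfl | rfl | hff'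
    · exact .inl ⟨rfl, sub_right_injective heq⟩
    · rw [map_neg, hff] at hB
      grind
    · have hg'f : g' = -f := by grind
      refine .inr ⟨?_, hg'f⟩
      rw [hg'f, sub_neg_eq_add] at heq
      exact add_right_cancel (heq.trans (by abel))
  · rintro (⟨rfl, rfl⟩ | ⟨rfl, rfl⟩)
    · rfl
    · abel

end IsSignedFrame

lemma IsShortFrame.card_filter_orthogonal_sub_eq (hF : IsShortFrame B Φ F)
    (hsymm : ∀ x y, B x y = B y x) (c : ℝ) :
    #{p ∈ F ×ˢ F | B p.1 p.2 = 0 ∧ l p.1 - l p.2 = c} = 2 * #{α ∈ Φ | B α α = 4 ∧ l α = c} := by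
  rw [mul_comm, ← smul_eq_mul, ← Finset.sum_const, Finset.card_eq_sum_card_fiberwise
    (f := fun p : E × E => p.1 - p.2) (t := {α ∈ Φ | B α α = 4 ∧ l α = c})]
  · refine Finset.sum_congr rfl fun β hβ => ?_
    obtain ⟨hβΦ, hβ4, hlβ⟩ := Finset.mem_filter.1 hβ
    obtain ⟨f, hf, g, hg, hfg, rfl⟩ := hF.exists_eq_sub β hβΦ hβ4
    have hgf : B g f = 0 := (hsymm g f).trans hfg
    have hne : (f, g) ≠ (-g, -f) := fun h0 => by
      have h2 := hF.norm_eq g hg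
      rw [(Prod.mk.inj h0).1, map_neg, LinearMap.neg_apply, h2] at hfg
      norm_num at hfg
    rw [← Finset.card_pair hne]
    congr 1
    ext ⟨f', g'⟩
    simp only [Finset.mem_filter, Finset.mem_product, Finset.mem_insert, Finset.mem_singleton,
      Prod.mk.injEq]
    constructor
    · rintro ⟨⟨⟨hf', hg'⟩, -⟩, heq⟩
      exact (hF.sub_eq_sub_iff hf hf' hg' hfg).1 heq
    · rintro (⟨rfl, rfl⟩ | ⟨rfl, rfl⟩)
      · exact ⟨⟨⟨hf, hg⟩, hfg, by rwa [← map_sub]⟩, rfl⟩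
      · refine ⟨⟨⟨hF.neg_mem g hg, hF.neg_mem f hf⟩, by simp [hgf], ?_⟩, by abel⟩
        rw [← hlβ, ← map_sub]
        congr 1
        abel
  · rintro ⟨f, g⟩ hp
    simp only [Finset.coe_filter, Finset.mem_product, Set.mem_ofPred_eq] at hp ⊢
    obtain ⟨⟨hf, hg⟩, hfg, hc⟩ := hp
    refine ⟨hF.sub_mem f hf g hg hfg, ?_, by rw [map_sub, hc]⟩
    simp only [map_sub, LinearMap.sub_apply, hsymm g f, hfg, hF.norm_eq f hf, hF.norm_eq g hg]
    norm_num

lemma IsShortFrame.card_filter_sub_eq (hF : IsShortFrame B Φ F) (hsymm : ∀ x y, B x y = B y x)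
    (c : ℝ) :
    #{p ∈ F ×ˢ F | l p.1 - l p.2 = c} =
      2 * #{α ∈ Φ | B α α = 4 ∧ l α = c} + #{_f ∈ F | 0 = c} + #{f ∈ F | l f + l f = c} := by
  have hsplit : {p ∈ F ×ˢ F | l p.1 - l p.2 = c} =
      {p ∈ F ×ˢ F | B p.1 p.2 = 0 ∧ l p.1 - l p.2 = c} ∪
        {_f ∈ F | 0 = c}.image (fun f => (f, f)) ∪
        {f ∈ F | l f + l f = c}.image (fun f => (f, -f)) := by
    ext ⟨f, g⟩
    simp only [Finset.mem_filter, Finset.mem_product, Finset.mem_union, Finset.mem_image,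
      Prod.mk.injEq]
    constructor
    · rintro ⟨⟨hf, hg⟩, hc⟩
      rcases hF.orthogonal f hf g hg with rfl | rfl | hfg
      · exact .inl (.inr ⟨g, ⟨hg, by rw [← hc, sub_self]⟩, rfl, rfl⟩)
      · exact .inr ⟨f, ⟨hf, by rw [← hc, map_neg, sub_neg_eq_add]⟩, rfl, rfl⟩
      · exact .inl (.inl ⟨⟨hf, hg⟩, hfg, hc⟩)
    · rintro ((⟨hfg, -, hc⟩ | ⟨f, ⟨hf, hc⟩, rfl, rfl⟩) | ⟨f, ⟨hf, hc⟩, rfl, rfl⟩)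
      · exact ⟨hfg, hc⟩
      · exact ⟨⟨hf, hf⟩, by rw [← hc, sub_self]⟩
      · exact ⟨⟨hf, hF.neg_mem f hf⟩, by rw [← hc, map_neg, sub_neg_eq_add]⟩
  rw [hsplit, Finset.card_union_of_disjoint, Finset.card_union_of_disjoint,
    hF.card_filter_orthogonal_sub_eq hsymm,
    Finset.card_image_of_injective _ fun _ _ h => (Prod.mk.inj h).1,
    Finset.card_image_of_injective _ fun _ _ h => (Prod.mk.inj h).1]
  · simp only [Finset.disjoint_right, Finset.forall_mem_image, Finset.mem_filter]
    rintro f ⟨hf, -⟩ ⟨-, h0, -⟩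
    exact two_ne_zero ((hF.norm_eq f hf).symm.trans h0)
  · refine Finset.disjoint_right.2 fun p hp hp' => ?_
    obtain ⟨f, hf, rfl⟩ := Finset.mem_image.1 hp
    have hfF := (Finset.mem_filter.1 hf).1
    rcases Finset.mem_union.1 hp' with hfg | hfg
    · have h0 := (Finset.mem_filter.1 hfg).2.1
      rw [map_neg, hF.norm_eq f hfF] at h0
      norm_num at h0
    · obtain ⟨g, -, hg⟩ := Finset.mem_image.1 hfg
      obtain ⟨rfl, hg⟩ := Prod.mk.inj hg
      exact hF.ne_neg hfF hg

lemma valueCount_neg (hneg : ∀ f ∈ F, -f ∈ F) (w : ℝ) :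
    valueCount F l (-w) = valueCount F l w := by
  rw [valueCount, valueCount, Nat.cast_inj]
  refine Finset.card_nbij' Neg.neg Neg.neg ?_ ?_ (fun _ _ => neg_neg _) fun _ _ => neg_neg _
  all_goals
    intro f hf
    simp only [Finset.coe_filter, Set.mem_ofPred_eq, map_neg] at hf ⊢
    exact ⟨hneg f hf.1, by linarith [hf.2]⟩

/-- The number of roots of norm `n` on which `l` takes the value `c`. -/
def normCount (B : E →ₗ[ℝ] E →ₗ[ℝ] ℝ) (Φ : Finset E) (l : E →ₗ[ℝ] ℝ) (n c : ℝ) : ℤ :=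
  #{α ∈ Φ | B α α = n ∧ l α = c}

lemma IsShortFrame.card_pair_eq_zero_sub (hF : IsShortFrame B Φ F)
    (hsymm : ∀ x y, B x y = B y x) (hb : b ≠ 0) :
    (#{p ∈ F ×ˢ F | l p.1 - l p.2 = 0} : ℤ) - #{p ∈ F ×ˢ F | l p.1 - l p.2 = b} =
      2 * (normCount B Φ l 4 0 - normCount B Φ l 4 b) + #F +
        valueCount F l 0 - valueCount F l (b / 2) := by
  have hzero : {f ∈ F | l f + l f = 0} = {f ∈ F | l f = 0} :=
    Finset.filter_congr fun f _ => by rw [← two_mul, mul_eq_zero_iff_left two_ne_zero]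
  have hhalf : {f ∈ F | l f + l f = b} = {f ∈ F | l f = b / 2} :=
    Finset.filter_congr fun f _ => by rw [eq_div_iff two_ne_zero, mul_two]
  rw [hF.card_filter_sub_eq hsymm, hF.card_filter_sub_eq hsymm, hzero, hhalf,
    Finset.filter_true_of_mem fun _ _ => rfl, Finset.filter_false_of_mem fun _ _ => hb.symm]
  simp only [valueCount, normCount, Finset.card_empty]
  push_cast
  ring

-- The total variation of the value counts of `F` along the chains `±a + ℤ b` bounds
-- `valueCount F l a`; differences of frame vectors translate it into long roots.
theorem IsShortFrame.valueCount_sub_le (hF : IsShortFrame B Φ F) (hsymm : ∀ x y, B x y = B y x)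
    (h : IntIndependent a b) :
    valueCount F l a - valueCount F l 0 ≤
      normCount B Φ l 4 0 + finrank ℝ (span ℝ (F : Set E)) - normCount B Φ l 4 b := by
  have hle := h.valueCount_add_le (F := F) (v := l)
  have hrank := hF.two_mul_finrank_span
  have h0 : 0 ≤ valueCount F l 0 := Nat.cast_nonneg _
  have hb2 : 0 ≤ valueCount F l (b / 2) := Nat.cast_nonneg _
  rw [hF.card_pair_eq_zero_sub hsymm h.ne_zero_right, valueCount_neg hF.neg_mem] at hle
  omega

end Frames

section LocalFrames

open Module Submodule
open scoped Finset

variable {E : Type*} [AddCommGroup E] [Module ℝ E] {B : E →ₗ[ℝ] E →ₗ[ℝ] ℝ} {Φ : Finset E}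
  {e f s t : E}

/-- The frame of short roots containing the short root `e`: besides `±e`, the short roots
orthogonal to `e` whose difference with `e` is a (long) root. -/
def shortFrame (B : E →ₗ[ℝ] E →ₗ[ℝ] ℝ) (Φ : Finset E) (e : E) : Finset E :=
  {f ∈ Φ | B f f = 2 ∧ (f = e ∨ f = -e ∨ B e f = 0 ∧ e - f ∈ Φ)}

lemma mem_shortFrame : f ∈ shortFrame B Φ e ↔
    f ∈ Φ ∧ B f f = 2 ∧ (f = e ∨ f = -e ∨ B e f = 0 ∧ e - f ∈ Φ) :=
  Finset.mem_filter

lemma self_mem_shortFrame (he : e ∈ Φ) (he2 : B e e = 2) : e ∈ shortFrame B Φ e :=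
  mem_shortFrame.2 ⟨he, he2, .inl rfl⟩

lemma IsEuclideanRootSystem.add_mem_of_sub_mem (h : IsEuclideanRootSystem B Φ) (hf : f ∈ Φ)
    (hef : B e f = 0) (hsub : e - f ∈ Φ) : e + f ∈ Φ := by
  have hf0 := (h.norm_pos hf).ne'
  have hcoeff : 2 * B f (e - f) / B f f = -2 := by
    rw [map_sub, h.symm f e, hef]
    field_simp
    ring
  have hrefl := h.reflection_mem f hf _ hsub
  rw [formReflection, hcoeff] at hrefl
  convert hrefl using 1
  module

namespace IsTwoLengthRootSystem

lemma apply_short_long_two (h : IsTwoLengthRootSystem B Φ 2) (hs : s ∈ Φ) (ht : t ∈ Φ)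
    (hs2 : B s s = 2) (ht4 : B t t = 4) : B s t = 0 ∨ B s t = 2 ∨ B s t = -2 :=
  h.apply_short_long one_lt_two hs ht hs2 (by linarith)

lemma apply_self_sub (h : IsTwoLengthRootSystem B Φ 2) (he2 : B e e = 2) (hf2 : B f f = 2)
    (hef : B e f = 0) : B (e - f) (e - f) = 4 := by
  simp only [map_sub, LinearMap.sub_apply, h.symm f e, hef, he2, hf2]
  norm_num

lemma isSignedFrame_shortFrame (h : IsTwoLengthRootSystem B Φ 2) (he : e ∈ Φ) (he2 : B e e = 2) :
    IsSignedFrame B (shortFrame B Φ e) where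
  norm_eq f hf := (mem_shortFrame.1 hf).2.1
  neg_mem f hf := by
    obtain ⟨hfΦ, hf2, hfe⟩ := mem_shortFrame.1 hf
    refine mem_shortFrame.2 ⟨h.neg_mem hfΦ, by simpa using hf2, ?_⟩
    rcases hfe with rfl | rfl | ⟨hef, hsub⟩
    · exact .inr (.inl rfl)
    · exact .inl (neg_neg e)
    · refine .inr (.inr ⟨by rw [map_neg, hef, neg_zero], ?_⟩)
      simpa using h.add_mem_of_sub_mem hfΦ hef hsub
  orthogonal f hf g hg := by
    obtain ⟨hfΦ, hf2, hfe⟩ := mem_shortFrame.1 hf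
    obtain ⟨hgΦ, hg2, hge⟩ := mem_shortFrame.1 hg
    by_contra! hne
    have hfg := h.apply_short_short hfΦ hgΦ hf2 hg2 hne.1 hne.2.1
    rcases hfe with rfl | rfl | ⟨hef, -⟩
    · grind
    · grind [LinearMap.neg_apply]
    · rcases hge with rfl | rfl | ⟨heg, hsub⟩
      · exact hne.2.2 ((h.symm f g).trans hef)
      · exact hne.2.2 (by rw [map_neg, h.symm, hef, neg_zero])
      · have := h.apply_short_long_two hfΦ hsub hf2 (h.apply_self_sub he2 hg2 heg)
        rw [map_sub, h.symm f e, hef] at this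
        grind

lemma sub_mem_of_mem_shortFrame (h : IsTwoLengthRootSystem B Φ 2) (he2 : B e e = 2)
    {f g : E} (hf : f ∈ shortFrame B Φ e) (hg : g ∈ shortFrame B Φ e) (hfg : B f g = 0) :
    f - g ∈ Φ := by
  obtain ⟨hfΦ, hf2, hfe⟩ := mem_shortFrame.1 hf
  obtain ⟨hgΦ, hg2, hge⟩ := mem_shortFrame.1 hg
  have hne {x : E} (hx : B x x = 2) : B x x ≠ 0 := hx ▸ two_ne_zero
  rcases hfe with rfl | rfl | ⟨hef, hesub⟩
  · rcases hge with rfl | rfl | ⟨-, hsub⟩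
    exacts [absurd hfg (hne hg2), absurd hfg (by simpa using hne hf2), hsub]
  · rcases hge with rfl | rfl | ⟨heg, hsub⟩
    · exact absurd hfg (by simpa using hne hg2)
    · exact absurd hfg (hne hf2)
    · simpa [sub_eq_add_neg, add_comm] using h.neg_mem (h.add_mem_of_sub_mem hgΦ heg hsub)
  · rcases hge with rfl | rfl | ⟨heg, hsub⟩
    · simpa using h.neg_mem hesub
    · simpa [add_comm] using h.add_mem_of_sub_mem hfΦ hef hesub
    · have hcoeff : 2 * B (e - f) (e - g) / B (e - f) (e - f) = 1 := by
        rw [h.apply_self_sub he2 hf2 hef]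
        simp only [map_sub, LinearMap.sub_apply, he2, heg, h.symm f e, hef, hfg]
        norm_num
      have hrefl := h.reflection_mem _ hesub _ hsub
      rwa [formReflection, hcoeff, one_smul, sub_sub_sub_cancel_left] at hrefl

lemma shortFrame_subset_shortFrame (h : IsTwoLengthRootSystem B Φ 2) (he : e ∈ Φ)
    (he2 : B e e = 2) (hf : f ∈ shortFrame B Φ e) : shortFrame B Φ e ⊆ shortFrame B Φ f := by
  intro g hg
  obtain ⟨hgΦ, hg2, -⟩ := mem_shortFrame.1 hg
  refine mem_shortFrame.2 ⟨hgΦ, hg2, ?_⟩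
  rcases (h.isSignedFrame_shortFrame he he2).orthogonal f hf g hg with hgf | hgf | hfg
  · exact .inl hgf
  · exact .inr (.inl hgf)
  · exact .inr (.inr ⟨hfg, h.sub_mem_of_mem_shortFrame he2 hf hg hfg⟩)

lemma shortFrame_eq_of_mem (h : IsTwoLengthRootSystem B Φ 2) (he : e ∈ Φ) (he2 : B e e = 2)
    (hf : f ∈ shortFrame B Φ e) : shortFrame B Φ f = shortFrame B Φ e := by
  have hef := h.shortFrame_subset_shortFrame he he2 hf
  obtain ⟨hfΦ, hf2, -⟩ := mem_shortFrame.1 hf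
  exact (h.shortFrame_subset_shortFrame hfΦ hf2 (hef (self_mem_shortFrame he he2))).antisymm hef

lemma sub_mem_shortFrame (h : IsTwoLengthRootSystem B Φ 2) (he : e ∈ Φ) (he2 : B e e = 2)
    (hf : f ∈ shortFrame B Φ e) (ht : t ∈ Φ) (ht4 : B t t = 4) (hft : B f t = 2) :
    f - t ∈ shortFrame B Φ e := by
  obtain ⟨hfΦ, hf2, -⟩ := mem_shortFrame.1 hf
  have hrefl := h.reflection_mem t ht f hfΦ
  have hnorm := h.norm_formReflection ht f
  have hsub : formReflection B t f = f - t := by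
    rw [formReflection, h.symm t f, hft, ht4]
    norm_num
  rw [hsub] at hrefl hnorm
  rw [← h.shortFrame_eq_of_mem he he2 hf]
  refine mem_shortFrame.2 ⟨hrefl, hnorm.trans hf2, .inr (.inr ⟨?_, by rwa [sub_sub_cancel]⟩)⟩
  rw [map_sub, hf2, hft, sub_self]

lemma exists_eq_sub_of_apply_ne_zero (h : IsTwoLengthRootSystem B Φ 2) (he : e ∈ Φ)
    (he2 : B e e = 2) (hf : f ∈ shortFrame B Φ e) (ht : t ∈ Φ) (ht4 : B t t = 4)
    (hft : B f t ≠ 0) :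
    ∃ f ∈ shortFrame B Φ e, ∃ g ∈ shortFrame B Φ e, B f g = 0 ∧ t = f - g := by
  obtain ⟨f, hf, hft⟩ : ∃ f ∈ shortFrame B Φ e, B f t = 2 := by
    obtain ⟨hfΦ, hf2, -⟩ := mem_shortFrame.1 hf
    rcases (h.apply_short_long_two hfΦ ht hf2 ht4).resolve_left hft with hft | hft
    · exact ⟨f, hf, hft⟩
    · exact ⟨-f, (h.isSignedFrame_shortFrame he he2).neg_mem f hf, by simp [hft]⟩
  refine ⟨f, hf, f - t, h.sub_mem_shortFrame he he2 hf ht ht4 hft, ?_, by abel⟩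
  rw [map_sub, (mem_shortFrame.1 hf).2.1, hft, sub_self]

lemma isShortFrame_shortFrame (h : IsTwoLengthRootSystem B Φ 2) (he : e ∈ Φ) (he2 : B e e = 2)
    (hcover : ∀ t ∈ Φ, B t t = 4 → ∃ f ∈ shortFrame B Φ e, B f t ≠ 0) :
    IsShortFrame B Φ (shortFrame B Φ e) where
  toIsSignedFrame := h.isSignedFrame_shortFrame he he2
  subset := Finset.filter_subset _ _
  sub_mem _ hf _ hg := h.sub_mem_of_mem_shortFrame he2 hf hg
  exists_eq_sub t ht ht4 :=
    let ⟨_, hf, hft⟩ := hcover t ht ht4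
    h.exists_eq_sub_of_apply_ne_zero he he2 hf ht ht4 hft

lemma apply_eq_one_or_of_notMem_shortFrame (h : IsTwoLengthRootSystem B Φ 2) (he : e ∈ Φ)
    (he2 : B e e = 2) (hs : s ∈ Φ) (hs2 : B s s = 2) (hse : s ∉ shortFrame B Φ e)
    (hf : f ∈ shortFrame B Φ e) (hsf : B s f ≠ 0) :
    ∀ g ∈ shortFrame B Φ e, B s g = 1 ∨ B s g = -1 := by
  have hF := h.isSignedFrame_shortFrame he he2
  have happly (g : E) (hg : g ∈ shortFrame B Φ e) : B s g = 0 ∨ B s g = 1 ∨ B s g = -1 := by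
    obtain ⟨hgΦ, hg2, -⟩ := mem_shortFrame.1 hg
    refine h.apply_short_short hs hgΦ hs2 hg2 (fun hgs => hse (hgs ▸ hg)) fun hgs => hse ?_
    simpa [hgs] using hF.neg_mem g hg
  intro g hg
  have hf1 := happly f hf
  have hg1 := happly g hg
  rcases hF.orthogonal f hf g hg with rfl | rfl | hfg
  · exact hf1.resolve_left hsf
  · grind
  · obtain ⟨-, hf2, -⟩ := mem_shortFrame.1 hf
    obtain ⟨-, hg2, -⟩ := mem_shortFrame.1 hg
    have := h.apply_short_long_two hs (h.sub_mem_of_mem_shortFrame he2 hf hg hfg) hs2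
      (h.apply_self_sub hf2 hg2 hfg)
    rw [map_sub] at this
    grind

end IsTwoLengthRootSystem

end LocalFrames

section FrameSize

open Module Submodule
open scoped Finset

variable {E : Type*} [AddCommGroup E] [Module ℝ E] {B : E →ₗ[ℝ] E →ₗ[ℝ] ℝ} {Φ F : Finset E}
  {e f s : E} {n : ℕ}

namespace IsSignedFrame

lemma exists_orthogonal_family (hF : IsSignedFrame B F) (hcard : #F = 2 * n) :
    ∃ u : Fin n → E, (∀ i, u i ∈ F) ∧ Pairwise fun i j => B (u i) (u j) = 0 := by
  obtain ⟨H, hHF, hortho, -, hH⟩ := hF.exists_orthogonal_half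
  let enum := H.equivFinOfCardEq (show #H = n by omega)
  refine ⟨fun i => enum.symm i, fun i => hHF (enum.symm i).2, fun i j hij => ?_⟩
  exact hortho (enum.symm i).2 (enum.symm j).2
    (Subtype.coe_injective.ne (enum.symm.injective.ne hij))

lemma linearIndependent (hF : IsSignedFrame B F) {u : Fin n → E} (hu : ∀ i, u i ∈ F)
    (hortho : Pairwise fun i j => B (u i) (u j) = 0) : LinearIndependent ℝ u := by
  refine LinearMap.linearIndependent_of_isOrthoᵢ (B := B) (fun i j hij => hortho hij) fun i hi => ?_
  have h2 := hF.norm_eq _ (hu i)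
  linarith [show B (u i) (u i) = 0 from hi]

lemma two_mul_le_card (hF : IsSignedFrame B F) {u : Fin n → E} (hu : ∀ i, u i ∈ F)
    (hortho : Pairwise fun i j => B (u i) (u j) = 0) : 2 * n ≤ #F := by
  rw [← hF.two_mul_finrank_span, ← Fintype.card_fin n,
    ← finrank_span_eq_card (hF.linearIndependent hu hortho)]
  gcongr
  exact finrank_mono (span_mono (Set.range_subset_iff.2 hu))

end IsSignedFrame

section Bessel

variable {u : Fin n → E}

lemma apply_residual (hsymm : ∀ x y, B x y = B y x) (hu : ∀ i, B (u i) (u i) = 2)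
    (hortho : Pairwise fun i j => B (u i) (u j) = 0) (x : E) :
    B ((2 : ℝ) • x - ∑ i, B x (u i) • u i) ((2 : ℝ) • x - ∑ i, B x (u i) • u i) =
      4 * B x x - 2 * ∑ i, B x (u i) ^ 2 := by
  have horth (j : Fin n) : B ((2 : ℝ) • x - ∑ i, B x (u i) • u i) (u j) = 0 := by
    simp only [map_sub, map_smul, map_sum, LinearMap.sub_apply, LinearMap.smul_apply,
      LinearMap.sum_apply, smul_eq_mul]
    rw [Finset.sum_eq_single j (fun i _ hij => by rw [hortho hij, mul_zero]) (by simp), hu]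
    ring
  have hsum : B ((2 : ℝ) • x - ∑ i, B x (u i) • u i) (∑ i, B x (u i) • u i) = 0 := by
    simp only [map_sum, map_smul, horth, smul_zero, Finset.sum_const_zero]
  rw [map_sub, hsum]
  simp only [map_sub, map_smul, map_sum, LinearMap.sub_apply, LinearMap.smul_apply,
    LinearMap.sum_apply, smul_eq_mul, hsymm _ x, pow_two]
  ring

lemma IsEuclideanRootSystem.sum_apply_sq_le (h : IsEuclideanRootSystem B Φ)
    (hu : ∀ i, B (u i) (u i) = 2) (hortho : Pairwise fun i j => B (u i) (u j) = 0) (x : E) :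
    ∑ i, B x (u i) ^ 2 ≤ 2 * B x x := by
  have hres := h.nonneg ((2 : ℝ) • x - ∑ i, B x (u i) • u i)
  rw [apply_residual h.symm hu hortho] at hres
  linarith

lemma IsEuclideanRootSystem.two_smul_eq_sum (h : IsEuclideanRootSystem B Φ)
    (hu : ∀ i, B (u i) (u i) = 2) (hortho : Pairwise fun i j => B (u i) (u j) = 0) {x : E}
    (hx : ∑ i, B x (u i) ^ 2 = 2 * B x x) : (2 : ℝ) • x = ∑ i, B x (u i) • u i := by
  by_contra hne
  have hpos := h.pos _ (sub_ne_zero.2 hne)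
  rw [apply_residual h.symm hu hortho] at hpos
  linarith

end Bessel

namespace IsTwoLengthRootSystem

lemma card_shortFrame_le_eight (h : IsTwoLengthRootSystem B Φ 2) (he : e ∈ Φ) (he2 : B e e = 2)
    (hs2 : B s s = 2) (hsF : ∀ f ∈ shortFrame B Φ e, B s f = 1 ∨ B s f = -1) :
    #(shortFrame B Φ e) ≤ 8 := by
  have hF := h.isSignedFrame_shortFrame he he2
  obtain ⟨H, -, -, -, hcard⟩ := hF.exists_orthogonal_half
  obtain ⟨u, hu, hortho⟩ := hF.exists_orthogonal_family hcard
  have hle := h.sum_apply_sq_le (fun i => hF.norm_eq _ (hu i)) hortho s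
  have hone (i : Fin #H) : B s (u i) ^ 2 = 1 := by rcases hsF _ (hu i) with h1 | h1 <;> simp [h1]
  simp only [hone, hs2, Finset.sum_const, Finset.card_univ, Fintype.card_fin, nsmul_one] at hle
  have : #H ≤ 2 * 2 := by exact_mod_cast hle
  omega

lemma two_smul_eq_sum_of_apply (h : IsTwoLengthRootSystem B Φ 2) {u : Fin 4 → E}
    (hu : ∀ i, B (u i) (u i) = 2) (hortho : Pairwise fun i j => B (u i) (u j) = 0)
    (hs2 : B s s = 2) (hsu : ∀ i, B s (u i) = 1 ∨ B s (u i) = -1) :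
    (2 : ℝ) • s = ∑ i, B s (u i) • u i := by
  refine h.two_smul_eq_sum hu hortho ?_
  have hone (i : Fin 4) : B s (u i) ^ 2 = 1 := by rcases hsu i with h1 | h1 <;> simp [h1]
  simp only [hone, hs2, Finset.sum_const, Finset.card_univ, Fintype.card_fin, nsmul_one]
  norm_num

lemma exists_three_apply_eq_one (h : IsTwoLengthRootSystem B Φ 2) (he : e ∈ Φ) (he2 : B e e = 2)
    (hsF : ∀ f ∈ shortFrame B Φ e, B s f = 1 ∨ B s f = -1) (hcard : 6 ≤ #(shortFrame B Φ e)) :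
    ∃ u : Fin 3 → E, (∀ i, u i ∈ shortFrame B Φ e) ∧ (∀ i, B s (u i) = 1) ∧
      Pairwise fun i j => B (u i) (u j) = 0 := by
  have hF := h.isSignedFrame_shortFrame he he2
  obtain ⟨H, -, -, -, hH⟩ := hF.exists_orthogonal_half
  obtain ⟨u, hu, hortho⟩ := hF.exists_orthogonal_family hH
  have hsq (i : Fin #H) : B s (u i) * B s (u i) = 1 := by
    rcases hsF _ (hu i) with h1 | h1 <;> simp [h1]
  let incl : Fin 3 → Fin #H := Fin.castLE (by omega)
  refine ⟨fun i => B s (u (incl i)) • u (incl i), fun i => ?_, fun i => ?_, fun i j hij => ?_⟩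
  · rcases hsF _ (hu (incl i)) with h1 | h1
    · simpa [h1] using hu (incl i)
    · simpa [h1] using hF.neg_mem _ (hu (incl i))
  · rw [map_smul, smul_eq_mul, hsq]
  · have h0 : B (u (incl i)) (u (incl j)) = 0 := hortho ((Fin.castLE_injective (by omega)).ne hij)
    simp only [map_smul, LinearMap.smul_apply, h0, smul_zero]

lemma sub_sub_mem_shortFrame (h : IsTwoLengthRootSystem B Φ 2) (hs : s ∈ Φ) (hs2 : B s s = 2)
    {f g : E} (hfg : f + g ∈ Φ) (hf2 : B f f = 2) (hg2 : B g g = 2) (h0 : B f g = 0)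
    (hsf : B s f = 1) (hsg : B s g = 1) : s - f - g ∈ shortFrame B Φ s := by
  have hnorm : B (f + g) (f + g) = 4 := by
    simp only [map_add, LinearMap.add_apply, h.symm g f, h0, hf2, hg2]
    norm_num
  rw [sub_sub]
  refine h.sub_mem_shortFrame hs hs2 (self_mem_shortFrame hs hs2) hfg hnorm ?_
  rw [map_add, hsf, hsg]
  norm_num

-- If `f`, `g`, `k` are orthogonal in the frame of `e` and pair to `1` with `s`, then the frame of
-- `s` contains `±s`, `±(s - f - g)`, `±(s - f - k)` and `±(s - g - k)`.
lemma eight_le_card_shortFrame (h : IsTwoLengthRootSystem B Φ 2) (he : e ∈ Φ) (he2 : B e e = 2)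
    (hs : s ∈ Φ) (hs2 : B s s = 2) (hsF : ∀ f ∈ shortFrame B Φ e, B s f = 1 ∨ B s f = -1)
    (hcard : 6 ≤ #(shortFrame B Φ e)) : 8 ≤ #(shortFrame B Φ s) := by
  have hF := h.isSignedFrame_shortFrame he he2
  obtain ⟨u, hu, hsu, hortho⟩ := h.exists_three_apply_eq_one he he2 hsF hcard
  have hus (i : Fin 3) : B (u i) s = 1 := (h.symm _ _).trans (hsu i)
  have hu2 (i : Fin 3) : B (u i) (u i) = 2 := hF.norm_eq _ (hu i)
  have hsub (i j : Fin 3) (hij : i ≠ j) : s - u i - u j ∈ shortFrame B Φ s := by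
    refine h.sub_sub_mem_shortFrame hs hs2 ?_ (hu2 i) (hu2 j) (hortho hij) (hsu i) (hsu j)
    rw [← sub_neg_eq_add]
    refine h.sub_mem_of_mem_shortFrame he2 (hu i) (hF.neg_mem _ (hu j)) ?_
    rw [map_neg, hortho hij, neg_zero]
  refine (h.isSignedFrame_shortFrame hs hs2).two_mul_le_card
    (u := ![s, s - u 0 - u 1, s - u 0 - u 2, s - u 1 - u 2]) (fun i => ?_) fun i j hij => ?_
  · fin_cases i
    exacts [self_mem_shortFrame hs hs2, hsub 0 1 (by decide), hsub 0 2 (by decide),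
      hsub 1 2 (by decide)]
  · fin_cases i <;> fin_cases j <;> first | exact absurd rfl hij | skip
    all_goals
      simp [hs2, hsu, hus, hu2, hortho (show (0 : Fin 3) ≠ 1 by decide),
        hortho (show (0 : Fin 3) ≠ 2 by decide), hortho (show (1 : Fin 3) ≠ 2 by decide),
        hortho (show (1 : Fin 3) ≠ 0 by decide), hortho (show (2 : Fin 3) ≠ 0 by decide),
        hortho (show (2 : Fin 3) ≠ 1 by decide)]
      try norm_num

lemma card_shortFrame_eq_eight (h : IsTwoLengthRootSystem B Φ 2) (he : e ∈ Φ) (he2 : B e e = 2)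
    (hs : s ∈ Φ) (hs2 : B s s = 2) (hsF : ∀ f ∈ shortFrame B Φ e, B s f = 1 ∨ B s f = -1)
    (hcard : 6 ≤ #(shortFrame B Φ e)) : #(shortFrame B Φ e) = 8 := by
  refine (h.card_shortFrame_le_eight he he2 hs2 hsF).antisymm ?_
  have hself := self_mem_shortFrame (Φ := Φ) he he2
  have hse : B s e ≠ 0 := by rcases hsF e hself with h1 | h1 <;> simp [h1]
  have hes : B e s ≠ 0 := by rwa [h.symm]
  have hnot : e ∉ shortFrame B Φ s := fun hmem => by
    have h1 := hsF e hself
    rcases (mem_shortFrame.1 hmem).2.2 with rfl | rfl | ⟨h0, -⟩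
    · norm_num [hs2] at h1
    · norm_num [hs2] at h1
    · exact hse h0
  exact h.eight_le_card_shortFrame hs hs2 he he2
    (h.apply_eq_one_or_of_notMem_shortFrame hs hs2 he he2 hnot (self_mem_shortFrame hs hs2) hes)
    (by linarith [h.eight_le_card_shortFrame he he2 hs hs2 hsF hcard])

end IsTwoLengthRootSystem

end FrameSize

section DualRoots

open Module Submodule
open scoped Finset

variable {E : Type*} [AddCommGroup E] [Module ℝ E] {B : E →ₗ[ℝ] E →ₗ[ℝ] ℝ} {Φ : Finset E}
  {α β : E}

/-- The coroot of `α` for the form `B`, scaled so that the roots of norm `2` and those of norm `4`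
exchange their norms. -/
def dualRoot (B : E →ₗ[ℝ] E →ₗ[ℝ] ℝ) (α : E) : E := (2 * √2 / B α α) • α

/-- The dual root system, realized in the same space by rescaled coroots. -/
def dualRoots (B : E →ₗ[ℝ] E →ₗ[ℝ] ℝ) (Φ : Finset E) : Finset E := Φ.image (dualRoot B)

lemma norm_dualRoot (hα : B α α ≠ 0) : B (dualRoot B α) (dualRoot B α) = 8 / B α α := by
  simp only [dualRoot, map_smul, LinearMap.smul_apply, smul_eq_mul]
  field_simp
  rw [Real.sq_sqrt zero_le_two]
  norm_num

lemma norm_dualRoot_eq_two_iff (hα : B α α ≠ 0) :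
    B (dualRoot B α) (dualRoot B α) = 2 ↔ B α α = 4 := by
  rw [norm_dualRoot hα, div_eq_iff hα]
  constructor <;> intro <;> linarith

lemma norm_dualRoot_eq_four_iff (hα : B α α ≠ 0) :
    B (dualRoot B α) (dualRoot B α) = 4 ↔ B α α = 2 := by
  rw [norm_dualRoot hα, div_eq_iff hα]
  constructor <;> intro <;> linarith

lemma dualRoot_dualRoot (hα : B α α ≠ 0) : dualRoot B (dualRoot B α) = α := by
  rw [dualRoot, norm_dualRoot hα, dualRoot, smul_smul]
  convert one_smul ℝ α
  field_simp
  rw [Real.sq_sqrt zero_le_two]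
  norm_num

lemma dualRoot_smul (c : ℝ) (α : E) : dualRoot B (c • α) = c⁻¹ • dualRoot B α := by
  simp only [dualRoot, map_smul, LinearMap.smul_apply, smul_eq_mul, smul_smul]
  congr 1
  rcases eq_or_ne c 0 with rfl | hc
  · simp
  · field_simp

namespace IsEuclideanRootSystem

lemma dualRoots_dualRoots (h : IsEuclideanRootSystem B Φ) : dualRoots B (dualRoots B Φ) = Φ := by
  rw [dualRoots, dualRoots, Finset.image_image]
  exact (Finset.image_congr fun α hα => dualRoot_dualRoot (h.norm_pos hα).ne').trans Finset.image_id

lemma dualRoot_injOn (h : IsEuclideanRootSystem B Φ) : Set.InjOn (dualRoot B) Φ :=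
  Set.LeftInvOn.injOn (f₁' := dualRoot B) fun _ hα => dualRoot_dualRoot (h.norm_pos hα).ne'

lemma card_filter_dualRoots (h : IsEuclideanRootSystem B Φ) (p : E → Prop)
    [DecidablePred p] : #{α ∈ dualRoots B Φ | p α} = #{α ∈ Φ | p (dualRoot B α)} := by
  rw [dualRoots, Finset.filter_image, Finset.card_image_of_injOn]
  exact h.dualRoot_injOn.mono (Finset.coe_subset.2 (Finset.filter_subset _ _))

lemma span_dualRoots (h : IsEuclideanRootSystem B Φ) :
    span ℝ (dualRoots B Φ : Set E) = span ℝ (Φ : Set E) := by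
  refine le_antisymm (span_le.2 ?_) (span_le.2 fun α hα => ?_)
  · rw [dualRoots, Finset.coe_image, Set.image_subset_iff]
    exact fun α hα => smul_mem _ _ (subset_span hα)
  · rw [← dualRoot_dualRoot (h.norm_pos hα).ne']
    exact smul_mem _ _ (subset_span (Finset.mem_image_of_mem _ hα))

lemma dualRoot_formReflection (h : IsEuclideanRootSystem B Φ) (hα : α ∈ Φ) (β : E) :
    formReflection B (dualRoot B α) (dualRoot B β) = dualRoot B (formReflection B α β) := by
  have hα0 := (h.norm_pos hα).ne'
  have hcoeff : 2 * B (dualRoot B α) (dualRoot B β) / B (dualRoot B α) (dualRoot B α) *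
      (2 * √2 / B α α) = 2 * √2 / B β β * (2 * B α β / B α α) := by
    rw [norm_dualRoot hα0]
    simp only [dualRoot, map_smul, LinearMap.smul_apply, smul_eq_mul]
    field_simp
    rw [Real.sq_sqrt zero_le_two]
    ring
  rw [dualRoot, dualRoot, dualRoot, h.norm_formReflection hα, formReflection, formReflection,
    smul_sub, smul_smul, smul_smul]
  exact congrArg _ (congrArg (· • α) hcoeff)

lemma dual (h : IsEuclideanRootSystem B Φ) : IsEuclideanRootSystem B (dualRoots B Φ) where
  symm := h.symm
  pos := h.pos
  zero_notMem h0 := by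
    obtain ⟨α, hα, hα0⟩ := Finset.mem_image.1 h0
    have := norm_dualRoot (h.norm_pos hα).ne'
    rw [hα0, map_zero] at this
    exact (div_pos (by norm_num) (h.norm_pos hα)).ne this
  reflection_mem := by
    simp only [dualRoots, Finset.forall_mem_image]
    intro α hα β hβ
    rw [h.dualRoot_formReflection hα]
    exact Finset.mem_image_of_mem _ (h.reflection_mem α hα β hβ)
  integral := by
    simp only [dualRoots, Finset.forall_mem_image]
    intro α hα β hβ
    obtain ⟨z, hz⟩ := h.integral β hβ α hα
    have hα0 := (h.norm_pos hα).ne'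
    refine ⟨z, hz ▸ ?_⟩
    rw [norm_dualRoot hα0, h.symm β α]
    simp only [dualRoot, map_smul, LinearMap.smul_apply, smul_eq_mul]
    field_simp
    rw [Real.sq_sqrt zero_le_two]
    ring
  reduced := by
    simp only [dualRoots, Finset.forall_mem_image]
    intro α hα c hc
    obtain ⟨β, hβ, hβα⟩ := Finset.mem_image.1 hc
    have hβ' : c⁻¹ • α = β := by
      rw [← dualRoot_dualRoot (h.norm_pos hβ).ne', hβα, dualRoot_smul,
        dualRoot_dualRoot (h.norm_pos hα).ne']
    refine (h.reduced α hα c⁻¹ (hβ' ▸ hβ)).imp inv_eq_one.1 fun hc => ?_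
    rw [← inv_inv c, hc, inv_neg_one]

end IsEuclideanRootSystem

lemma IsOrthogonalSummand.dual {X : Finset E} (h : IsEuclideanRootSystem B Φ)
    (hX : IsOrthogonalSummand B (dualRoots B Φ) X) : IsOrthogonalSummand B Φ (dualRoots B X) := by
  have hmem {β : E} (hβ : β ∈ Φ) (hβX : dualRoot B β ∈ X) : β ∈ dualRoots B X :=
    Finset.mem_image.2 ⟨_, hβX, dualRoot_dualRoot (h.norm_pos hβ).ne'⟩
  have hsub : dualRoots B X ⊆ Φ :=
    (Finset.image_subset_image hX.subset).trans h.dualRoots_dualRoots.subset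
  refine ⟨hsub, fun α hα β hβ hαβ => hmem hβ ?_⟩
  obtain ⟨x, hx, rfl⟩ := Finset.mem_image.1 hα
  refine hX.mem_of_ne_zero x hx _ (Finset.mem_image_of_mem _ hβ) fun h0 => hαβ ?_
  have hβ0 := (h.norm_pos hβ).ne'
  have hcoeff : 2 * √2 / B β β ≠ 0 := by positivity
  rw [dualRoot, map_smul, smul_eq_mul] at h0
  rw [dualRoot, map_smul, LinearMap.smul_apply, (mul_eq_zero.1 h0).resolve_left hcoeff, smul_zero]

namespace IsTwoLengthRootSystem

lemma norm_eq_two_or_four (h : IsTwoLengthRootSystem B Φ 2) (hα : α ∈ Φ) :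
    B α α = 2 ∨ B α α = 4 :=
  (h.norm_eq α hα).imp_right fun h4 => h4.trans (by norm_num)

lemma dual (h : IsTwoLengthRootSystem B Φ 2) : IsTwoLengthRootSystem B (dualRoots B Φ) 2 where
  toIsEuclideanRootSystem := h.toIsEuclideanRootSystem.dual
  nonempty := h.nonempty.image _
  eq_of_summand X hX hXne := by
    have hΦ := h.eq_of_summand _ (hX.dual h.toIsEuclideanRootSystem) (hXne.image _)
    rw [← hΦ, dualRoots, dualRoots, Finset.image_image, eq_comm]
    exact (Finset.image_congr fun x hx => dualRoot_dualRoot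
      (h.toIsEuclideanRootSystem.dual.norm_pos (hX.subset hx)).ne').trans Finset.image_id
  norm_eq := by
    simp only [dualRoots, Finset.forall_mem_image]
    intro α hα
    rw [norm_dualRoot (h.norm_pos hα).ne']
    rcases h.norm_eq_two_or_four hα with h2 | h4
    · exact .inr (by norm_num [h2])
    · exact .inl (by norm_num [h4])
  exists_short := by
    obtain ⟨β, hβ, hβ4⟩ := h.exists_long
    exact ⟨_, Finset.mem_image_of_mem _ hβ,
      (norm_dualRoot_eq_two_iff (h.norm_pos hβ).ne').2 (by linarith)⟩
  exists_long := by
    obtain ⟨α, hα, hα2⟩ := h.exists_short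
    exact ⟨_, Finset.mem_image_of_mem _ hα,
      ((norm_dualRoot_eq_four_iff (h.norm_pos hα).ne').2 hα2).trans (by norm_num)⟩

end IsTwoLengthRootSystem

end DualRoots

section TypeF4

open Module Submodule
open scoped Finset

variable {E : Type*} [AddCommGroup E] [Module ℝ E] {B : E →ₗ[ℝ] E →ₗ[ℝ] ℝ} {Φ F : Finset E}
  {e s : E}

/-- The root system of type `F₄`, characterized among the irreducible root systems with length ratio
`√2` by the fact that neither its short roots nor those of its dual form a single frame. -/
structure IsTypeF4 (B : E →ₗ[ℝ] E →ₗ[ℝ] ℝ) (Φ : Finset E) : Prop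
    extends IsTwoLengthRootSystem B Φ 2 where
  exists_notMem : ∀ e ∈ Φ, B e e = 2 → ∃ s ∈ Φ, B s s = 2 ∧ s ∉ shortFrame B Φ e
  exists_notMem_dual : ∀ e ∈ dualRoots B Φ, B e e = 2 →
    ∃ s ∈ dualRoots B Φ, B s s = 2 ∧ s ∉ shortFrame B (dualRoots B Φ) e

namespace IsTwoLengthRootSystem

lemma exists_notMem_shortFrame_apply (h : IsTwoLengthRootSystem B Φ 2) (he : e ∈ Φ)
    (he2 : B e e = 2) (hnot : ∃ s ∈ Φ, B s s = 2 ∧ s ∉ shortFrame B Φ e) :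
    ∃ s ∈ Φ, B s s = 2 ∧ s ∉ shortFrame B Φ e ∧
      ∀ f ∈ shortFrame B Φ e, B s f = 1 ∨ B s f = -1 := by
  by_contra! hno
  have hshort (s : E) (hs : s ∈ Φ) (hs2 : B s s = 2) {f : E} (hf : f ∈ shortFrame B Φ e)
      (hfs : B f s ≠ 0) : s ∈ shortFrame B Φ e := by
    by_contra hse
    obtain ⟨g, hg, hg1, hg2⟩ := hno s hs hs2 hse
    have := h.apply_eq_one_or_of_notMem_shortFrame he he2 hs hs2 hse hf (by rwa [h.symm]) g hg
    tauto
  have hself : e ∈ shortFrame B Φ e := self_mem_shortFrame he he2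
  have hall := h.exists_apply_ne_zero_of_mem_span (F := shortFrame B Φ e) ⟨e, hself, he⟩
    fun β hβ ⟨f, hf, hfβ⟩ => by
      rcases h.norm_eq_two_or_four hβ with hβ2 | hβ4
      · exact subset_span (hshort β hβ hβ2 hf hfβ)
      · obtain ⟨f, hf, g, hg, -, rfl⟩ := h.exists_eq_sub_of_apply_ne_zero he he2 hf hβ hβ4 hfβ
        exact Submodule.sub_mem _ (subset_span hf) (subset_span hg)
  obtain ⟨s, hs, hs2, hse⟩ := hnot
  obtain ⟨f, hf, hfs⟩ := hall s hs
  exact hse (hshort s hs hs2 hf hfs)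

end IsTwoLengthRootSystem

namespace IsTypeF4

lemma dual (h : IsTypeF4 B Φ) : IsTypeF4 B (dualRoots B Φ) where
  toIsTwoLengthRootSystem := h.toIsTwoLengthRootSystem.dual
  exists_notMem := h.exists_notMem_dual
  exists_notMem_dual := h.toIsEuclideanRootSystem.dualRoots_dualRoots.symm ▸ h.exists_notMem

lemma exists_long_apply (h : IsTypeF4 B Φ) {t : E} (ht : t ∈ Φ) (ht4 : B t t = 4) :
    ∃ r ∈ Φ, B r r = 4 ∧ (B r t = 2 ∨ B r t = -2) := by
  have ht2 := (norm_dualRoot_eq_two_iff (h.norm_pos ht).ne').2 ht4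
  have htΦ : dualRoot B t ∈ dualRoots B Φ := Finset.mem_image_of_mem _ ht
  obtain ⟨s, hs, hs2, -, happly⟩ := h.toIsTwoLengthRootSystem.dual.exists_notMem_shortFrame_apply
    htΦ ht2 (h.exists_notMem_dual _ htΦ ht2)
  obtain ⟨r, hr, rfl⟩ := Finset.mem_image.1 hs
  have hr4 := (norm_dualRoot_eq_two_iff (h.norm_pos hr).ne').1 hs2
  have hhalf : B (dualRoot B r) (dualRoot B t) = B r t / 2 := by
    simp only [dualRoot, map_smul, LinearMap.smul_apply, smul_eq_mul, hr4, ht4]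
    field_simp
    rw [Real.sq_sqrt zero_le_two]
    ring
  have := happly _ (self_mem_shortFrame htΦ ht2)
  rw [hhalf] at this
  exact ⟨r, hr, hr4, this.imp (fun h1 => by linarith) fun h1 => by linarith⟩

lemma six_le_card_shortFrame (h : IsTypeF4 B Φ) (he : e ∈ Φ) (he2 : B e e = 2) :
    6 ≤ #(shortFrame B Φ e) := by
  have hF := h.isSignedFrame_shortFrame he he2
  obtain ⟨t, ht, ht4, hte⟩ : ∃ t ∈ Φ, B t t = 4 ∧ B t e ≠ 0 := by
    obtain ⟨τ, hτ, hτ4⟩ := h.exists_long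
    exact h.exists_apply_ne_zero (fun γ => B γ γ = 4)
      (fun δ hδ ε _ hε => (h.norm_formReflection hδ ε).trans hε) hτ he (by linarith)
  obtain ⟨f, hf, g, hg, hfg, rfl⟩ := h.exists_eq_sub_of_apply_ne_zero he he2
    (self_mem_shortFrame he he2) ht ht4 (by rwa [h.symm])
  obtain ⟨r, hr, hr4, hrfg⟩ := h.exists_long_apply ht ht4
  have hvalues (f : E) (hf : f ∈ shortFrame B Φ e) : B f r = 0 ∨ B f r = 2 ∨ B f r = -2 :=
    h.apply_short_long_two (mem_shortFrame.1 hf).1 hr (mem_shortFrame.1 hf).2.1 hr4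
  have key (x y : E) (hx : x ∈ shortFrame B Φ e) (hy : y ∈ shortFrame B Φ e) (hxy : B x y = 0)
      (hxr : B x r ≠ 0) (hyr : B y r = 0) : 6 ≤ #(shortFrame B Φ e) := by
    obtain ⟨z, hz, hxz, hyz⟩ : ∃ z ∈ shortFrame B Φ e, B x z = 0 ∧ B y z = 0 := by
      have hx2 := hF.norm_eq x hx
      rcases (hvalues x hx).resolve_left hxr with h2 | h2
      · refine ⟨x - r, h.sub_mem_shortFrame he he2 hx hr hr4 h2, ?_, ?_⟩
        · rw [map_sub, hx2, h2, sub_self]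
        · rw [map_sub, h.symm y x, hxy, hyr, sub_self]
      · refine ⟨x - -r, h.sub_mem_shortFrame he he2 hx (h.neg_mem hr) (by simpa using hr4)
          (by rw [map_neg, h2, neg_neg]), ?_, ?_⟩
        · rw [map_sub, map_neg, hx2, h2, neg_neg, sub_self]
        · rw [map_sub, map_neg, h.symm y x, hxy, hyr, neg_zero, sub_zero]
    refine hF.two_mul_le_card (u := ![x, y, z]) (fun i => ?_) fun i j hij => ?_
    · fin_cases i
      exacts [hx, hy, hz]
    · have hyx := (h.symm y x).trans hxy
      have hzx := (h.symm z x).trans hxz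
      have hzy := (h.symm z y).trans hyz
      fin_cases i <;> fin_cases j <;> simp_all
  rw [map_sub, h.symm r f, h.symm r g] at hrfg
  by_cases hgr : B g r = 0
  · exact key f g hf hg hfg (by intro hfr; norm_num [hfr, hgr] at hrfg) hgr
  · refine key g f hg hf ((h.symm g f).trans hfg) hgr ?_
    have := hvalues f hf
    have := hvalues g hg
    grind

lemma card_shortFrame (h : IsTypeF4 B Φ) (he : e ∈ Φ) (he2 : B e e = 2) :
    #(shortFrame B Φ e) = 8 := by
  obtain ⟨s, hs, hs2, -, hsF⟩ :=
    h.exists_notMem_shortFrame_apply he he2 (h.exists_notMem e he he2)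
  exact h.card_shortFrame_eq_eight he he2 hs hs2 hsF (h.six_le_card_shortFrame he he2)

lemma two_smul_eq_sum (h : IsTypeF4 B Φ) (he : e ∈ Φ) (he2 : B e e = 2) {u : Fin 4 → E}
    (hu : ∀ i, u i ∈ shortFrame B Φ e) (hortho : Pairwise fun i j => B (u i) (u j) = 0)
    (hs2 : B s s = 2) (hsu : ∀ i, B s (u i) = 1 ∨ B s (u i) = -1) :
    (2 : ℝ) • s = ∑ i, B s (u i) • u i :=
  h.two_smul_eq_sum_of_apply (fun i => (h.isSignedFrame_shortFrame he he2).norm_eq _ (hu i))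
    hortho hs2 hsu

lemma mem_span_shortFrame (h : IsTypeF4 B Φ) (he : e ∈ Φ) (he2 : B e e = 2) {f β : E}
    (hf : f ∈ shortFrame B Φ e) (hβ : β ∈ Φ) (hfβ : B f β ≠ 0) :
    β ∈ span ℝ (shortFrame B Φ e : Set E) := by
  rcases h.norm_eq_two_or_four hβ with hβ2 | hβ4
  · by_cases hβF : β ∈ shortFrame B Φ e
    · exact subset_span hβF
    have hone := h.apply_eq_one_or_of_notMem_shortFrame he he2 hβ hβ2 hβF hf (by rwa [h.symm])
    obtain ⟨u, hu, hortho⟩ := (h.isSignedFrame_shortFrame he he2).exists_orthogonal_family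
      (n := 4) (h.card_shortFrame he he2)
    have hβu := h.two_smul_eq_sum he he2 hu hortho hβ2 fun i => hone _ (hu i)
    rw [← Submodule.smul_mem_iff _ (two_ne_zero (α := ℝ)), hβu]
    exact Submodule.sum_mem _ fun i _ => smul_mem _ _ (subset_span (hu i))
  · obtain ⟨f, hf, g, hg, -, rfl⟩ := h.exists_eq_sub_of_apply_ne_zero he he2 hf hβ hβ4 hfβ
    exact Submodule.sub_mem _ (subset_span hf) (subset_span hg)

lemma exists_mem_shortFrame_apply_ne_zero (h : IsTypeF4 B Φ) (he : e ∈ Φ) (he2 : B e e = 2) :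
    ∀ β ∈ Φ, ∃ f ∈ shortFrame B Φ e, B f β ≠ 0 :=
  h.exists_apply_ne_zero_of_mem_span (F := shortFrame B Φ e) ⟨e, self_mem_shortFrame he he2, he⟩
    fun _ hβ ⟨_, hf, hfβ⟩ => h.mem_span_shortFrame he he2 hf hβ hfβ

lemma isShortFrame_shortFrame (h : IsTypeF4 B Φ) (he : e ∈ Φ) (he2 : B e e = 2) :
    IsShortFrame B Φ (shortFrame B Φ e) :=
  h.toIsTwoLengthRootSystem.isShortFrame_shortFrame he he2 fun t ht _ =>
    h.exists_mem_shortFrame_apply_ne_zero he he2 t ht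

lemma apply_eq_one_or (h : IsTypeF4 B Φ) (he : e ∈ Φ) (he2 : B e e = 2) (hs : s ∈ Φ)
    (hs2 : B s s = 2) (hse : s ∉ shortFrame B Φ e) :
    ∀ f ∈ shortFrame B Φ e, B s f = 1 ∨ B s f = -1 := by
  obtain ⟨f, hf, hfs⟩ := h.exists_mem_shortFrame_apply_ne_zero he he2 s hs
  exact h.apply_eq_one_or_of_notMem_shortFrame he he2 hs hs2 hse hf (by rwa [h.symm])

lemma finrank_span_shortFrame (h : IsTypeF4 B Φ) (he : e ∈ Φ) (he2 : B e e = 2) :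
    finrank ℝ (span ℝ (shortFrame B Φ e : Set E)) = 4 := by
  have := (h.isSignedFrame_shortFrame he he2).two_mul_finrank_span
  rw [h.card_shortFrame he he2] at this
  omega

lemma finrank_span (h : IsTypeF4 B Φ) : finrank ℝ (span ℝ (Φ : Set E)) = 4 := by
  obtain ⟨e, he, he2⟩ := h.exists_short
  rw [← h.finrank_span_shortFrame he he2]
  refine congrArg (fun W : Submodule ℝ E => finrank ℝ W) (le_antisymm (span_le.2 fun β hβ => ?_)
    (span_mono fun f hf => (mem_shortFrame.1 hf).1))
  obtain ⟨f, hf, hfβ⟩ := h.exists_mem_shortFrame_apply_ne_zero he he2 β hβ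
  exact h.mem_span_shortFrame he he2 hf hβ hfβ

end IsTypeF4

end TypeF4

section TypeF4Count

open Module Submodule
open scoped Finset

variable {E : Type*} [AddCommGroup E] [Module ℝ E] {B : E →ₗ[ℝ] E →ₗ[ℝ] ℝ} {Φ F : Finset E}
  {l : E →ₗ[ℝ] ℝ} {a b : ℝ} {e s : E}

/-- The frames of short roots, which partition the short roots. -/
def shortFrames (B : E →ₗ[ℝ] E →ₗ[ℝ] ℝ) (Φ : Finset E) : Finset (Finset E) :=
  Finset.image (shortFrame B Φ) {α ∈ Φ | B α α = 2}

lemma IsTwoLengthRootSystem.normCount_two_eq_sum (h : IsTwoLengthRootSystem B Φ 2) (c : ℝ) :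
    normCount B Φ l 2 c =
      ∑ F ∈ shortFrames B Φ, valueCount F l c := by
  rw [normCount, Finset.card_eq_sum_card_fiberwise (f := shortFrame B Φ)
    (t := shortFrames B Φ)]
  · push_cast
    refine Finset.sum_congr rfl fun F hF => ?_
    obtain ⟨e, he, rfl⟩ := Finset.mem_image.1 hF
    obtain ⟨he, he2⟩ := Finset.mem_filter.1 he
    rw [valueCount, Nat.cast_inj]
    congr 1
    ext f
    simp only [Finset.mem_filter]
    constructor
    · rintro ⟨⟨hf, hf2, hfc⟩, hfe⟩
      exact ⟨hfe ▸ self_mem_shortFrame hf hf2, hfc⟩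
    · rintro ⟨hf, hfc⟩
      obtain ⟨hfΦ, hf2, -⟩ := mem_shortFrame.1 hf
      exact ⟨⟨hfΦ, hf2, hfc⟩, h.shortFrame_eq_of_mem he he2 hf⟩
  · intro α hα
    obtain ⟨hα, hα2, -⟩ := Finset.mem_filter.1 hα
    exact Finset.mem_image_of_mem _ (Finset.mem_filter.2 ⟨hα, hα2⟩)

lemma IsTwoLengthRootSystem.normCount_two_sub_le (h : IsTwoLengthRootSystem B Φ 2)
    (hle : ∀ e ∈ Φ, B e e = 2 →
      valueCount (shortFrame B Φ e) l a ≤ valueCount (shortFrame B Φ e) l 0)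
    (he : e ∈ Φ) (he2 : B e e = 2) :
    normCount B Φ l 2 a - normCount B Φ l 2 0 ≤
      valueCount (shortFrame B Φ e) l a - valueCount (shortFrame B Φ e) l 0 := by
  have hnonneg : ∀ F ∈ shortFrames B Φ, 0 ≤ valueCount F l 0 - valueCount F l a := by
    simp only [shortFrames, Finset.forall_mem_image, Finset.mem_filter, sub_nonneg]
    exact fun e he => hle e he.1 he.2
  have hsingle := Finset.single_le_sum hnonneg
    (Finset.mem_image_of_mem (shortFrame B Φ) (Finset.mem_filter.2 ⟨he, he2⟩))
  rw [Finset.sum_sub_distrib, ← h.normCount_two_eq_sum, ← h.normCount_two_eq_sum] at hsingle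
  linarith

lemma IsSignedFrame.pairwise_orthogonal_of_arithmetic (hF : IsSignedFrame B F)
    (h : IntIndependent a b) {n : ℕ} {f : Fin n → E} {p : ℤ} (hf : ∀ i, f i ∈ F)
    (hlf : ∀ i, l (f i) = a + (p + i : ℤ) * b) : Pairwise fun i j => B (f i) (f j) = 0 := by
  intro i j hij
  rcases hF.orthogonal _ (hf i) _ (hf j) with heq | heq | h0
  · have := h.chain_inj ((hlf j).symm.trans ((congrArg l heq).trans (hlf i)))
    omega
  · refine absurd ?_ (h.add_ne_neg_add (p + j) (-(p + i)))
    rw [← hlf j, heq, map_neg, hlf i]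
    push_cast
    ring
  · exact h0

lemma sign_eq_ite_of_sum_eq {ε : Fin 4 → ℤ} {p : ℤ} (hε : ∀ i, ε i = 1 ∨ ε i = -1)
    (hsum : ∑ i, ε i = 2) (hweight : ∑ i, ε i * (p + i) = 0) (i : Fin 4) :
    ε i = if (i : ℤ) = p + 3 then -1 else 1 := by
  rw [Fin.sum_univ_four] at hsum hweight
  have h0 := hε 0
  have h1 := hε 1
  have h2 := hε 2
  have h3 := hε 3
  rcases h0 with h0 | h0 <;> rcases h1 with h1 | h1 <;> rcases h2 with h2 | h2 <;>
    rcases h3 with h3 | h3 <;> simp [h0, h1, h2, h3] at hsum hweight <;> fin_cases i <;>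
    simp [h0, h1, h2, h3] <;> omega

namespace IsTypeF4

lemma exists_apply_eq_sign (h : IsTypeF4 B Φ) (he : e ∈ Φ) (he2 : B e e = 2) {u : Fin 4 → E}
    (hu : ∀ i, u i ∈ shortFrame B Φ e) (hortho : Pairwise fun i j => B (u i) (u j) = 0)
    {ε : Fin 4 → ℝ} (hε : ∀ i, ε i = 1 ∨ ε i = -1) :
    ∃ s ∈ Φ, B s s = 2 ∧ ∀ i, B s (u i) = ε i := by
  suffices hT : ∀ T : Finset (Fin 4), ∃ s ∈ Φ, B s s = 2 ∧
      (∀ i, B s (u i) = 1 ∨ B s (u i) = -1) ∧ ∀ i ∈ T, B s (u i) = ε i by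
    obtain ⟨s, hs, hs2, -, hsε⟩ := hT Finset.univ
    exact ⟨s, hs, hs2, fun i => hsε i (Finset.mem_univ i)⟩
  intro T
  induction T using Finset.induction_on with
  | empty =>
    obtain ⟨s, hs, hs2, -, hsF⟩ :=
      h.exists_notMem_shortFrame_apply he he2 (h.exists_notMem e he he2)
    exact ⟨s, hs, hs2, fun i => hsF _ (hu i), by simp⟩
  | insert k T _ ih =>
    obtain ⟨s, hs, hs2, hs1, hsε⟩ := ih
    by_cases hk : B s (u k) = ε k
    · exact ⟨s, hs, hs2, hs1, by simpa [hk] using hsε⟩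
    obtain ⟨hukΦ, huk2, -⟩ := mem_shortFrame.1 (hu k)
    have hval (i : Fin 4) : B (formReflection B (u k) s) (u i) =
        if i = k then -B s (u k) else B s (u i) := by
      simp only [formReflection, map_sub, map_smul, LinearMap.sub_apply, LinearMap.smul_apply,
        smul_eq_mul, huk2, h.symm (u k) s]
      split_ifs with hik
      · rw [hik, huk2]
        ring
      · rw [hortho (Ne.symm hik), mul_zero, sub_zero]
    refine ⟨_, h.reflection_mem _ hukΦ s hs, (h.norm_formReflection hukΦ s).trans hs2,
      fun i => ?_, fun i hi => ?_⟩
    · rw [hval]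
      split_ifs
      exacts [by grind, hs1 i]
    · rw [hval]
      split_ifs with hik
      exacts [by grind, hsε i (Finset.mem_of_mem_insert_of_ne hi hik)]

section ArithmeticFrame

variable {u : Fin 4 → E} {p : ℤ}

lemma two_mul_apply_of_arithmetic (h : IsTypeF4 B Φ) (he : e ∈ Φ) (he2 : B e e = 2)
    (hu : ∀ i, u i ∈ shortFrame B Φ e) (hortho : Pairwise fun i j => B (u i) (u j) = 0)
    (hlu : ∀ i, l (u i) = a + (p + i : ℤ) * b) (hs2 : B s s = 2) {ε : Fin 4 → ℤ}
    (hε : ∀ i, ε i = 1 ∨ ε i = -1) (hsε : ∀ i, B s (u i) = ε i) :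
    2 * l s = (∑ i, ε i : ℤ) * a + (∑ i, ε i * (p + i) : ℤ) * b := by
  have hsum := h.two_smul_eq_sum he he2 hu hortho hs2 fun i => by
    rcases hε i with h1 | h1 <;> simp [hsε, h1]
  rw [← smul_eq_mul, ← map_smul, hsum]
  push_cast
  simp only [map_sum, map_smul, hsε, hlu, smul_eq_mul, Finset.sum_mul, ← Finset.sum_add_distrib]
  exact Finset.sum_congr rfl fun i _ => by push_cast; ring

lemma two_le_normCount_of_arithmetic (h : IsTypeF4 B Φ) (he : e ∈ Φ) (he2 : B e e = 2)
    (hu : ∀ i, u i ∈ shortFrame B Φ e) (hortho : Pairwise fun i j => B (u i) (u j) = 0)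
    (hlu : ∀ i, l (u i) = a + (p + i : ℤ) * b) : 2 ≤ normCount B Φ l 2 0 := by
  have hε (i : Fin 4) : ![1, -1, -1, (1 : ℤ)] i = 1 ∨ ![1, -1, -1, (1 : ℤ)] i = -1 := by
    fin_cases i <;> simp
  obtain ⟨s, hs, hs2, hsε⟩ := h.exists_apply_eq_sign he he2 hu hortho
    (ε := fun i => (![1, -1, -1, 1] i : ℤ)) (fun i => by exact_mod_cast hε i)
  have hls := h.two_mul_apply_of_arithmetic he he2 hu hortho hlu hs2 hε hsε
  have hls0 : l s = 0 := by
    have hweight : ∑ i : Fin 4, ![1, -1, -1, (1 : ℤ)] i * (p + i) = 0 := by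
      simp [Fin.sum_univ_four]
      ring
    rw [hweight, show ∑ i, ![1, -1, -1, (1 : ℤ)] i = 0 from rfl] at hls
    simpa using hls
  exact Nat.ofNat_le_cast.2 (h.two_le_card_filter (p := fun α => B α α = 2 ∧ l α = 0) hs
    ⟨hs2, hls0⟩ ⟨by simpa using hs2, by simp [hls0]⟩)

lemma eq_of_apply_eq_of_arithmetic (h : IsTypeF4 B Φ) (hab : IntIndependent a b) (he : e ∈ Φ)
    (he2 : B e e = 2) (hu : ∀ i, u i ∈ shortFrame B Φ e)
    (hortho : Pairwise fun i j => B (u i) (u j) = 0)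
    (hlu : ∀ i, l (u i) = a + (p + i : ℤ) * b) {s s' : E}
    (hs2 : B s s = 2) (hs2' : B s' s' = 2) (hsu : ∀ i, B s (u i) = 1 ∨ B s (u i) = -1)
    (hsu' : ∀ i, B s' (u i) = 1 ∨ B s' (u i) = -1) (hls : l s = a) (hls' : l s' = a) : s = s' := by
  -- The signs have sum `2` and weighted sum `∑ εᵢ (p + i) = 0`, which determines them.
  have hsign (s : E) (hs2 : B s s = 2) (hsu : ∀ i, B s (u i) = 1 ∨ B s (u i) = -1)
      (hls : l s = a) (i : Fin 4) : B s (u i) = (if (i : ℤ) = p + 3 then -1 else 1 : ℤ) := by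
    have hint (i : Fin 4) : ∃ z : ℤ, (z = 1 ∨ z = -1) ∧ B s (u i) = z := by
      rcases hsu i with h1 | h1
      exacts [⟨1, .inl rfl, by simp [h1]⟩, ⟨-1, .inr rfl, by simp [h1]⟩]
    choose ε hε hsε using hint
    have hl := h.two_mul_apply_of_arithmetic he he2 hu hortho hlu hs2 hε hsε
    obtain ⟨hsum, hweight⟩ := hab (∑ i, ε i - 2) (∑ i, ε i * (p + i)) (by
      rw [hls] at hl
      push_cast at hl ⊢
      linarith)
    rw [hsε, sign_eq_ite_of_sum_eq hε (sub_eq_zero.1 hsum) hweight]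
  refine smul_right_injective E (two_ne_zero (α := ℝ)) ?_
  simp only [h.two_smul_eq_sum he he2 hu hortho hs2 hsu,
    h.two_smul_eq_sum he he2 hu hortho hs2' hsu', hsign s hs2 hsu hls, hsign s' hs2' hsu' hls']

lemma normCount_le_two_of_arithmetic (h : IsTypeF4 B Φ) (hab : IntIndependent a b) (he : e ∈ Φ)
    (he2 : B e e = 2) (ha : valueCount (shortFrame B Φ e) l a = 1)
    (hu : ∀ i, u i ∈ shortFrame B Φ e) (hortho : Pairwise fun i j => B (u i) (u j) = 0)
    (hlu : ∀ i, l (u i) = a + (p + i : ℤ) * b) : normCount B Φ l 2 a ≤ 2 := by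
  have hout : #{α ∈ Φ | (B α α = 2 ∧ l α = a) ∧ α ∉ shortFrame B Φ e} ≤ 1 := by
    refine Finset.card_le_one.2 ?_
    simp only [Finset.mem_filter]
    rintro s ⟨hs, ⟨hs2, hls⟩, hse⟩ s' ⟨hs', ⟨hs2', hls'⟩, hse'⟩
    exact h.eq_of_apply_eq_of_arithmetic hab he he2 hu hortho hlu hs2 hs2'
      (fun i => h.apply_eq_one_or he he2 hs hs2 hse _ (hu i))
      (fun i => h.apply_eq_one_or he he2 hs' hs2' hse' _ (hu i)) hls hls'
  have hin : {α ∈ Φ | (B α α = 2 ∧ l α = a) ∧ α ∈ shortFrame B Φ e} =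
      {f ∈ shortFrame B Φ e | l f = a} := by
    ext f
    simp only [Finset.mem_filter]
    have := mem_shortFrame (B := B) (Φ := Φ) (e := e) (f := f)
    tauto
  have hsplit := Finset.card_filter_add_card_filter_not (s := {α ∈ Φ | B α α = 2 ∧ l α = a})
    (· ∈ shortFrame B Φ e)
  rw [Finset.filter_filter, Finset.filter_filter, hin] at hsplit
  rw [valueCount] at ha
  rw [normCount]
  omega

end ArithmeticFrame

lemma exists_arithmetic_frame (h : IsTypeF4 B Φ) (hab : IntIndependent a b) (he : e ∈ Φ)
    (he2 : B e e = 2)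
    (hlt : valueCount (shortFrame B Φ e) l 0 < valueCount (shortFrame B Φ e) l a)
    (hle : normCount B Φ l 4 0 + 4 - normCount B Φ l 4 b ≤ 1) :
    valueCount (shortFrame B Φ e) l a = 1 ∧ ∃ (p : ℤ) (u : Fin 4 → E),
      ∀ i, u i ∈ shortFrame B Φ e ∧ l (u i) = a + (p + i : ℤ) * b := by
  have hF := h.isShortFrame_shortFrame he he2
  have hadd := hab.valueCount_add_le (F := shortFrame B Φ e) (v := l)
  have hdrop := hab.valueDrop_eq_zero_or (F := shortFrame B Φ e) (v := l)
  rw [hF.card_pair_eq_zero_sub h.symm hab.ne_zero_right, valueCount_neg hF.neg_mem,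
    h.card_shortFrame he he2] at hadd hdrop
  have h0 : 0 ≤ valueCount (shortFrame B Φ e) l 0 := Nat.cast_nonneg _
  have hb2 : 0 ≤ valueCount (shortFrame B Φ e) l (b / 2) := Nat.cast_nonneg _
  have ha : valueCount (shortFrame B Φ e) l a = 1 := by omega
  exact ⟨ha, exists_arithmetic_values hab hF.neg_mem (h.card_shortFrame he he2) ha
    (hdrop (by omega))⟩

lemma normCount_add_le_or (h : IsTypeF4 B Φ) (hab : IntIndependent a b) :
    normCount B Φ l 2 a + normCount B Φ l 4 b ≤ normCount B Φ l 2 0 + normCount B Φ l 4 0 + 4 ∨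
      2 ≤ normCount B Φ l 4 0 + 4 - normCount B Φ l 4 b := by
  have hframe (e : E) (he : e ∈ Φ) (he2 : B e e = 2) :=
    (h.isShortFrame_shortFrame he he2).valueCount_sub_le (l := l) h.symm hab
  by_cases hle : ∀ e ∈ Φ, B e e = 2 →
      valueCount (shortFrame B Φ e) l a ≤ valueCount (shortFrame B Φ e) l 0
  · obtain ⟨e, he, he2⟩ := h.exists_short
    have hsub := h.normCount_two_sub_le hle he he2
    have := hframe e he he2
    rw [h.finrank_span_shortFrame he he2] at this
    omega
  · push Not at hle
    obtain ⟨e, he, he2, hlt⟩ := hle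
    refine or_iff_not_imp_right.2 fun hsmall => ?_
    obtain ⟨ha, p, u, hu⟩ := h.exists_arithmetic_frame hab he he2 hlt (by omega)
    have hortho := (h.isSignedFrame_shortFrame he he2).pairwise_orthogonal_of_arithmetic hab
      (fun i => (hu i).1) fun i => (hu i).2
    have hzero := h.two_le_normCount_of_arithmetic he he2 (fun i => (hu i).1) hortho
      fun i => (hu i).2
    have hval := h.normCount_le_two_of_arithmetic hab he he2 ha (fun i => (hu i).1) hortho
      fun i => (hu i).2
    have := hframe e he he2
    rw [h.finrank_span_shortFrame he he2] at this
    omega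

end IsTypeF4

end TypeF4Count

section DoublyLaced

open Module Submodule
open scoped Finset

variable {E : Type*} [AddCommGroup E] [Module ℝ E] {B : E →ₗ[ℝ] E →ₗ[ℝ] ℝ} {Φ : Finset E}
  {l : E →ₗ[ℝ] ℝ} {a b : ℝ} {e : E}

lemma IntIndependent.dual (h : IntIndependent a b) : IntIndependent (√2 / 2 * b) (√2 * a) :=
  fun m n hmn => by
    have h0 : √2 / 2 * ((2 * n : ℤ) * a + m * b) = 0 := by
      push_cast
      linarith
    have := h (2 * n) m ((mul_eq_zero.1 h0).resolve_left (by positivity))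
    omega

namespace IsTwoLengthRootSystem

lemma normCount_dualRoots_two (h : IsTwoLengthRootSystem B Φ 2) (c : ℝ) :
    normCount B (dualRoots B Φ) l 2 (√2 / 2 * c) = normCount B Φ l 4 c := by
  rw [normCount, normCount, h.card_filter_dualRoots fun α => B α α = 2 ∧ l α = √2 / 2 * c]
  congr 2
  refine Finset.filter_congr fun α hα => ?_
  rw [norm_dualRoot_eq_two_iff (h.norm_pos hα).ne']
  refine and_congr_right fun hα4 => ?_
  have hs : √2 ≠ 0 := by positivity
  rw [dualRoot, hα4, map_smul, smul_eq_mul]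
  constructor
  · intro hc
    field_simp at hc
    linarith
  · rintro rfl
    ring

lemma normCount_dualRoots_four (h : IsTwoLengthRootSystem B Φ 2) (c : ℝ) :
    normCount B (dualRoots B Φ) l 4 (√2 * c) = normCount B Φ l 2 c := by
  rw [normCount, normCount, h.card_filter_dualRoots fun α => B α α = 4 ∧ l α = √2 * c]
  congr 2
  refine Finset.filter_congr fun α hα => ?_
  rw [norm_dualRoot_eq_four_iff (h.norm_pos hα).ne']
  refine and_congr_right fun hα2 => ?_
  have hs : √2 ≠ 0 := by positivity
  rw [dualRoot, hα2, map_smul, smul_eq_mul]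
  constructor
  · intro hc
    field_simp at hc
    linarith
  · rintro rfl
    ring

lemma normCount_add_le_of_forall_mem_shortFrame (h : IsTwoLengthRootSystem B Φ 2)
    (hab : IntIndependent a b) (he : e ∈ Φ) (he2 : B e e = 2)
    (hmem : ∀ s ∈ Φ, B s s = 2 → s ∈ shortFrame B Φ e) :
    normCount B Φ l 2 a + normCount B Φ l 4 b ≤
      normCount B Φ l 2 0 + normCount B Φ l 4 0 + finrank ℝ (span ℝ (Φ : Set E)) := by
  have hF := h.isShortFrame_shortFrame he he2 fun t ht _ => by
    obtain ⟨s, hs, hs2, hst⟩ := h.exists_apply_ne_zero (fun γ => B γ γ = 2)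
      (fun δ hδ ε _ hε => (h.norm_formReflection hδ ε).trans hε) he ht he2
    exact ⟨s, hmem s hs hs2, hst⟩
  have hcount (c : ℝ) : normCount B Φ l 2 c = valueCount (shortFrame B Φ e) l c := by
    rw [normCount, valueCount]
    congr 2
    ext f
    simp only [Finset.mem_filter]
    exact ⟨fun ⟨hf, hf2, hfc⟩ => ⟨hmem f hf hf2, hfc⟩,
      fun ⟨hf, hfc⟩ => ⟨hF.subset hf, hF.norm_eq f hf, hfc⟩⟩
  have hle := hF.valueCount_sub_le (l := l) h.symm hab
  have hrank := finrank_mono (span_mono (R := ℝ) (Finset.coe_subset.2 hF.subset))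
  rw [hcount, hcount]
  omega

end IsTwoLengthRootSystem

-- Of the two estimates for `Φ` and its dual, either one gives the bound by itself, or both long and
-- short roots leave room for `2`, which add up to the rank `4`.
lemma IsTypeF4.normCount_add_le (h : IsTypeF4 B Φ) (hab : IntIndependent a b) :
    normCount B Φ l 2 a + normCount B Φ l 4 b ≤ normCount B Φ l 2 0 + normCount B Φ l 4 0 + 4 := by
  have hdual := h.dual.normCount_add_le_or (l := l) hab.dual
  have h2 := h.normCount_dualRoots_two (l := l) 0
  have h4 := h.normCount_dualRoots_four (l := l) 0
  rw [mul_zero] at h2 h4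
  rw [h.normCount_dualRoots_two, h.normCount_dualRoots_four, h2, h4] at hdual
  have := h.normCount_add_le_or (l := l) hab
  omega

namespace IsTwoLengthRootSystem

lemma normCount_add_le (h : IsTwoLengthRootSystem B Φ 2) (hab : IntIndependent a b) :
    normCount B Φ l 2 a + normCount B Φ l 4 b ≤
      normCount B Φ l 2 0 + normCount B Φ l 4 0 + finrank ℝ (span ℝ (Φ : Set E)) := by
  by_cases hB : ∀ e ∈ Φ, B e e = 2 → ∃ s ∈ Φ, B s s = 2 ∧ s ∉ shortFrame B Φ e
  · by_cases hC : ∀ e ∈ dualRoots B Φ, B e e = 2 →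
        ∃ s ∈ dualRoots B Φ, B s s = 2 ∧ s ∉ shortFrame B (dualRoots B Φ) e
    · have hF4 : IsTypeF4 B Φ := ⟨h, hB, hC⟩
      rw [hF4.finrank_span]
      exact hF4.normCount_add_le hab
    · push Not at hC
      obtain ⟨e, he, he2, hmem⟩ := hC
      have hle := h.dual.normCount_add_le_of_forall_mem_shortFrame (l := l) hab.dual he he2 hmem
      have h2 := h.normCount_dualRoots_two (l := l) 0
      have h4 := h.normCount_dualRoots_four (l := l) 0
      rw [mul_zero] at h2 h4
      rw [h.normCount_dualRoots_two, h.normCount_dualRoots_four, h2, h4, h.span_dualRoots] at hle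
      linarith
  · push Not at hB
    obtain ⟨e, he, he2, hmem⟩ := hB
    exact h.normCount_add_le_of_forall_mem_shortFrame hab he he2 hmem

theorem card_le_of_intIndependent (h : IsTwoLengthRootSystem B Φ 2) (l : E →ₗ[ℝ] ℝ)
    (hab : IntIndependent a b) :
    #{α ∈ Φ | B α α = 2 ∧ l α = a} + #{α ∈ Φ | B α α = 2 * 2 ∧ l α = b} ≤
      #{α ∈ Φ | l α = 0} + finrank ℝ (span ℝ (Φ : Set E)) := by
  have hzero : normCount B Φ l 2 0 + normCount B Φ l 4 0 = #{α ∈ Φ | l α = 0} := by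
    rw [normCount, normCount, ← Nat.cast_add, ← Finset.card_union_of_disjoint, ← Finset.filter_or]
    · congr 2
      refine Finset.filter_congr fun α hα => ?_
      have := h.norm_eq_two_or_four hα
      tauto
    · refine Finset.disjoint_filter.2 fun α _ h2 h4 => ?_
      linarith [h2.1, h4.1]
  have hle := h.normCount_add_le (l := l) hab
  rw [hzero] at hle
  norm_num only [normCount] at hle ⊢
  exact_mod_cast hle

end IsTwoLengthRootSystem

end DoublyLaced

section Assembly

open Module Submodule
open scoped Finset

variable {E : Type*} [AddCommGroup E] [Module ℝ E] {B : E →ₗ[ℝ] E →ₗ[ℝ] ℝ} {Φ : Finset E}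
  {κ : E → ℝ} {t : ℝ}

lemma formReflection_smul (ht : t ≠ 0) (α β : E) :
    formReflection (t • B) α β = formReflection B α β := by
  simp only [formReflection, LinearMap.smul_apply, smul_eq_mul, mul_left_comm _ t,
    mul_div_mul_left _ _ ht]

lemma IsGenericParameter.smul (hκ : IsGenericParameter B Φ κ) (ht : t ≠ 0) :
    IsGenericParameter (t • B) Φ κ where
  invariant := by simpa only [formReflection_smul ht] using hκ.invariant
  ne_zero := hκ.ne_zero
  independent := by simpa [ht] using hκ.independent

lemma IsEuclideanRootSystem.smul (h : IsEuclideanRootSystem B Φ) (ht : 0 < t) :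
    IsEuclideanRootSystem (t • B) Φ where
  symm x y := congrArg (t * ·) (h.symm x y)
  pos x hx := mul_pos ht (h.pos x hx)
  zero_notMem := h.zero_notMem
  reflection_mem := by simpa only [formReflection_smul ht.ne'] using h.reflection_mem
  integral := by
    simpa only [LinearMap.smul_apply, smul_eq_mul, mul_left_comm _ t, mul_div_mul_left _ _ ht.ne']
      using h.integral
  reduced := h.reduced

lemma IsIrreducibleRootSystem.smul (h : IsIrreducibleRootSystem B Φ) (ht : 0 < t) :
    IsIrreducibleRootSystem (t • B) Φ where
  toIsEuclideanRootSystem := h.toIsEuclideanRootSystem.smul ht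
  nonempty := h.nonempty
  eq_of_summand X hX := h.eq_of_summand X ⟨hX.subset, fun α hα β hβ hαβ =>
    hX.mem_of_ne_zero α hα β hβ (mul_ne_zero ht.ne' hαβ)⟩

lemma IsTwoLengthRootSystem.card_eq_parameter {m : ℝ} (h : IsTwoLengthRootSystem B Φ m)
    (hm : m ≠ 1) (hκ : IsGenericParameter B Φ κ) {σ τ : E} (hσ : σ ∈ Φ) (hτ : τ ∈ Φ)
    (hσ2 : B σ σ = 2) (hτ2 : B τ τ = 2 * m) (l : E →ₗ[ℝ] ℝ) :
    #{α ∈ Φ | l α = κ α} =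
      #{α ∈ Φ | B α α = 2 ∧ l α = κ σ} + #{α ∈ Φ | B α α = 2 * m ∧ l α = κ τ} := by
  rw [← Finset.card_union_of_disjoint, ← Finset.filter_or]
  · refine congrArg _ (Finset.filter_congr fun α hα => ?_)
    have hκσ (hα2 : B α α = 2) : κ α = κ σ :=
      h.parameter_eq_of_norm_eq hκ hα hσ (hα2.trans hσ2.symm)
    have hκτ (hα2 : B α α = 2 * m) : κ α = κ τ :=
      h.parameter_eq_of_norm_eq hκ hα hτ (hα2.trans hτ2.symm)
    have := h.norm_eq α hα
    grind
  · refine Finset.disjoint_filter.2 fun α _ hα hα' => hm ?_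
    linarith [hα.1, hα'.1]

lemma IsIrreducibleRootSystem.residualBound_of_norm_eq (h : IsIrreducibleRootSystem B Φ)
    (hκ : IsGenericParameter B Φ κ) {n : ℝ} (hn : ∀ α ∈ Φ, B α α = n) (l : E →ₗ[ℝ] ℝ) :
    ResidualBound Φ κ l := by
  obtain ⟨σ, hσ⟩ := h.nonempty
  have hcount : #{α ∈ Φ | l α = κ α} = #{α ∈ Φ | l α = κ σ} :=
    congrArg _ <| Finset.filter_congr fun α hα => by
      rw [h.parameter_eq_of_norm_eq hκ hα hσ ((hn α hα).trans (hn σ hσ).symm)]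
  rw [ResidualBound, hcount]
  exact h.card_eq_const_le l (hκ.ne_zero σ hσ)

lemma IsTwoLengthRootSystem.residualBound {m : ℝ} (h : IsTwoLengthRootSystem B Φ m)
    (hm : m = 2 ∨ m = 3) (hκ : IsGenericParameter B Φ κ) (l : E →ₗ[ℝ] ℝ) :
    ResidualBound Φ κ l := by
  obtain ⟨σ, hσ, hσ2⟩ := h.exists_short
  obtain ⟨τ, hτ, hτ2⟩ := h.exists_long
  have hm1 : m ≠ 1 := by rcases hm with rfl | rfl <;> norm_num
  rw [ResidualBound, h.card_eq_parameter hm1 hκ hσ hτ hσ2 hτ2]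
  rcases hm with rfl | rfl
  · exact h.card_le_of_intIndependent l
      (hκ.independent σ hσ τ hτ (by rw [hσ2, hτ2]; norm_num))
  · exact h.card_le_of_typeG2 l (hκ.ne_zero σ hσ) (hκ.ne_zero τ hτ)

lemma IsIrreducibleRootSystem.residualBound (h : IsIrreducibleRootSystem B Φ)
    (hκ : IsGenericParameter B Φ κ) (l : E →ₗ[ℝ] ℝ) : ResidualBound Φ κ l := by
  rcases h.exists_norm_eq_or with ⟨n, hn⟩ | ⟨σ, hσ, τ, hτ, hτσ, hnorm⟩
  · exact h.residualBound_of_norm_eq hκ hn l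
  obtain ⟨m, hm, hτm⟩ : ∃ m : ℝ, (m = 2 ∨ m = 3) ∧ B τ τ = m * B σ σ := by
    rcases hτσ with hτσ | hτσ
    exacts [⟨2, .inl rfl, hτσ⟩, ⟨3, .inr rfl, hτσ⟩]
  have hσ0 := h.norm_pos hσ
  have ht : 0 < 2 / B σ σ := by positivity
  have hshort {α : E} (hα : B α α = B σ σ) : ((2 / B σ σ) • B) α α = 2 := by
    rw [LinearMap.smul_apply, LinearMap.smul_apply, smul_eq_mul, hα, div_mul_cancel₀ _ hσ0.ne']
  have hlong {α : E} (hα : B α α = B τ τ) : ((2 / B σ σ) • B) α α = 2 * m := by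
    rw [LinearMap.smul_apply, LinearMap.smul_apply, smul_eq_mul, hα, hτm]
    field_simp
  exact IsTwoLengthRootSystem.residualBound ⟨h.smul ht, fun α hα => (hnorm α hα).imp hshort hlong,
    ⟨σ, hσ, hshort rfl⟩, ⟨τ, hτ, hlong rfl⟩⟩ hm (hκ.smul ht.ne') l

theorem IsEuclideanRootSystem.residualBound (h : IsEuclideanRootSystem B Φ)
    (hκ : IsGenericParameter B Φ κ) (l : E →ₗ[ℝ] ℝ) : ResidualBound Φ κ l :=
  h.residualBound_of_irreducible (fun _ hΨ hκΨ => hΨ.residualBound hκΨ l) hκ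

end Assembly

section RootPairing

open Module Submodule
open scoped Finset

namespace RedRootSystem

lemma coroot_injOn : Set.InjOn rs.coroot rs.roots := fun α hα β hβ hαβ => by
  have : IsAddTorsionFree (Dual ℝ V) := .of_isTorsionFree ℝ _
  have hmapsTo {γ : Dual ℝ V} (hγ : γ ∈ rs.roots) :
      Set.MapsTo (preReflection γ (Dual.eval ℝ V (rs.coroot γ))) rs.roots rs.roots :=
    fun δ hδ => rs.reflect_mem γ hγ δ hδ
  have hα2 : Dual.eval ℝ V (rs.coroot α) α = 2 := rs.coroot_two α hα
  have hβ2 : Dual.eval ℝ V (rs.coroot β) β = 2 := rs.coroot_two β hβ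
  exact eq_of_mapsTo_reflection_of_mem rs.roots.finite_toSet hα2 hβ2 (hαβ ▸ hα2) (hαβ ▸ hβ2)
    (hmapsTo hα) (hmapsTo hβ) hβ

lemma exists_int_eq_pairing (α β : rs.roots) :
    ∃ z : ℤ, (z : ℝ) = (α : Dual ℝ V) (rs.coroot β) :=
  (rs.integral β β.2 α α.2).imp fun _ => Eq.symm

variable [FiniteDimensional ℝ V]

/-- The root pairing between `V*` and `V`, indexed by the roots themselves, given by the coroots
of `rs`. -/
def toRootPairing : RootPairing rs.roots ℝ (Dual ℝ V) V :=
  haveI : (LinearMap.id : Dual ℝ V →ₗ[ℝ] V →ₗ[ℝ] ℝ).IsPerfPair := .id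
  .mk'' LinearMap.id (.subtype _) ⟨fun α => rs.coroot α, rs.coroot_injOn.injective⟩
    (fun α => rs.coroot_two α α.2)
    (by rintro α - ⟨β, rfl⟩; exact ⟨⟨_, rs.reflect_mem α α.2 β β.2⟩, rfl⟩)
    ((congrArg _ Subtype.range_coe).trans rs.spanning)

@[simp] lemma toRootPairing_root (α : rs.roots) : rs.toRootPairing.root α = α := rfl

@[simp] lemma toRootPairing_pairing (α β : rs.roots) :
    rs.toRootPairing.pairing α β = (α : Dual ℝ V) (rs.coroot β) := rfl

instance : rs.toRootPairing.IsRootSystem := RootPairing.isRootSystem_mk'' rs.exists_int_eq_pairing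

instance : rs.toRootPairing.IsCrystallographic := ⟨rs.exists_int_eq_pairing⟩

instance : rs.toRootPairing.IsReduced where
  eq_or_eq_neg α β h := by
    simp only [toRootPairing_root] at h ⊢
    rw [LinearIndependent.pair_iff' fun h0 => rs.zero_not_mem (h0 ▸ α.2)] at h
    push Not at h
    obtain ⟨c, hc⟩ := h
    rcases rs.reduced α α.2 c (hc ▸ β.2) with rfl | rfl
    · exact .inl (by rw [← hc, one_smul])
    · exact .inr (by rw [← hc, neg_one_smul, neg_neg])

lemma coe_reflectionPerm (α β : rs.roots) :
    (rs.toRootPairing.reflectionPerm α β : Dual ℝ V) = β - (β : Dual ℝ V) (rs.coroot α) • α :=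
  rs.toRootPairing.root_reflectionPerm α β

lemma rootForm_pos {x : Dual ℝ V} (hx : x ≠ 0) : 0 < rs.toRootPairing.RootForm x x := by
  rw [RootPairing.rootForm_apply_apply]
  refine (Finset.sum_nonneg fun _ _ => mul_self_nonneg _).lt_of_ne' fun h0 => hx ?_
  have hcoroot (α : rs.roots) : x (rs.toRootPairing.coroot α) = 0 := mul_self_eq_zero.1
    ((Finset.sum_eq_zero_iff_of_nonneg fun _ _ => mul_self_nonneg _).1 h0 α (Finset.mem_univ α))
  have hspan : span ℝ (Set.range rs.toRootPairing.coroot) ≤ LinearMap.ker x :=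
    span_le.2 (Set.range_subset_iff.2 hcoroot)
  exact LinearMap.ker_eq_top.1 (top_le_iff.1 (RootPairing.IsRootSystem.span_coroot_eq_top.ge.trans
    hspan))

lemma two_mul_rootForm_div {α β : Dual ℝ V} (hα : α ∈ rs.roots) (hβ : β ∈ rs.roots) :
    2 * rs.toRootPairing.RootForm α β / rs.toRootPairing.RootForm α α = β (rs.coroot α) := by
  have hα0 : rs.toRootPairing.RootForm α α ≠ 0 :=
    (rs.rootForm_pos fun h0 => rs.zero_not_mem (h0 ▸ hα)).ne'
  rw [div_eq_iff hα0, ← rs.toRootPairing.rootForm_symmetric.eq]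
  exact (rs.toRootPairing.posRootForm ℝ).two_mul_apply_root_root ⟨β, hβ⟩ ⟨α, hα⟩

lemma formReflection_rootForm {α β : Dual ℝ V} (hα : α ∈ rs.roots) (hβ : β ∈ rs.roots) :
    formReflection rs.toRootPairing.RootForm α β = β - β (rs.coroot α) • α := by
  rw [formReflection, rs.two_mul_rootForm_div hα hβ]

lemma isEuclideanRootSystem_filter_mem (W : Submodule ℝ (Dual ℝ V)) :
    IsEuclideanRootSystem rs.toRootPairing.RootForm {α ∈ rs.roots | α ∈ W} where
  symm := rs.toRootPairing.rootForm_symmetric.eq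
  pos _ := rs.rootForm_pos
  zero_notMem h0 := rs.zero_not_mem (Finset.mem_filter.1 h0).1
  reflection_mem α hα β hβ := by
    rw [Finset.mem_filter] at *
    rw [rs.formReflection_rootForm hα.1 hβ.1]
    exact ⟨rs.reflect_mem α hα.1 β hβ.1, W.sub_mem hβ.2 (W.smul_mem _ hα.2)⟩
  integral α hα β hβ := by
    rw [Finset.mem_filter] at *
    rw [rs.two_mul_rootForm_div hα.1 hβ.1]
    exact rs.integral α hα.1 β hβ.1
  reduced α hα c hc := rs.reduced α (Finset.mem_filter.1 hα).1 c (Finset.mem_filter.1 hc).1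

end RedRootSystem

end RootPairing

section NonvanishingFunctionals

open Module Submodule

variable {K : Type*} [NormedAddCommGroup K] [NormedSpace ℝ K] {F : Set (Dual ℝ K)} {f : Dual ℝ K}

lemma dense_setOf_apply_ne_zero (hf : f ≠ 0) : Dense {k | f k ≠ 0} := by
  change Dense ((LinearMap.ker f : Submodule ℝ K) : Set K)ᶜ
  rw [← interior_eq_empty_iff_dense_compl, ← Set.not_nonempty_iff_eq_empty]
  exact fun hne => hf (LinearMap.ker_eq_top.1 (eq_top_of_nonempty_interior' _ hne))

lemma setOf_apply_eq_zero_imp (F : Set (Dual ℝ K)) :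
    {k | ∀ f ∈ F, f k = 0 → f = 0} = ⋂ f ∈ F \ {0}, {k | f k ≠ 0} := by
  ext k
  simp only [Set.mem_ofPred_eq, Set.mem_iInter, Set.mem_sdiff, Set.mem_singleton_iff, and_imp]
  exact forall₂_congr fun f _ => not_imp_not.symm

variable [FiniteDimensional ℝ K]

lemma isOpen_setOf_apply_ne_zero (f : Dual ℝ K) : IsOpen {k | f k ≠ 0} :=
  isOpen_ne_fun f.continuous_of_finiteDimensional continuous_const

lemma dense_setOf_apply_eq_zero_imp (hF : F.Countable) :
    Dense {k | ∀ f ∈ F, f k = 0 → f = 0} := by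
  have : CompleteSpace K := FiniteDimensional.complete ℝ K
  rw [setOf_apply_eq_zero_imp]
  exact dense_biInter_of_isOpen (fun f _ => isOpen_setOf_apply_ne_zero f) (hF.mono Set.sdiff_subset)
    fun f hf => dense_setOf_apply_ne_zero hf.2

lemma isOpen_setOf_apply_eq_zero_imp (hF : F.Finite) :
    IsOpen {k | ∀ f ∈ F, f k = 0 → f = 0} := by
  rw [setOf_apply_eq_zero_imp]
  exact (hF.subset Set.sdiff_subset).isOpen_biInter fun f _ => isOpen_setOf_apply_ne_zero f

end NonvanishingFunctionals

section GenericPoints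

open Module Submodule
open scoped Finset

namespace RedRootSystem

/-- The evaluation of parameter functions at a root. -/
def paramEval (α : rs.roots) : Dual ℝ (ParamSub rs) :=
  LinearMap.proj α ∘ₗ (ParamSub rs).subtype

@[simp] lemma paramEval_apply (α : rs.roots) (k : ParamSub rs) :
    rs.paramEval α k = (k : rs.roots → ℝ) α := rfl

/-- The parameter function with constant value `1`. -/
def oneParam : ParamSub rs := ⟨1, fun _ _ => rfl⟩

@[simp] lemma oneParam_apply (α : rs.roots) : (rs.oneParam : rs.roots → ℝ) α = 1 := rfl

/-- The extension by zero of a parameter function to all functionals. -/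
def extendParam (k : ParamSub rs) : Dual ℝ V → ℝ := Function.extend (↑) (k : rs.roots → ℝ) 0

lemma extendParam_coe (k : ParamSub rs) (α : rs.roots) :
    rs.extendParam k α = (k : rs.roots → ℝ) α :=
  Subtype.val_injective.extend_apply _ _ α

lemma ncard_setOf_roots (p : Dual ℝ V → Prop) :
    {α : rs.roots | p α}.ncard = #{α ∈ rs.roots | p α} := by
  rw [← Set.ncard_image_of_injective _ Subtype.val_injective, ← Set.ncard_coe_finset]
  congr 1
  ext α
  simp [and_comm]

lemma isLinResidual_iff (k : ParamSub rs) (x : V) :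
    IsLinResidual rs (k : rs.roots → ℝ) x ↔
      #{α ∈ rs.roots | α x = rs.extendParam k α} =
        #{α ∈ rs.roots | α x = 0} + finrank ℝ V := by
  simp only [IsLinResidual, ← extendParam_coe, ← ncard_setOf_roots]

/-- The roots `α` for which `α(ξ(k)) = k(α)` holds identically in `k`. -/
def residualRoots (ξ : ParamSub rs →ₗ[ℝ] V) : Set rs.roots :=
  {α | (α : Dual ℝ V) ∘ₗ ξ = rs.paramEval α}

lemma residualRoots_injOn :
    Set.InjOn rs.residualRoots {ξ | span ℝ ((↑) '' rs.residualRoots ξ : Set (Dual ℝ V)) = ⊤} := by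
  intro ξ hξ η _ hξη
  ext k
  refine eval_apply_injective ℝ (LinearMap.ext_on hξ ?_)
  rintro _ ⟨α, hα, rfl⟩
  have hα' : α ∈ rs.residualRoots η := hξη ▸ hα
  exact (LinearMap.congr_fun hα k).trans (LinearMap.congr_fun hα' k).symm

/-- The integral linear relations between two values of a parameter function. -/
def paramRelations : Set (Dual ℝ (ParamSub rs)) :=
  Set.range fun q : (rs.roots × rs.roots) × ℤ × ℤ =>
    (q.2.1 : ℝ) • rs.paramEval q.1.1 + (q.2.2 : ℝ) • rs.paramEval q.1.2

lemma add_eq_zero_of_paramRelation {α β : rs.roots} {k : ParamSub rs}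
    (hk : ∀ f ∈ rs.paramRelations, f k = 0 → f = 0) {m n : ℤ}
    (h : m * (k : rs.roots → ℝ) α + n * (k : rs.roots → ℝ) β = 0) (k' : ParamSub rs) :
    m * (k' : rs.roots → ℝ) α + n * (k' : rs.roots → ℝ) β = 0 :=
  LinearMap.congr_fun (hk _ ⟨((α, β), m, n), rfl⟩ h) k'

lemma exists_isLinResidual_generic {ξ : ParamSub rs →ₗ[ℝ] V} (hξ : IsGeneric rs ξ) :
    ∃ k : ParamSub rs, IsLinResidual rs (k : rs.roots → ℝ) (ξ k) ∧
      (∀ α : rs.roots, (α : Dual ℝ V) (ξ k) = (k : rs.roots → ℝ) α → α ∈ rs.residualRoots ξ) ∧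
      ∀ f ∈ rs.paramRelations, f k = 0 → f = 0 := by
  obtain ⟨U, hUopen, hUdense, hU⟩ := hξ
  have hcountable : (Set.range (fun α : rs.roots => (α : Dual ℝ V) ∘ₗ ξ - rs.paramEval α) ∪
      rs.paramRelations).Countable := (Set.countable_range _).union (Set.countable_range _)
  obtain ⟨k, hkU, hk⟩ :=
    (dense_setOf_apply_eq_zero_imp hcountable).inter_open_nonempty U hUopen hUdense.nonempty
  exact ⟨k, hU k hkU, fun α hα => sub_eq_zero.1 (hk _ (.inl ⟨α, rfl⟩) (sub_eq_zero.2 hα)),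
    fun f hf => hk f (.inr hf)⟩

variable [FiniteDimensional ℝ V]

/-- The parameter function assigning to a root its squared length. -/
def normParam : ParamSub rs :=
  ⟨fun α => rs.toRootPairing.RootForm α α, fun α β =>
    rs.toRootPairing.rootForm_reflection_reflection_apply α β β⟩

lemma normParam_apply (α : rs.roots) :
    (rs.normParam : rs.roots → ℝ) α = rs.toRootPairing.RootForm α α := rfl

lemma intIndependent_of_rootForm_ne {k : ParamSub rs}
    (hk : ∀ f ∈ rs.paramRelations, f k = 0 → f = 0) {α β : rs.roots}
    (hαβ : rs.toRootPairing.RootForm α α ≠ rs.toRootPairing.RootForm β β) :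
    IntIndependent ((k : rs.roots → ℝ) α) ((k : rs.roots → ℝ) β) := by
  intro m n h
  have hone := rs.add_eq_zero_of_paramRelation hk h rs.oneParam
  have hnorm := rs.add_eq_zero_of_paramRelation hk h rs.normParam
  simp only [oneParam_apply, normParam_apply, mul_one] at hone hnorm
  have hm : (m : ℝ) = 0 := (mul_eq_zero_iff_right (sub_ne_zero.2 hαβ)).1 (by
    linear_combination hnorm - rs.toRootPairing.RootForm β β * hone)
  rw [hm, zero_add] at hone
  exact ⟨by exact_mod_cast hm, by exact_mod_cast hone⟩

lemma isGenericParameter_extendParam {k : ParamSub rs}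
    (hk : ∀ f ∈ rs.paramRelations, f k = 0 → f = 0) (W : Submodule ℝ (Dual ℝ V)) :
    IsGenericParameter rs.toRootPairing.RootForm {α ∈ rs.roots | α ∈ W} (rs.extendParam k) where
  invariant α hα β hβ := by
    have hα := (Finset.mem_filter.1 hα).1
    have hβ := (Finset.mem_filter.1 hβ).1
    rw [rs.formReflection_rootForm hα hβ]
    exact (rs.extendParam_coe k ⟨_, rs.reflect_mem α hα β hβ⟩).trans
      ((k.2 ⟨α, hα⟩ ⟨β, hβ⟩).trans (rs.extendParam_coe k ⟨β, hβ⟩).symm)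
  ne_zero α hα h0 := by
    lift α to rs.roots using (Finset.mem_filter.1 hα).1
    rw [extendParam_coe] at h0
    simpa using rs.add_eq_zero_of_paramRelation (α := α) (β := α) (m := 1) (n := 0) hk
      (by simp [h0]) rs.oneParam
  independent α hα β hβ hαβ := by
    lift α to rs.roots using (Finset.mem_filter.1 hα).1
    lift β to rs.roots using (Finset.mem_filter.1 hβ).1
    rw [extendParam_coe, extendParam_coe]
    exact rs.intIndependent_of_rootForm_ne hk hαβ

-- The residual bound is applied to the parabolic subsystem cut out by the span.
lemma span_residualRoots_eq_top {ξ : ParamSub rs →ₗ[ℝ] V} (hξ : IsGeneric rs ξ) :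
    span ℝ ((↑) '' rs.residualRoots ξ : Set (Dual ℝ V)) = ⊤ := by
  obtain ⟨k, hres, hmem, hk⟩ := rs.exists_isLinResidual_generic hξ
  set W := span ℝ ((↑) '' rs.residualRoots ξ : Set (Dual ℝ V))
  have hbound := (rs.isEuclideanRootSystem_filter_mem W).residualBound
    (rs.isGenericParameter_extendParam hk W) (Dual.eval ℝ V (ξ k))
  have hcount : #{α ∈ rs.roots | α (ξ k) = rs.extendParam k α} ≤
      #{α ∈ {α ∈ rs.roots | α ∈ W} | Dual.eval ℝ V (ξ k) α = rs.extendParam k α} := by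
    refine Finset.card_le_card fun α hα => ?_
    obtain ⟨hα, hαk⟩ := Finset.mem_filter.1 hα
    refine Finset.mem_filter.2 ⟨Finset.mem_filter.2 ⟨hα, subset_span ⟨⟨α, hα⟩, ?_, rfl⟩⟩, hαk⟩
    exact hmem _ (hαk.trans (rs.extendParam_coe k ⟨α, hα⟩))
  have hzero : #{α ∈ {α ∈ rs.roots | α ∈ W} | Dual.eval ℝ V (ξ k) α = 0} ≤
      #{α ∈ rs.roots | α (ξ k) = 0} :=
    Finset.card_le_card (Finset.filter_subset_filter _ (Finset.filter_subset _ _))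
  have hrank : finrank ℝ (span ℝ ({α ∈ rs.roots | α ∈ W} : Finset (Dual ℝ V))) ≤ finrank ℝ W :=
    finrank_mono (span_le.2 fun α hα => (Finset.mem_filter.1 hα).2)
  have hle : finrank ℝ (Dual ℝ V) ≤ finrank ℝ W := by
    rw [rs.isLinResidual_iff] at hres
    rw [ResidualBound] at hbound
    rw [Subspace.dual_finrank_eq]
    omega
  exact eq_top_of_finrank_eq (W.finrank_le.antisymm hle)

theorem finite_setOf_isGeneric : {ξ : ParamSub rs →ₗ[ℝ] V | IsGeneric rs ξ}.Finite :=
  .of_finite_image (Set.toFinite _)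
    (rs.residualRoots_injOn.mono fun _ hξ => rs.span_residualRoots_eq_top hξ)

end RedRootSystem

end GenericPoints

section WeylStability

open Module

namespace RedRootSystem

variable {rs} [FiniteDimensional ℝ V]

lemma apply_reflV (α γ : rs.roots) (v : V) :
    (γ : Dual ℝ V) (reflV rs α v) = (rs.toRootPairing.reflectionPerm α γ : Dual ℝ V) v := by
  rw [coe_reflectionPerm]
  simp [reflV, mul_comm]

lemma ncard_setOf_apply_reflV {f : rs.roots → ℝ} (hf : Invariant rs f) (α : rs.roots) (v : V) :
    {γ : rs.roots | (γ : Dual ℝ V) (reflV rs α v) = f γ}.ncard =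
      {γ : rs.roots | (γ : Dual ℝ V) v = f γ}.ncard := by
  have hpreimage : {γ : rs.roots | (γ : Dual ℝ V) (reflV rs α v) = f γ} =
      rs.toRootPairing.reflectionPerm α ⁻¹' {γ : rs.roots | (γ : Dual ℝ V) v = f γ} := by
    ext γ
    simp only [Set.mem_ofPred_eq, Set.mem_preimage, apply_reflV]
    rw [← hf α γ]
    exact Eq.congr_right (congrArg f (Subtype.ext (rs.coe_reflectionPerm α γ).symm))
  rw [hpreimage, Set.ncard_preimage_of_injective_subset_range (Equiv.injective _)
    ((Equiv.range_eq_univ _).symm ▸ Set.subset_univ _)]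

lemma isLinResidual_reflV_iff {k : rs.roots → ℝ} (hk : Invariant rs k) (α : rs.roots) (v : V) :
    IsLinResidual rs k (reflV rs α v) ↔ IsLinResidual rs k v := by
  rw [IsLinResidual, ncard_setOf_apply_reflV hk,
    ncard_setOf_apply_reflV (f := fun _ => 0) (fun _ _ => rfl), ← IsLinResidual]

theorem isGeneric_weylOf_comp {ξ : ParamSub rs →ₗ[ℝ] V} (hξ : IsGeneric rs ξ)
    {L : List (Dual ℝ V)} (hL : ∀ α ∈ L, α ∈ rs.roots) : IsGeneric rs (weylOf rs L ∘ₗ ξ) := by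
  obtain ⟨U, hUopen, hUdense, hU⟩ := hξ
  refine ⟨U, hUopen, hUdense, fun k hk => ?_⟩
  induction L with
  | nil => exact hU k hk
  | cons α L ih =>
    rw [List.forall_mem_cons] at hL
    exact (isLinResidual_reflV_iff k.2 ⟨α, hL.1⟩ _).2 (ih hL.2)

end RedRootSystem

end WeylStability

section Existence

open Module

lemma exists_forall_comp_eq [FiniteDimensional ℝ V] {ι K : Type*} [AddCommGroup K] [Module ℝ K]
    (b : Basis ι ℝ (Dual ℝ V)) (f : ι → Dual ℝ K) : ∃ ξ : K →ₗ[ℝ] V, ∀ i, b i ∘ₗ ξ = f i := by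
  refine ⟨(evalEquiv ℝ V).symm ∘ₗ (b.constr ℝ).toLinearMap ∘ₗ LinearMap.pi f, fun i => ?_⟩
  ext k
  exact (apply_evalEquiv_symm_apply ℝ V _ _).trans (b.constr_basis ℝ _ i)

lemma mem_support_of_height_eq_one {ι R M N : Type*} [CommRing R] [IsDomain R] [CharZero R]
    [AddCommGroup M] [Module R M] [AddCommGroup N] [Module R N] [Finite ι]
    {P : RootPairing ι R M N} [P.IsCrystallographic] [P.IsReduced] (b : P.Base) {i : ι}
    (hi : b.height i = 1) : i ∈ b.support := by
  have hpos : b.IsPos i := b.isPos_iff.2 (hi ▸ one_pos)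
  refine hpos.induction_on_add (p := fun i => b.height i = 1 → i ∈ b.support)
    (fun j hj _ => hj) (fun j l m hm _ hl hm1 => ?_) hi
  rw [b.height_add hm, RootPairing.Base.height_one_of_mem_support hl, add_eq_right] at hm1
  exact (b.height_ne_zero j hm1).elim

namespace RedRootSystem

variable [FiniteDimensional ℝ V] {rs} {ξ : ParamSub rs →ₗ[ℝ] V} {b : rs.toRootPairing.Base}

lemma apply_oneParam_eq_height (hξ : ∀ α ∈ b.support, (α : Dual ℝ V) ∘ₗ ξ = rs.paramEval α)
    (α : rs.roots) : (α : Dual ℝ V) (ξ rs.oneParam) = b.height α := by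
  obtain ⟨f, -, -, hf⟩ := b.exists_root_eq_sum_int α
  have hsimple : ∀ β ∈ b.support, (β : Dual ℝ V) (ξ rs.oneParam) = 1 := fun β hβ =>
    LinearMap.congr_fun (hξ β hβ) rs.oneParam
  rw [RootPairing.Base.height_eq_sum hf, ← rs.toRootPairing_root α, hf]
  simp only [toRootPairing_root, LinearMap.coe_sum, Finset.sum_apply, LinearMap.smul_apply,
    zsmul_eq_mul, Int.cast_sum]
  exact Finset.sum_congr rfl fun β hβ => by rw [hsimple β hβ, mul_one]

lemma isGeneric_of_forall_support
    (hξ : ∀ α ∈ b.support, (α : Dual ℝ V) ∘ₗ ξ = rs.paramEval α) : IsGeneric rs ξ := by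
  let F : Set (Dual ℝ (ParamSub rs)) := Set.range (fun α : rs.roots => (α : Dual ℝ V) ∘ₗ ξ) ∪
    Set.range (fun α : rs.roots => (α : Dual ℝ V) ∘ₗ ξ - rs.paramEval α)
  have hF : F.Finite := (Set.finite_range _).union (Set.finite_range _)
  refine ⟨_, isOpen_setOf_apply_eq_zero_imp hF, dense_setOf_apply_eq_zero_imp hF.countable,
    fun k hk => ?_⟩
  have hresidual : {α : rs.roots | (α : Dual ℝ V) (ξ k) = (k : rs.roots → ℝ) α} = b.support := by
    refine Set.Subset.antisymm (fun α hα => mem_support_of_height_eq_one b ?_) fun α hα =>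
      LinearMap.congr_fun (hξ α hα) k
    have hα := hk _ (.inr ⟨α, rfl⟩) (sub_eq_zero.2 hα)
    have := LinearMap.congr_fun (sub_eq_zero.1 hα) rs.oneParam
    rw [LinearMap.comp_apply, apply_oneParam_eq_height hξ, paramEval_apply, oneParam_apply] at this
    exact_mod_cast this
  have hzero : {α : rs.roots | (α : Dual ℝ V) (ξ k) = 0} = ∅ := by
    refine Set.eq_empty_of_forall_notMem fun α hα => b.height_ne_zero α ?_
    have := LinearMap.congr_fun (hk _ (.inl ⟨α, rfl⟩) hα) rs.oneParam
    rw [LinearMap.comp_apply, apply_oneParam_eq_height hξ, LinearMap.zero_apply] at this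
    exact_mod_cast this
  rw [IsLinResidual, hresidual, hzero, Set.ncard_empty, Set.ncard_coe_finset, zero_add,
    ← Subspace.dual_finrank_eq, finrank_eq_card_basis b.toWeightBasis, Fintype.card_coe]

variable (rs) in
theorem exists_isGeneric : ∃ ξ : ParamSub rs →ₗ[ℝ] V, IsGeneric rs ξ := by
  obtain ⟨b⟩ := rs.toRootPairing.nonempty_base
  obtain ⟨ξ, hξ⟩ := exists_forall_comp_eq b.toWeightBasis fun α => rs.paramEval α
  refine ⟨ξ, isGeneric_of_forall_support (b := b) fun α hα => ?_⟩
  rw [← hξ ⟨α, hα⟩, b.toWeightBasis_apply, toRootPairing_root]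

end RedRootSystem

end Existence

/-- The set of generic linear residual points of a reduced root system `R1` spanning
`V*` is finite, nonempty, and stable under the action of the Weyl group `W0` (generated
by the reflections in the roots) by postcomposition. -/
theorem generic_residual_points_finite_nonempty_weyl_stable (V : Type*) [AddCommGroup V]
    [Module ℝ V] [FiniteDimensional ℝ V] (rs : RedRootSystem V) :
    {ξ : (ParamSub rs) →ₗ[ℝ] V | IsGeneric rs ξ}.Finite ∧
    (∃ ξ : (ParamSub rs) →ₗ[ℝ] V, IsGeneric rs ξ) ∧
    (∀ L : List (Module.Dual ℝ V), (∀ α ∈ L, α ∈ rs.roots) →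
      ∀ ξ : (ParamSub rs) →ₗ[ℝ] V, IsGeneric rs ξ →
        IsGeneric rs ((weylOf rs L).comp ξ)) := by
  exact ⟨rs.finite_setOf_isGeneric, rs.exists_isGeneric,
    fun _ hL _ hξ => RedRootSystem.isGeneric_weylOf_comp hξ hL⟩

end GenRes

end
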